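/- arXiv:2302.13420 — 2 statements merged into one kernel-verified Lean document; each statement's English description precedes it below -/
import Mathlib

section
/- Let C ⊂ ℙ² be a plane curve of degree d ≥ 3 defined over the prime field 𝔽_p by a homogeneous polynomial F ∈ 𝔽_p[x,y,z] of degree d that is irreducible over 𝔽_p. If p ≥ 4(d-1)²(d-2)², then C is not tangent-filling over 𝔽_p. -/
open MvPolynomial

/-- `Q` is a smooth point (given by a nonzero coordinate representative) of the plane
curve defined by the homogeneous polynomial `F`. -/
def SmoothPoint {K : Type*} [CommRing K] (F : MvPolynomial (Fin 3) K) (Q : Fin 3 → K) : Prop :=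
  Q ≠ 0 ∧ eval Q F = 0 ∧ ∃ i : Fin 3, eval Q (pderiv i F) ≠ 0

/-- The point with coordinates `P` lies on the tangent line to the curve `{F = 0}` at the
point with coordinates `Q`. -/
def OnTangentLine {K : Type*} [CommRing K] (F : MvPolynomial (Fin 3) K) (Q P : Fin 3 → K) : Prop :=
  eval Q (pderiv 0 F) * P 0 + eval Q (pderiv 1 F) * P 1 + eval Q (pderiv 2 F) * P 2 = 0

/-- The curve `{F = 0}` is tangent-filling: every point of the projective plane lies on the
tangent line at some smooth point of the curve. -/
def TangentFilling {K : Type*} [CommRing K] (F : MvPolynomial (Fin 3) K) : Prop :=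
  ∀ P : Fin 3 → K, P ≠ 0 → ∃ Q : Fin 3 → K, SmoothPoint F Q ∧ OnTangentLine F Q P

section Lacunary
open Polynomial

lemma derivative_X_pow_p {p : ℕ} [Fact p.Prime] :
    derivative (Polynomial.X ^ p : (ZMod p)[X]) = 0 := by
  rw [Polynomial.derivative_X_pow]; simp

lemma lac_dvd {p : ℕ} [Fact p.Prime] (h f g : (ZMod p)[X]) (hh : h = Polynomial.X ^ p * f + g)
    (hs : h.Splits) (h0 : (Polynomial.X * f + g) * Polynomial.wronskian f g ≠ 0) :
    h ∣ (Polynomial.X * f + g) * Polynomial.wronskian f g := by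
  classical
  set R := (Polynomial.X * f + g) * Polynomial.wronskian f g with hR
  by_cases hz : h = 0
  · exfalso
    have hg : g = - Polynomial.X ^ p * f := by linear_combination - hh + hz
    apply h0
    rw [hR, hg, Polynomial.wronskian, mul_eq_zero]
    right
    simp only [derivative_mul, derivative_neg, derivative_X_pow_p]
    ring
  have hle : h.roots ≤ R.roots := by
    rw [Multiset.le_iff_count]
    intro a
    rw [Polynomial.count_roots, Polynomial.count_roots]
    rw [Polynomial.le_rootMultiplicity_iff h0]
    rcases Nat.eq_zero_or_pos (h.rootMultiplicity a) with hm | hm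
    · rw [hm]; simp
    obtain ⟨μ, hμ⟩ : ∃ μ, h.rootMultiplicity a = μ + 1 := ⟨_, (Nat.sub_add_cancel hm).symm⟩
    have hd : (Polynomial.X - Polynomial.C a) ^ (μ+1) ∣ h := by
      rw [← hμ]; exact Polynomial.pow_rootMultiplicity_dvd h a
    rw [hμ, hR, pow_succ']
    apply mul_dvd_mul
    · rw [Polynomial.dvd_iff_isRoot]
      have : h.IsRoot a := by
        rw [← Polynomial.dvd_iff_isRoot]
        exact (dvd_pow_self _ (by omega)).trans hd
      rw [hh] at this
      simpa [Polynomial.IsRoot, ZMod.pow_card] using this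
    · have : Polynomial.wronskian f g = f * derivative h - derivative f * h := by
        rw [hh, Polynomial.wronskian]
        simp only [derivative_mul, derivative_add, derivative_X_pow_p]
        ring
      rw [this]
      apply dvd_sub
      · apply Dvd.dvd.mul_left
        obtain ⟨q, hq⟩ := hd
        rw [hq]
        simp only [derivative_mul, derivative_pow, derivative_sub, derivative_X, derivative_C]
        refine dvd_add ?_ ?_
        · simp
          apply Dvd.dvd.mul_right
          apply Dvd.dvd.mul_left
          exact dvd_rfl
        · exact Dvd.dvd.mul_right (pow_dvd_pow _ (by omega)) _
      · exact Dvd.dvd.mul_left ((pow_dvd_pow _ (by omega)).trans hd) _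
  rw [hs.eq_prod_roots]
  rw [Polynomial.C_mul_dvd (by simpa using hz)]
  exact (Multiset.prod_dvd_prod_of_le (Multiset.map_le_map hle)).trans
    (Polynomial.prod_multiset_X_sub_C_dvd R)

lemma const_of_dvd_derivative {p : ℕ} [Fact p.Prime] (f : (ZMod p)[X]) (hd : f.natDegree < p)
    (h : f ∣ derivative f) : f.natDegree = 0 := by
  by_contra hne
  have h0 : derivative f = 0 := by
    by_contra hh
    have := Polynomial.natDegree_le_of_dvd h hh
    have := Polynomial.natDegree_derivative_lt hne
    omega
  have := congrArg (fun q => q.coeff (f.natDegree - 1)) h0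
  simp only [coeff_derivative, Polynomial.coeff_zero] at this
  rw [Nat.sub_add_cancel (by omega)] at this
  have hl : f.coeff f.natDegree ≠ 0 := by
    rw [coeff_natDegree]; intro h'; apply hne; rw [leadingCoeff_eq_zero.1 h']; simp
  rcases mul_eq_zero.1 this with h1 | h1
  · exact hl h1
  · have h2 : ((f.natDegree : ℕ) : ZMod p) = 0 := by
      rw [← h1]
      have : f.natDegree = (f.natDegree - 1) + 1 := by omega
      rw [this]; push_cast; simp
    rw [ZMod.natCast_eq_zero_iff] at h2
    exact absurd (Nat.le_of_dvd (by omega) h2) (by omega)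

lemma lacunary {p : ℕ} [Fact p.Prime] (hp2 : p ≠ 2) {ι : Type*} (s : Finset ι) (b : ι → ZMod p)
    (e : ℕ) (hcard : s.card = p + e) (hb : ∀ i ∈ s, b i ≠ 0)
    (hc : ∀ j, e < j → j < p → (∏ i ∈ s, (Polynomial.X + Polynomial.C (b i))).coeff j = 0) :
    p + 1 ≤ 2 * e ∨ ∃ β, p ≤ (s.filter (fun i => b i = β)).card := by
  classical
  have hp : p.Prime := Fact.out
  by_cases hep : p ≤ e
  · left; have := hp.two_le; omega
  push Not at hep
  set h := ∏ i ∈ s, (Polynomial.X + Polynomial.C (b i)) with hdef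
  have hmon : h.Monic := Polynomial.monic_prod_of_monic _ _ (fun i _ => Polynomial.monic_X_add_C _)
  have hdeg : h.natDegree = p + e := by
    rw [hdef, Polynomial.natDegree_prod_of_monic _ _ (fun i _ => Polynomial.monic_X_add_C _)]
    simp [hcard]
  have hXp : (Polynomial.X ^ p : (ZMod p)[X]).Monic := Polynomial.monic_X_pow p
  set f := h /ₘ (Polynomial.X ^ p) with hf
  set g := h %ₘ (Polynomial.X ^ p) with hg
  have hfg : h = Polynomial.X ^ p * f + g := by
    rw [hf, hg, add_comm, Polynomial.modByMonic_add_div]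
  have hfd : f.natDegree = e := by
    rw [hf, Polynomial.natDegree_divByMonic _ hXp, hdeg]; simp
  have hgd0 : g.natDegree < p := by
    have := Polynomial.natDegree_modByMonic_lt h hXp (by
      intro h1
      have := congrArg natDegree h1
      simp at this
      exact hp.ne_zero this)
    simpa using this
  have hgd : g.natDegree ≤ e := by
    rw [Polynomial.natDegree_le_iff_coeff_eq_zero]
    intro j hj
    by_cases hjp : j < p
    · have := hc j hj hjp
      rw [hfg, Polynomial.coeff_add, Polynomial.coeff_X_pow_mul'] at this
      simpa [not_le.2 hjp] using this
    · exact Polynomial.coeff_eq_zero_of_natDegree_lt (by omega)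
  have hf0 : f ≠ 0 := by
    intro h0
    rw [h0] at hfg
    have : h.natDegree < p := by rw [hfg]; simpa using hgd0
    omega
  obtain ⟨c, f1, g1, hcop, hff, hgg⟩ : ∃ c f1 g1, IsCoprime f1 g1 ∧ f = c * f1 ∧ g = c * g1 := by
    obtain ⟨x, y, u, v, huv⟩ : ∃ x y u v : (ZMod p)[X], f = EuclideanDomain.gcd f g * x ∧
        g = EuclideanDomain.gcd f g * y ∧ EuclideanDomain.gcd f g = f * u + g * v := by
      obtain ⟨x, hx⟩ := EuclideanDomain.gcd_dvd_left f g
      obtain ⟨y, hy⟩ := EuclideanDomain.gcd_dvd_right f g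
      exact ⟨x, y, _, _, hx, hy, EuclideanDomain.gcd_eq_gcd_ab f g⟩
    obtain ⟨h1, h2, h3⟩ := huv
    have hg0 : EuclideanDomain.gcd f g ≠ 0 := by
      intro h0; rw [h0, zero_mul] at h1; exact hf0 h1
    refine ⟨_, x, y, ⟨u, v, ?_⟩, h1, h2⟩
    apply mul_left_cancel₀ hg0
    linear_combination (- u) * h1 - v * h2 - h3
  have hc0 : c ≠ 0 := by rintro rfl; simp at hff; exact hf0 hff
  have hf10 : f1 ≠ 0 := by rintro rfl; simp at hff; exact hf0 hff
  have hdf : c.natDegree + f1.natDegree = e := by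
    rw [← hfd, hff, Polynomial.natDegree_mul hc0 hf10]
  have hdg : g1.natDegree ≤ f1.natDegree := by
    by_cases hg10 : g1 = 0
    · simp [hg10]
    have : c.natDegree + g1.natDegree ≤ e := by
      rw [← Polynomial.natDegree_mul hc0 hg10, ← hgg]; exact hgd
    omega
  set h1 := Polynomial.X ^ p * f1 + g1 with hh1
  have hch : h = c * h1 := by rw [hfg, hh1]; rw [hff, hgg]; ring
  have hsp : h.Splits := by
    rw [hdef]
    exact Polynomial.Splits.prod (fun i _ => Polynomial.Splits.X_add_C _)
  have hne : h ≠ 0 := hmon.ne_zero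
  have hsp1 : h1.Splits := hsp.of_dvd hne ⟨c, by rw [hch, mul_comm]⟩
  have hd1 : h1.natDegree = p + f1.natDegree := by
    have h10 : h1 ≠ 0 := by intro h0; rw [h0, mul_zero] at hch; exact hne hch
    have := Polynomial.natDegree_mul hc0 h10
    rw [← hch, hdeg] at this
    omega
  by_cases hR : (Polynomial.X * f1 + g1) * Polynomial.wronskian f1 g1 = 0
  · rcases mul_eq_zero.1 hR with h0 | h0
    · exfalso
      have : h.eval 0 = 0 := by
        have e1 : g1.eval 0 = 0 := by simpa using congrArg (Polynomial.eval 0) h0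
        rw [hch, hh1]; simp [e1, hp.ne_zero]
      rw [hdef, Polynomial.eval_prod, Finset.prod_eq_zero_iff] at this
      obtain ⟨i, hi, h2⟩ := this
      exact hb i hi (by simpa using h2)
    · right
      rw [Polynomial.wronskian] at h0
      have k1 : f1 ∣ derivative f1 := by
        apply hcop.dvd_of_dvd_mul_right
        exact ⟨derivative g1, by linear_combination -h0⟩
      have k2 : g1 ∣ derivative g1 := by
        apply hcop.symm.dvd_of_dvd_mul_left
        exact ⟨derivative f1, by linear_combination h0⟩
      have l1 := const_of_dvd_derivative f1 (by omega) k1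
      have l2 := const_of_dvd_derivative g1 (by omega) k2
      obtain ⟨u, hu⟩ := Polynomial.natDegree_eq_zero.1 l1
      obtain ⟨v, hv⟩ := Polynomial.natDegree_eq_zero.1 l2
      have hu0 : u ≠ 0 := by rintro rfl; simp at hu; exact hf10 hu.symm
      have hh1' : h1 = Polynomial.C u * (Polynomial.X - Polynomial.C (-(v/u))) ^ p := by
        rw [hh1, ← hu, ← hv, sub_pow_char, ← Polynomial.C_pow, ZMod.pow_card, mul_sub,
          ← Polynomial.C_mul]
        have : u * (-(v/u)) = - v := by field_simp
        rw [this]; simp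
      refine ⟨v/u, ?_⟩
      have hdv : (Polynomial.X - Polynomial.C (-(v/u))) ^ p ∣ h := by
        rw [hch, hh1']
        exact Dvd.dvd.mul_left (Dvd.dvd.mul_left dvd_rfl _) _
      rw [← Polynomial.le_rootMultiplicity_iff hne, ← Polynomial.count_roots] at hdv
      have hr : h.roots = s.val.map (fun i => - b i) := by
        have : h = ∏ i ∈ s, (Polynomial.X - Polynomial.C (- b i)) := by
          rw [hdef]; simp
        rw [this, Polynomial.roots_prod _ _ (by rw [← this]; exact hne)]
        simp [Multiset.bind_singleton]
      rw [hr, Multiset.count_map] at hdv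
      rw [Finset.card_def, Finset.filter_val]
      have hfe : (fun a => -(v / u) = - b a) = (fun a => b a = v / u) := by
        funext a; rw [neg_inj]; exact propext eq_comm
      simp only [hfe] at hdv
      exact hdv
  · left
    have h2 := Polynomial.natDegree_le_of_dvd (lac_dvd h1 f1 g1 hh1 hsp1 hR) hR
    have h3 := Polynomial.natDegree_mul_le (p := Polynomial.X * f1 + g1) (q := Polynomial.wronskian f1 g1)
    have h4 : (Polynomial.X * f1 + g1).natDegree ≤ f1.natDegree + 1 := by
      refine (Polynomial.natDegree_add_le _ _).trans (max_le ?_ (by omega))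
      refine Polynomial.natDegree_mul_le.trans ?_
      simp; omega
    have h5 := Polynomial.natDegree_wronskian_lt_add (right_ne_zero_of_mul hR)
    have h6 := hp.eq_two_or_odd
    omega
end Lacunary

section Blokhuis

/-- product of affine linear forms in two variables -/
noncomputable def affProd {p : ℕ} {ι : Type*} (s : Finset ι) (b c : ι → ZMod p) :
    MvPolynomial (Fin 2) (ZMod p) :=
  ∏ i ∈ s, (X 0 + C (b i) * X 1 + C (c i))

lemma affProd_totalDegree {p : ℕ} [Fact p.Prime] {ι : Type*} (s : Finset ι) (b c : ι → ZMod p) :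
    (affProd s b c).totalDegree ≤ s.card := by
  unfold affProd
  refine (totalDegree_finsetProd _ _).trans ?_
  rw [Finset.card_eq_sum_ones]
  apply Finset.sum_le_sum
  intro i _
  refine (totalDegree_add _ _).trans (max_le ((totalDegree_add _ _).trans (max_le ?_ ?_)) ?_)
  · simp
  · refine (totalDegree_mul _ _).trans ?_
    simp
  · simp

lemma affProd_coeff {p : ℕ} [Fact p.Prime] {ι : Type*} (s : Finset ι) (b c : ι → ZMod p) :
    ∀ j l : ℕ, j + l = s.card →
    coeff (Finsupp.single 0 j + Finsupp.single 1 l) (affProd s b c) =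
      (∏ i ∈ s, (Polynomial.X + Polynomial.C (b i))).coeff j := by
  classical
  induction s using Finset.induction_on with
  | empty =>
    intro j l h
    simp at h
    obtain ⟨rfl, rfl⟩ := h
    simp [affProd]
  | insert a s ha ih =>
    intro j l h
    rw [Finset.card_insert_of_notMem ha] at h
    have hz : coeff (Finsupp.single 0 j + Finsupp.single 1 l) (affProd s b c) = 0 := by
      apply coeff_eq_zero_of_totalDegree_lt
      rw [← Finsupp.degree_apply]
      have := affProd_totalDegree s b c
      simp [Finsupp.degree_single]
      omega
    have e1 : affProd (insert a s) b c = X 0 * affProd s b c + C (b a) * (X 1 * affProd s b c)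
        + C (c a) * affProd s b c := by
      unfold affProd
      rw [Finset.prod_insert ha]; ring
    rw [e1, coeff_add, coeff_add, coeff_C_mul, coeff_C_mul, hz, mul_zero, add_zero,
      Finset.prod_insert ha, add_mul, Polynomial.coeff_add, Polynomial.coeff_C_mul]
    congr 1
    · cases j with
      | zero => simp [coeff_X_mul']
      | succ j =>
        rw [Polynomial.coeff_X_mul, ← ih j l (by omega)]
        have : (Finsupp.single 0 (j+1) + Finsupp.single 1 l : Fin 2 →₀ ℕ) =
          Finsupp.single 0 1 + (Finsupp.single 0 j + Finsupp.single 1 l) := by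
          rw [← add_assoc, ← Finsupp.single_add, add_comm 1 j]
        rw [this, coeff_X_mul]
    · congr 1
      cases l with
      | zero =>
        rw [Polynomial.coeff_eq_zero_of_natDegree_lt]
        · simp [coeff_X_mul']
        · rw [Polynomial.natDegree_prod_of_monic _ _ (fun i _ => Polynomial.monic_X_add_C _)]
          simp; omega
      | succ l =>
        rw [← ih j l (by omega)]
        have : (Finsupp.single 0 j + Finsupp.single 1 (l+1) : Fin 2 →₀ ℕ) =
          Finsupp.single 1 1 + (Finsupp.single 0 j + Finsupp.single 1 l) := by
          rw [Finsupp.single_add]; abel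
        rw [this, coeff_X_mul]

/-- the affine step -/
lemma aff_step {p : ℕ} [Fact p.Prime] (hp2 : p ≠ 2) {ι : Type*} (s : Finset ι) (b c : ι → ZMod p)
    (hb : ∀ i ∈ s, b i ≠ 0)
    (hv : ∀ α β : ZMod p, ∃ i ∈ s, α + b i * β + c i = 0)
    (hm : ∀ β, (s.filter (fun i => b i = β)).card < p) :
    3 * p + 1 ≤ 2 * s.card := by
  classical
  have hp : p.Prime := Fact.out
  have key : ∀ j l : ℕ, j + l = s.card → j < p → l < p →
      (∏ i ∈ s, (Polynomial.X + Polynomial.C (b i))).coeff j = 0 := by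
    intro j l hjl hj hl
    by_contra hne
    rw [← affProd_coeff s b c j l hjl] at hne
    have hdeg : (affProd s b c).totalDegree =
        (Finsupp.single 0 j + Finsupp.single 1 l : Fin 2 →₀ ℕ).degree := by
      apply le_antisymm
      · refine (affProd_totalDegree s b c).trans ?_
        simp [Finsupp.degree_single, hjl]
      · have := le_totalDegree (mem_support_iff.2 hne)
        simpa [Finsupp.degree_apply, Finsupp.sum] using this
    obtain ⟨x, -, hx⟩ := combinatorial_nullstellensatz_exists_eval_nonzero (affProd s b c) _ hne hdeg
      (fun _ => Finset.univ) (by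
        intro i
        rw [Finset.card_univ, ZMod.card]
        fin_cases i <;> simp [hj, hl])
    obtain ⟨i, hi, h0⟩ := hv (x 0) (x 1)
    apply hx
    unfold affProd
    rw [map_prod]
    apply Finset.prod_eq_zero hi
    simpa using h0
  have hcp : p ≤ s.card := by
    by_contra hlt
    push Not at hlt
    have := key s.card 0 (by simp) hlt hp.pos
    have hmon : (∏ i ∈ s, (Polynomial.X + Polynomial.C (b i))).Monic :=
      Polynomial.monic_prod_of_monic _ _ (fun i _ => Polynomial.monic_X_add_C _)
    have hdeg : (∏ i ∈ s, (Polynomial.X + Polynomial.C (b i))).natDegree = s.card := by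
      rw [Polynomial.natDegree_prod_of_monic _ _ (fun i _ => Polynomial.monic_X_add_C _)]
      simp
    have h1 := hmon.coeff_natDegree
    rw [hdeg, this] at h1
    exact zero_ne_one h1
  obtain ⟨e, he⟩ := Nat.exists_eq_add_of_le hcp
  rcases lacunary hp2 s b e he hb (by
    intro j h1 h2
    exact key j (s.card - j) (by omega) h2 (by omega)) with h | ⟨β, h⟩
  · omega
  · exact absurd (hm β) (by omega)

/-- Jamison-type step -/
lemma jamison_step {p : ℕ} [Fact p.Prime] {ι : Type*} (s : Finset ι) (b c : ι → ZMod p)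
    (hs : s.Nonempty)
    (hv : ∀ α β γ : ZMod p, (β ≠ 0 ∨ γ ≠ 0) → ∃ i ∈ s, α + β * b i + γ * c i = 0) :
    2 * p - 1 ≤ s.card := by
  classical
  have hp : p.Prime := Fact.out
  obtain ⟨i0, hi0⟩ := hs
  by_contra hlt
  set H : MvPolynomial (Fin 2) (ZMod p) :=
    ∏ i ∈ s.erase i0, (1 + C (b i - b i0) * X 0 + C (c i - c i0) * X 1) with hH
  have hdeg : H.totalDegree ≤ s.card - 1 := by
    rw [hH, ← Finset.card_erase_of_mem hi0]
    refine (totalDegree_finsetProd _ _).trans ?_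
    rw [Finset.card_eq_sum_ones]
    apply Finset.sum_le_sum
    intro i _
    refine (totalDegree_add _ _).trans (max_le ((totalDegree_add _ _).trans (max_le ?_ ?_)) ?_)
    · simp
    · exact (totalDegree_mul _ _).trans (by rw [totalDegree_C, totalDegree_X])
    · exact (totalDegree_mul _ _).trans (by rw [totalDegree_C, totalDegree_X])
  have hsum := MvPolynomial.sum_eval_eq_zero H (by
    have := hp.two_le
    simp only [ZMod.card, Fintype.card_fin]
    omega)
  rw [Finset.sum_eq_single (0 : Fin 2 → ZMod p)] at hsum
  · rw [hH, map_prod] at hsum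
    simp at hsum
  · intro x _ hx
    have hx' : x 0 ≠ 0 ∨ x 1 ≠ 0 := by
      by_contra hcon
      push Not at hcon
      apply hx
      funext i
      fin_cases i
      · exact hcon.1
      · exact hcon.2
    obtain ⟨i, hi, h0⟩ := hv (1 - x 0 * b i0 - x 1 * c i0) (x 0) (x 1) hx'
    rw [hH, map_prod]
    have hne : i ≠ i0 := by
      rintro rfl
      have : (1 : ZMod p) = 0 := by linear_combination h0
      exact one_ne_zero this
    apply Finset.prod_eq_zero (Finset.mem_erase.2 ⟨hne, hi⟩)
    simp
    linear_combination h0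
  · simp

/-- dual form of the Blokhuis theorem over prime fields -/
lemma blokhuis {p : ℕ} [Fact p.Prime] (hp2 : p ≠ 2) {ι : Type*} [DecidableEq ι]
    (L : ι → ((Fin 3 → ZMod p) →ₗ[ZMod p] ZMod p)) (s : Finset ι) :
    (∀ b ∈ s, L b ≠ 0) → (∀ P, P ≠ 0 → ∃ b ∈ s, L b P = 0) →
    (∀ P, P ≠ 0 → (s.filter (fun b => L b P = 0)).card < p) → 3 * (p + 1) ≤ 2 * s.card := by
  have hp : p.Prime := Fact.out
  induction s using Finset.strongInduction with
  | H s ih =>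
  intro hL hbl hm
  by_cases hex : ∃ e ∈ s, ∀ P, P ≠ 0 → ∃ b ∈ s.erase e, L b P = 0
  · obtain ⟨e, he, hbe⟩ := hex
    have h1 := ih (s.erase e) (Finset.erase_ssubset he) (fun b hb => hL b (Finset.mem_of_mem_erase hb))
      hbe (fun P hP => lt_of_le_of_lt (Finset.card_le_card
        (Finset.filter_subset_filter _ (Finset.erase_subset _ _))) (hm P hP))
    have := Finset.card_erase_le (s := s) (a := e)
    omega
  push Not at hex
  by_contra hlt
  obtain ⟨e, he, -⟩ := hbl (fun _ => 1) (by
    intro h; have := congrFun h 0; simp at this)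
  obtain ⟨P1, hP1, hP1b⟩ := hex e he
  have hce := Finset.card_erase_of_mem he
  have hcpos : 0 < s.card := Finset.card_pos.2 ⟨e, he⟩
  have hsmall : s.card < 2 * p := by
    have := hp.two_le
    omega
  have heP1 : L e P1 = 0 := by
    obtain ⟨b, hb, h0⟩ := hbl P1 hP1
    by_cases hbe : b = e
    · rw [← hbe]; exact h0
    · exact absurd h0 (hP1b b (Finset.mem_erase.2 ⟨hbe, hb⟩))
  obtain ⟨P3, hP3⟩ : ∃ P3, L e P3 ≠ 0 := by
    by_contra hcon
    push Not at hcon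
    exact hL e he (LinearMap.ext hcon)
  obtain ⟨P2, hP2, hP2b⟩ : ∃ P2, (∀ c : ZMod p, P2 ≠ c • P1) ∧ ∀ b ∈ s.erase e, L b P2 ≠ 0 := by
    by_contra hcon
    push Not at hcon
    obtain ⟨i, hi⟩ : ∃ i, P1 i ≠ 0 := by
      by_contra h
      push Not at h
      exact hP1 (funext h)
    have hne : (s.erase e).Nonempty := by
      by_cases h3 : ∃ c : ZMod p, P3 + P1 = c • P1
      · exfalso
        obtain ⟨c, hc⟩ := h3
        have := congrArg (L e) hc
        simp [heP1] at this
        exact hP3 this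
      · push Not at h3
        obtain ⟨b, hb, _⟩ := hcon _ h3
        exact ⟨b, hb⟩
    have := jamison_step (s.erase e) (fun b => (L b P1)⁻¹ * L b (Pi.single (i+1) 1))
      (fun b => (L b P1)⁻¹ * L b (Pi.single (i+2) 1)) hne (by
        intro α β γ hβγ
        obtain ⟨b, hb, h0⟩ := hcon (α • P1 + β • Pi.single (i+1) 1 + γ • Pi.single (i+2) 1) (by
          intro c hc
          have k0 := congrFun hc i
          have k1 := congrFun hc (i+1)
          have k2 := congrFun hc (i+2)
          have n1 : i ≠ i + 1 := (by decide : ∀ i : Fin 3, i ≠ i + 1) i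
          have n2 : i ≠ i + 2 := (by decide : ∀ i : Fin 3, i ≠ i + 2) i
          have n3 : i + 1 ≠ i + 2 := (by decide : ∀ i : Fin 3, i + 1 ≠ i + 2) i
          simp [Pi.single_apply, n1, n2, hi] at k0
          simp [Pi.single_apply, n1.symm, n2.symm, n3, n3.symm, k0] at k1 k2
          rcases hβγ with h | h
          · exact h k1
          · exact h k2)
        refine ⟨b, hb, ?_⟩
        have hb1 := hP1b b hb
        simp only [map_add, map_smul, smul_eq_mul] at h0
        field_simp
        linear_combination h0)
    omega
  have hP20 : P2 ≠ 0 := by simpa using hP2 0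
  have heP2 : L e P2 = 0 := by
    obtain ⟨b, hb, h0⟩ := hbl P2 hP20
    by_cases hbe : b = e
    · rw [← hbe]; exact h0
    · exact absurd h0 (hP2b b (Finset.mem_erase.2 ⟨hbe, hb⟩))
  have := aff_step hp2 (s.erase e) (fun b => (L b P1)⁻¹ * L b P2) (fun b => (L b P1)⁻¹ * L b P3)
    (fun b hb => mul_ne_zero (inv_ne_zero (hP1b b hb)) (hP2b b hb)) (by
      intro α β
      have hLe : L e (α • P1 + β • P2 + P3) ≠ 0 := by
        simpa [heP1, heP2] using hP3
      obtain ⟨b, hb, h0⟩ := hbl (α • P1 + β • P2 + P3) (by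
        intro h; rw [h] at hLe; simp at hLe)
      have hbe : b ≠ e := by rintro rfl; exact hLe h0
      have hb' := Finset.mem_erase.2 ⟨hbe, hb⟩
      refine ⟨b, hb', ?_⟩
      have hb1 := hP1b b hb'
      simp only [map_add, map_smul, smul_eq_mul] at h0
      field_simp
      linear_combination h0) (by
      intro β
      refine lt_of_le_of_lt (Finset.card_le_card ?_) (hm (P2 - β • P1) (by
        intro h; exact hP2 β (sub_eq_zero.1 h)))
      intro b hb
      rw [Finset.mem_filter] at hb ⊢
      refine ⟨Finset.mem_of_mem_erase hb.1, ?_⟩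
      have hb1 := hP1b b hb.1
      have h2 := hb.2
      field_simp at h2
      simp [h2, mul_comm])
  omega

end Blokhuis

section SV
open scoped PowerSeries

variable {p : ℕ} [Fact p.Prime]

/-- the Euler operator `t d/dt` on power series -/
noncomputable def thetaL (p : ℕ) [Fact p.Prime] : (ZMod p)⟦X⟧ →ₗ[ZMod p] (ZMod p)⟦X⟧ :=
  ((PowerSeries.X : (ZMod p)⟦X⟧) • PowerSeries.derivative (ZMod p)).toLinearMap

lemma thetaL_apply (u : (ZMod p)⟦X⟧) : thetaL p u = PowerSeries.X * PowerSeries.derivative (ZMod p) u := rfl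

lemma thetaL_mul (u v : (ZMod p)⟦X⟧) : thetaL p (u * v) = u * thetaL p v + v * thetaL p u := by
  simp only [thetaL_apply, Derivation.leibniz, smul_eq_mul]; ring

lemma thetaL_X_pow (j : ℕ) : thetaL p (PowerSeries.X ^ j) = (j : (ZMod p)⟦X⟧) * PowerSeries.X ^ j := by
  induction j with
  | zero => simp [thetaL_apply]
  | succ j ih =>
    rw [pow_succ, thetaL_mul, ih, thetaL_apply]
    simp; ring

lemma thetaL_pow_X_pow_mul (c : ℕ) (v : (ZMod p)⟦X⟧) (j : ℕ) :
    ∃ w, (thetaL p ^ j) (PowerSeries.X ^ c * v) = PowerSeries.X ^ c * w ∧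
      PowerSeries.constantCoeff w = (c : ZMod p) ^ j * PowerSeries.constantCoeff v := by
  induction j with
  | zero => exact ⟨v, by simp⟩
  | succ j ih =>
    obtain ⟨w, h1, h2⟩ := ih
    refine ⟨thetaL p w + (c : (ZMod p)⟦X⟧) * w, ?_, ?_⟩
    · rw [pow_succ', Module.End.mul_apply, h1, thetaL_mul, thetaL_X_pow]; ring
    · simp [thetaL_apply, h2, pow_succ]; ring

/-- the Stöhr–Voloch matrix -/
noncomputable def svMat {n : ℕ} (u : Fin (n+1) → (ZMod p)⟦X⟧) :
    Matrix (Fin (n+1)) (Fin (n+1)) (ZMod p)⟦X⟧ :=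
  Matrix.of (fun r i => Fin.cases (u i ^ p) (fun j : Fin n => (thetaL p ^ (j : ℕ)) (u i)) r)

lemma svMat_zero {n : ℕ} (u : Fin (n+1) → (ZMod p)⟦X⟧) (i) : svMat u 0 i = u i ^ p := rfl
lemma svMat_succ {n : ℕ} (u : Fin (n+1) → (ZMod p)⟦X⟧) (j : Fin n) (i) :
  svMat u j.succ i = (thetaL p ^ (j : ℕ)) (u i) := rfl

lemma svMat_adapted {n : ℕ} (J : Fin (n+1) → ℕ) (v : Fin (n+1) → (ZMod p)⟦X⟧)
    (hJ : StrictMono J) (hJp : ∀ i, J i < p) (hv : ∀ i, PowerSeries.constantCoeff (v i) ≠ 0) :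
    ∃ w : (ZMod p)⟦X⟧, PowerSeries.constantCoeff w ≠ 0 ∧
      (svMat (fun i => PowerSeries.X ^ J i * v i)).det =
        PowerSeries.X ^ ((p - 1) * J 0 + ∑ i, J i) * w := by
  have hp : p.Prime := Fact.out
  choose W hW1 hW2 using fun (i : Fin (n+1)) (j : ℕ) => thetaL_pow_X_pow_mul (J i) (v i) j
  let M : Matrix (Fin (n+1)) (Fin (n+1)) (ZMod p)⟦X⟧ :=
    Matrix.of (fun r i => Fin.cases (PowerSeries.X ^ ((p-1) * (J i - J 0)) * v i ^ p)
      (fun j : Fin n => W i j) r)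
  let A : Fin (n+1) → (ZMod p)⟦X⟧ := Fin.cons (PowerSeries.X ^ ((p-1) * J 0)) (fun _ => 1)
  have hfac : svMat (fun i => PowerSeries.X ^ J i * v i) =
      Matrix.diagonal A * M * Matrix.diagonal (fun i => PowerSeries.X ^ J i) := by
    ext1 r i
    rw [Matrix.mul_diagonal, Matrix.diagonal_mul]
    refine Fin.cases ?_ (fun j => ?_) r
    · rw [svMat_zero]
      simp only [A, M, Fin.cons_zero, Matrix.of_apply, Fin.cases_zero]
      have h0 : J 0 ≤ J i := hJ.monotone (Fin.zero_le _)
      obtain ⟨m, hm⟩ := Nat.exists_eq_add_of_le h0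
      obtain ⟨q, hq⟩ : ∃ q, p = q + 1 := ⟨p - 1, by have := hp.pos; omega⟩
      have : J i * p = (p - 1) * J 0 + (p-1) * (J i - J 0) + J i := by
        rw [hm, hq]; simp; ring
      rw [mul_pow, ← pow_mul, this]
      ring
    · rw [svMat_succ]
      simp only [A, M, Fin.cons_succ, Matrix.of_apply, Fin.cases_succ]
      rw [hW1]; ring
  refine ⟨M.det, ?_, ?_⟩
  · rw [RingHom.map_det, Matrix.det_succ_row_zero, Finset.sum_eq_single 0]
    · have hsub : ((PowerSeries.constantCoeff (R := ZMod p)).mapMatrix M).submatrix Fin.succ (Fin.succAbove 0) =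
          (Matrix.vandermonde (fun i : Fin n => (J i.succ : ZMod p))).transpose *
            Matrix.diagonal (fun i : Fin n => PowerSeries.constantCoeff (v i.succ)) := by
        ext1 j i
        rw [Matrix.mul_diagonal]
        simp [M, hW2, Matrix.vandermonde_apply]
      rw [hsub, Matrix.det_mul, Matrix.det_transpose, Matrix.det_diagonal]
      refine mul_ne_zero ?_ (mul_ne_zero ?_ ?_)
      · simp [M, hv]
      · rw [Matrix.det_vandermonde_ne_zero_iff]
        intro a b hab
        have hab' : (J a.succ : ZMod p) = (J b.succ : ZMod p) := hab
        rw [ZMod.natCast_eq_natCast_iff'] at hab'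
        rw [Nat.mod_eq_of_lt (hJp _), Nat.mod_eq_of_lt (hJp _)] at hab'
        exact Fin.succ_injective _ (hJ.injective hab')
      · exact Finset.prod_ne_zero_iff.2 (fun i _ => hv _)
    · intro i _ hi
      have h0 : J 0 < J i := hJ (Fin.pos_of_ne_zero hi)
      have h1 : (p - 1) * (J i - J 0) ≠ 0 := by
        have := hp.two_le
        apply Nat.mul_ne_zero <;> omega
      simp [M, h1]
    · simp
  · rw [hfac, Matrix.det_mul, Matrix.det_mul, Matrix.det_diagonal, Matrix.det_diagonal,
      Fin.prod_univ_succ, Finset.prod_pow_eq_pow_sum, pow_add]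
    simp [A]
    ring

lemma exists_X_pow_mul (u : (ZMod p)⟦X⟧) (hu : u ≠ 0) :
    ∃ (j : ℕ) (v : (ZMod p)⟦X⟧), PowerSeries.constantCoeff v ≠ 0 ∧ u = PowerSeries.X ^ j * v := by
  refine ⟨u.order.toNat, PowerSeries.divXPowOrder u, ?_, ?_⟩
  · rw [PowerSeries.constantCoeff_divXPowOrder]
    exact PowerSeries.coeff_order hu
  · exact (PowerSeries.X_pow_order_mul_divXPowOrder).symm

lemma adapted_basis (N : ℕ) : ∀ U : Submodule (ZMod p) (ZMod p)⟦X⟧, FiniteDimensional (ZMod p) U →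
    Module.finrank (ZMod p) U = N →
    ∃ (J : Fin N → ℕ) (v : Fin N → (ZMod p)⟦X⟧), StrictMono J ∧ (∀ i, PowerSeries.constantCoeff (v i) ≠ 0) ∧
      (∀ i, PowerSeries.X ^ J i * v i ∈ U) ∧
      U ≤ Submodule.span (ZMod p) (Set.range (fun i => PowerSeries.X ^ J i * v i)) := by
  classical
  induction N with
  | zero =>
    intro U _ hU
    refine ⟨Fin.elim0, Fin.elim0, fun a => a.elim0, fun a => a.elim0, fun a => a.elim0, ?_⟩
    rw [Submodule.finrank_eq_zero.1 hU]; exact bot_le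
  | succ N ih =>
    intro U _ hU
    have hex : ∃ j : ℕ, ∃ v : (ZMod p)⟦X⟧, PowerSeries.constantCoeff v ≠ 0 ∧ PowerSeries.X ^ j * v ∈ U := by
      have : U ≠ ⊥ := by rintro rfl; simp at hU
      obtain ⟨u, huU, hu⟩ := Submodule.exists_mem_ne_zero_of_ne_bot this
      obtain ⟨j, v, h1, h2⟩ := exists_X_pow_mul u hu
      exact ⟨j, v, h1, h2 ▸ huU⟩
    set j0 := Nat.find hex with hj0
    obtain ⟨v0, hv0, hmem0⟩ := Nat.find_spec hex
    rw [← hj0] at hmem0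
    have hmin : ∀ j v, PowerSeries.constantCoeff v ≠ 0 → PowerSeries.X ^ j * v ∈ U → j0 ≤ j :=
      fun j v h1 h2 => Nat.find_min' hex ⟨v, h1, h2⟩
    let φ : U →ₗ[ZMod p] ZMod p := (PowerSeries.coeff (R := ZMod p) j0).comp U.subtype
    have hc0 : PowerSeries.coeff j0 (PowerSeries.X ^ j0 * v0) = PowerSeries.constantCoeff v0 := by
      rw [PowerSeries.coeff_X_pow_mul']; simp
    have hsurj : LinearMap.range φ = ⊤ := by
      rw [LinearMap.range_eq_top]
      intro c
      refine ⟨(c / PowerSeries.constantCoeff v0) • ⟨_, hmem0⟩, ?_⟩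
      rw [map_smul]
      show _ • PowerSeries.coeff j0 (PowerSeries.X ^ j0 * v0) = c
      rw [hc0, smul_eq_mul]; field_simp
    have hrk := LinearMap.finrank_range_add_finrank_ker φ
    rw [hsurj, finrank_top, Module.finrank_self, hU] at hrk
    have hfd : Module.finrank (ZMod p) ((LinearMap.ker φ).map U.subtype) = N := by
      rw [← (Submodule.equivMapOfInjective U.subtype U.subtype_injective (LinearMap.ker φ)).finrank_eq]
      omega
    obtain ⟨J, v, hJ, hv, hm, hsp⟩ := ih ((LinearMap.ker φ).map U.subtype) inferInstance hfd
    have hsub : (LinearMap.ker φ).map U.subtype ≤ U := Submodule.map_subtype_le _ _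
    have hgt : ∀ i, j0 < J i := by
      intro i
      refine lt_of_le_of_ne (hmin _ _ (hv i) (hsub (hm i))) ?_
      intro heq
      obtain ⟨x, hx, hx2⟩ := hm i
      have h1 : PowerSeries.coeff j0 (PowerSeries.X ^ J i * v i) = 0 := by
        rw [← hx2]; exact hx
      rw [← heq, PowerSeries.coeff_X_pow_mul'] at h1
      simp at h1
      exact hv i h1
    refine ⟨Fin.cons j0 J, Fin.cons v0 v, ?_, ?_, ?_, ?_⟩
    · intro a b
      refine Fin.cases ?_ (fun a => ?_) a <;> refine Fin.cases ?_ (fun b => ?_) b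
      · intro h; exact absurd h (lt_irrefl _)
      · intro _; simpa using hgt b
      · intro h; exact absurd h (by simp)
      · intro h; simpa using hJ (Fin.succ_lt_succ_iff.1 h)
    · intro i; refine Fin.cases ?_ (fun i => ?_) i <;> simp [hv0, hv]
    · intro i; refine Fin.cases ?_ (fun i => ?_) i
      · simpa using hmem0
      · simpa using hsub (hm i)
    · intro u hu
      have hd : u - (PowerSeries.coeff j0 u / PowerSeries.constantCoeff v0) • (PowerSeries.X ^ j0 * v0) ∈
          (LinearMap.ker φ).map U.subtype := by
        refine ⟨⟨_, U.sub_mem hu (U.smul_mem _ hmem0)⟩, ?_, rfl⟩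
        show PowerSeries.coeff j0 (u - (PowerSeries.coeff j0 u / PowerSeries.constantCoeff v0) • (PowerSeries.X ^ j0 * v0)) = 0
        rw [map_sub, map_smul, hc0, smul_eq_mul]; field_simp; simp
      have h2 := hsp hd
      have hu' : u = (u - (PowerSeries.coeff j0 u / PowerSeries.constantCoeff v0) • (PowerSeries.X ^ j0 * v0)) +
        (PowerSeries.coeff j0 u / PowerSeries.constantCoeff v0) • (PowerSeries.X ^ j0 * v0) := by abel
      rw [hu']
      refine Submodule.add_mem _ ?_ (Submodule.smul_mem _ _ (Submodule.subset_span ⟨0, by simp⟩))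
      refine Submodule.span_mono ?_ h2
      rintro _ ⟨i, rfl⟩
      exact ⟨i.succ, by simp⟩

lemma svMat_comb {n : ℕ} (u : Fin (n+1) → (ZMod p)⟦X⟧) (C : Matrix (Fin (n+1)) (Fin (n+1)) (ZMod p)) :
    svMat (fun i => ∑ l, C l i • u l) = svMat u * (C.map (PowerSeries.C (R := ZMod p))) := by
  have hp : p.Prime := Fact.out
  haveI : CharP (ZMod p)⟦X⟧ p :=
    charP_of_injective_ringHom (f := PowerSeries.C (R := ZMod p)) PowerSeries.C_injective p
  ext1 r i
  rw [Matrix.mul_apply]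
  refine Fin.cases ?_ (fun j => ?_) r
  · simp only [svMat_zero, Matrix.map_apply]
    rw [sum_pow_char]
    refine Finset.sum_congr rfl fun l _ => ?_
    rw [smul_pow, ZMod.pow_card, PowerSeries.smul_eq_C_mul, mul_comm]
  · simp only [svMat_succ, Matrix.map_apply]
    rw [map_sum]
    refine Finset.sum_congr rfl fun l _ => ?_
    rw [map_smul, PowerSeries.smul_eq_C_mul, mul_comm]

lemma svMat_det_dvd {n : ℕ} (r : ℕ) (u : Fin (n+1) → (ZMod p)⟦X⟧)
    (hli : LinearIndependent (ZMod p) u)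
    (hord : ∀ h ∈ Submodule.span (ZMod p) (Set.range u), h ≠ 0 → ¬ (PowerSeries.X ^ p ∣ h))
    (hr : ∀ i, PowerSeries.X ^ r ∣ u i) :
    (svMat u).det ≠ 0 ∧
      PowerSeries.X ^ ((p + n) * r + ∑ i ∈ Finset.range (n+1), i) ∣ (svMat u).det := by
  have hp : p.Prime := Fact.out
  haveI : FiniteDimensional (ZMod p) (Submodule.span (ZMod p) (Set.range u)) :=
    FiniteDimensional.span_of_finite _ (Set.finite_range u)
  obtain ⟨J, v, hJ, hv, hm, hsp⟩ := adapted_basis (n+1) (Submodule.span (ZMod p) (Set.range u))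
    inferInstance (by rw [finrank_span_eq_card hli]; simp)
  have hne : ∀ i, PowerSeries.X ^ J i * v i ≠ 0 := fun i => by
    refine mul_ne_zero (pow_ne_zero _ PowerSeries.X_ne_zero) ?_
    intro h; exact hv i (by rw [h]; simp)
  have hlt : ∀ i, J i < p := by
    intro i
    by_contra h
    push Not at h
    exact hord _ (hm i) (hne i) (dvd_mul_of_dvd_left (pow_dvd_pow _ h) _)
  have hrJ : ∀ i, r ≤ J i := by
    intro i
    have h1 : ∀ h ∈ Submodule.span (ZMod p) (Set.range u), PowerSeries.X ^ r ∣ h := by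
      intro h hh
      induction hh using Submodule.span_induction with
      | mem x hx => obtain ⟨i, rfl⟩ := hx; exact hr i
      | zero => exact dvd_zero _
      | add x y _ _ hx hy => exact dvd_add hx hy
      | smul c x _ hx => rw [PowerSeries.smul_eq_C_mul]; exact dvd_mul_of_dvd_right hx _
    by_contra hlt
    push Not at hlt
    have h2 := h1 _ (hm i)
    rw [PowerSeries.X_pow_dvd_iff] at h2
    have h3 := h2 (J i) hlt
    rw [PowerSeries.coeff_X_pow_mul'] at h3
    simp at h3
    exact hv i h3
  obtain ⟨w, hw, hdet⟩ := svMat_adapted J v hJ hlt hv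
  have hw0 : w ≠ 0 := by rintro rfl; simp at hw
  have hA : ∃ C : Matrix (Fin (n+1)) (Fin (n+1)) (ZMod p),
      u = fun i => ∑ l, C l i • (PowerSeries.X ^ J l * v l) := by
    have : ∀ i, ∃ c : Fin (n+1) → ZMod p, ∑ l, c l • (PowerSeries.X ^ J l * v l) = u i := fun i =>
      (Submodule.mem_span_range_iff_exists_fun _).1 (hsp (Submodule.subset_span ⟨i, rfl⟩))
    choose c hc using this
    exact ⟨Matrix.of (fun l i => c i l), funext fun i => (hc i).symm⟩
  have hB : ∃ C : Matrix (Fin (n+1)) (Fin (n+1)) (ZMod p),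
      (fun i => PowerSeries.X ^ J i * v i) = fun i => ∑ l, C l i • u l := by
    have : ∀ i, ∃ c : Fin (n+1) → ZMod p, ∑ l, c l • u l = PowerSeries.X ^ J i * v i := fun i =>
      (Submodule.mem_span_range_iff_exists_fun _).1 (hm i)
    choose c hc using this
    exact ⟨Matrix.of (fun l i => c i l), funext fun i => (hc i).symm⟩
  obtain ⟨C, hC⟩ := hA
  obtain ⟨B, hB⟩ := hB
  constructor
  · intro h0
    rw [hB, svMat_comb, Matrix.det_mul, h0, zero_mul] at hdet
    exact mul_ne_zero (pow_ne_zero _ PowerSeries.X_ne_zero) hw0 hdet.symm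
  · have hle : ∀ i : Fin (n+1), r + (i : ℕ) ≤ J i := by
      intro i
      induction i using Fin.induction with
      | zero => simpa using hrJ 0
      | succ i ih =>
        have := hJ (Fin.castSucc_lt_succ (i := i))
        simp at ih ⊢
        omega
    have hsum : (n+1) * r + ∑ i ∈ Finset.range (n+1), i ≤ ∑ i, J i := by
      have := Finset.sum_le_sum (fun i (_ : i ∈ Finset.univ) => hle i)
      rw [Finset.sum_add_distrib] at this
      rw [← Fin.sum_univ_eq_sum_range (fun i => i)]
      simpa using this
    have hexp : (p + n) * r + ∑ i ∈ Finset.range (n+1), i ≤ (p - 1) * J 0 + ∑ i, J i := by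
      obtain ⟨q, hq⟩ : ∃ q, p = q + 1 := ⟨p - 1, by have := hp.pos; omega⟩
      have h1 : (p - 1) * r ≤ (p - 1) * J 0 := Nat.mul_le_mul_left _ (hrJ 0)
      have h2 : (p + n) * r = (p - 1) * r + (n+1) * r := by
        rw [hq]; simp; ring
      omega
    rw [hC, svMat_comb, Matrix.det_mul, hdet, mul_assoc]
    exact dvd_mul_of_dvd_left (pow_dvd_pow _ hexp) _

end SV

section Graded

lemma finrank_homog (p : ℕ) [Fact p.Prime] (M : ℕ) :
    Module.finrank (ZMod p) (homogeneousSubmodule (Fin 3) (ZMod p) M) = (M + 2).choose 2 := by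
  have h1 : homogeneousSubmodule (Fin 3) (ZMod p) M =
      AddMonoidAlgebra.supported _ (ZMod p) {d | d.degree = M} :=
    homogeneousSubmodule_eq_finsupp_supported (Fin 3) (ZMod p) M
  have hset : {d : Fin 3 →₀ ℕ | d.degree = M} =
      ((Finset.univ : Finset (Fin 3)).finsuppAntidiag M : Finset (Fin 3 →₀ ℕ)) := by
    ext d
    simp [Finset.mem_finsuppAntidiag, Finsupp.degree_eq_sum]
  rw [h1, hset, (AddMonoidAlgebra.supportedEquivFinsupp (R := ZMod p) (S := ZMod p) _).finrank_eq,
    Module.finrank_finsupp_self, ← Set.toFinset_card, Finset.toFinset_coe, Finset.card_finsuppAntidiag_nat_eq_choose]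
  simp only [Finset.card_univ, Fintype.card_fin]
  rw [show 3 + M - 1 = M + 2 by omega, ← Nat.choose_symm_of_eq_add (show M + 2 = 2 + M by omega)]

instance finite_homog (p : ℕ) [Fact p.Prime] (M : ℕ) :
    FiniteDimensional (ZMod p) (homogeneousSubmodule (Fin 3) (ZMod p) M) :=
  Module.Finite.iff_fg.2 (homogeneousSubmodule_fg _ _ M)

lemma homog_quot {p : ℕ} [Fact p.Prime] {F q : MvPolynomial (Fin 3) (ZMod p)} {d M : ℕ}
    (hF : F.IsHomogeneous d) (hdM : d ≤ M) (h : (F * q).IsHomogeneous M) :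
    F * q = F * homogeneousComponent (M - d) q := by
  letI := MvPolynomial.gradedAlgebra (σ := Fin 3) (R := ZMod p)
  have h1 := DirectSum.coe_decompose_mul_of_left_mem_of_le
    (homogeneousSubmodule (Fin 3) (ZMod p)) (b := q) ((mem_homogeneousSubmodule _ _).2 hF) hdM
  have e : ∀ (φ : MvPolynomial (Fin 3) (ZMod p)) (i : ℕ),
      (DirectSum.decompose (homogeneousSubmodule (Fin 3) (ZMod p)) φ i : MvPolynomial (Fin 3) (ZMod p))
        = homogeneousComponent i φ := fun φ i => decomposition.decompose'_apply φ i
  have h2 : homogeneousComponent M (F * q) = F * homogeneousComponent (M - d) q := by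
    rw [← e, ← e]; exact h1
  rw [← h2, homogeneousComponent_eq_self h]

/-- homogeneous coordinate ring of the curve -/
abbrev CRing {p : ℕ} (F : MvPolynomial (Fin 3) (ZMod p)) : Type :=
  MvPolynomial (Fin 3) (ZMod p) ⧸ Ideal.span {F}

/-- the projection to the coordinate ring -/
noncomputable abbrev cπ {p : ℕ} (F : MvPolynomial (Fin 3) (ZMod p)) :
    MvPolynomial (Fin 3) (ZMod p) →ₐ[ZMod p] CRing F :=
  Ideal.Quotient.mkₐ (ZMod p) (Ideal.span {F})

lemma cπ_eq_zero {p : ℕ} (F G : MvPolynomial (Fin 3) (ZMod p)) : cπ F G = 0 ↔ F ∣ G := by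
  rw [Ideal.Quotient.mkₐ_eq_mk, Ideal.Quotient.eq_zero_iff_mem, Ideal.mem_span_singleton]

/-- graded pieces of the coordinate ring -/
noncomputable def grd {p : ℕ} (F : MvPolynomial (Fin 3) (ZMod p)) (M : ℕ) :
    Submodule (ZMod p) (CRing F) :=
  (homogeneousSubmodule (Fin 3) (ZMod p) M).map (cπ F).toLinearMap

lemma mem_grd {p : ℕ} {F : MvPolynomial (Fin 3) (ZMod p)} {M : ℕ} {h : CRing F} :
    h ∈ grd F M ↔ ∃ G : MvPolynomial (Fin 3) (ZMod p), G.IsHomogeneous M ∧ cπ F G = h := by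
  simp [grd]

instance finite_grd {p : ℕ} [Fact p.Prime] (F : MvPolynomial (Fin 3) (ZMod p)) (M : ℕ) :
    FiniteDimensional (ZMod p) (grd F M) := by
  unfold grd; infer_instance

lemma grd_mul {p : ℕ} {F : MvPolynomial (Fin 3) (ZMod p)} {M N : ℕ} {h h' : CRing F}
    (h1 : h ∈ grd F M) (h2 : h' ∈ grd F N) : h * h' ∈ grd F (M + N) := by
  obtain ⟨G, hG, rfl⟩ := mem_grd.1 h1
  obtain ⟨G', hG', rfl⟩ := mem_grd.1 h2
  exact mem_grd.2 ⟨G * G', hG.mul hG', by rw [map_mul]⟩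

lemma finrank_grd {p : ℕ} [Fact p.Prime] {F : MvPolynomial (Fin 3) (ZMod p)} {d : ℕ}
    (hF : F.IsHomogeneous d) (hF0 : F ≠ 0) {M : ℕ} (hdM : d ≤ M) (hd : 2 ≤ d) :
    2 * Module.finrank (ZMod p) (grd F M) + (d - 1) * (d - 2) = 2 * (M * d + 1) := by
  let f : homogeneousSubmodule (Fin 3) (ZMod p) M →ₗ[ZMod p] CRing F :=
    (cπ F).toLinearMap.comp (homogeneousSubmodule (Fin 3) (ZMod p) M).subtype
  have hr : LinearMap.range f = grd F M := by
    rw [LinearMap.range_comp, Submodule.range_subtype]; rfl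
  let g : homogeneousSubmodule (Fin 3) (ZMod p) (M - d) →ₗ[ZMod p]
      homogeneousSubmodule (Fin 3) (ZMod p) M :=
    ((LinearMap.mulLeft (ZMod p) F).comp
      (homogeneousSubmodule (Fin 3) (ZMod p) (M - d)).subtype).codRestrict _ (by
        rintro ⟨q, hq⟩
        have := hF.mul ((mem_homogeneousSubmodule _ _).1 hq)
        rw [Nat.add_sub_cancel' hdM] at this
        exact this)
  have hginj : Function.Injective g := by
    intro a b hab
    have h := congrArg Subtype.val hab
    exact Subtype.ext (mul_left_cancel₀ hF0 h)
  have hk : LinearMap.ker f = LinearMap.range g := by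
    ext ⟨h, hh⟩
    rw [LinearMap.mem_ker, LinearMap.mem_range]
    have : f ⟨h, hh⟩ = cπ F h := rfl
    rw [this, cπ_eq_zero]
    constructor
    · rintro ⟨q, rfl⟩
      exact ⟨⟨homogeneousComponent (M - d) q, homogeneousComponent_mem _ _⟩,
        Subtype.ext (homog_quot hF hdM hh).symm⟩
    · rintro ⟨q, hq⟩
      exact ⟨q.1, (congrArg Subtype.val hq).symm⟩
  have hrk := LinearMap.finrank_range_add_finrank_ker f
  rw [hk, LinearMap.finrank_range_of_inj hginj, hr, finrank_homog, finrank_homog] at hrk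
  obtain ⟨N, rfl⟩ := Nat.exists_eq_add_of_le hdM
  obtain ⟨e, rfl⟩ := Nat.exists_eq_add_of_le hd
  have hc : ∀ n : ℕ, 2 * (n + 2).choose 2 = (n + 2) * (n + 1) := by
    intro n
    rw [Nat.choose_two_right, Nat.mul_div_cancel']
    · simp
    · have := Nat.even_mul_pred_self (n + 2)
      exact this.two_dvd
  have h1 := hc (2 + e + N)
  have h2 := hc N
  simp only [Nat.add_sub_cancel_left] at hrk
  rw [show 2 + e - 1 = e + 1 by omega, show 2 + e - 2 = e by omega]
  nlinarith

end Graded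

section Bez
open scoped PowerSeries

/-- a local parametrization of the curve at a point -/
structure IsBranch {p : ℕ} [Fact p.Prime] (F : MvPolynomial (Fin 3) (ZMod p)) (Q : Fin 3 → ZMod p)
    (x : Fin 3 → (ZMod p)⟦X⟧) : Prop where
  cc : ∀ i, PowerSeries.constantCoeff (x i) = Q i
  root : aeval x F = 0
  param : ∃ c : Fin 3 → ZMod p, ∑ i, c i * Q i = 0 ∧ ∑ i, c i * PowerSeries.coeff 1 (x i) ≠ 0

/-- a linear form -/
noncomputable def linF {p : ℕ} (c : Fin 3 → ZMod p) : MvPolynomial (Fin 3) (ZMod p) :=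
  ∑ i, C (c i) * X i

lemma linF_homog {p : ℕ} (c : Fin 3 → ZMod p) : (linF c).IsHomogeneous 1 :=
  IsHomogeneous.sum _ _ _ (fun _ _ => isHomogeneous_C_mul_X _ _)

lemma aeval_linF {p : ℕ} (c : Fin 3 → ZMod p) (x : Fin 3 → (ZMod p)⟦X⟧) :
    aeval x (linF c) = ∑ i, PowerSeries.C (c i) * x i := by
  simp [linF]

lemma cc_linF {p : ℕ} (c : Fin 3 → ZMod p) (x : Fin 3 → (ZMod p)⟦X⟧) :
    PowerSeries.constantCoeff (aeval x (linF c)) = ∑ i, c i * PowerSeries.constantCoeff (x i) := by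
  simp [aeval_linF]

lemma c1_linF {p : ℕ} (c : Fin 3 → ZMod p) (x : Fin 3 → (ZMod p)⟦X⟧) :
    PowerSeries.coeff 1 (aeval x (linF c)) = ∑ i, c i * PowerSeries.coeff 1 (x i) := by
  simp [aeval_linF]

/-- forms of degree `L` with prescribed vanishing -/
noncomputable def condPoly {p : ℕ} (s : Finset (Fin 3 → ZMod p))
    (x : (Fin 3 → ZMod p) → Fin 3 → (ZMod p)⟦X⟧) (a : (Fin 3 → ZMod p) → ℕ) (L : ℕ) :
    Submodule (ZMod p) (MvPolynomial (Fin 3) (ZMod p)) where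
  carrier := {G | G.IsHomogeneous L ∧ ∀ Q ∈ s, PowerSeries.X ^ a Q ∣ aeval (x Q) G}
  zero_mem' := ⟨isHomogeneous_zero _ _ _, fun Q _ => by simp⟩
  add_mem' := fun h1 h2 => ⟨h1.1.add h2.1, fun Q hQ => by
    rw [map_add]; exact dvd_add (h1.2 Q hQ) (h2.2 Q hQ)⟩
  smul_mem' := fun c G h => ⟨(homogeneousSubmodule (Fin 3) (ZMod p) L).smul_mem c h.1, fun Q hQ => by
    rw [map_smul, PowerSeries.smul_eq_C_mul]; exact dvd_mul_of_dvd_right (h.2 Q hQ) _⟩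

/-- classes of forms with prescribed vanishing -/
noncomputable def condR {p : ℕ} (F : MvPolynomial (Fin 3) (ZMod p)) (s : Finset (Fin 3 → ZMod p))
    (x : (Fin 3 → ZMod p) → Fin 3 → (ZMod p)⟦X⟧) (a : (Fin 3 → ZMod p) → ℕ) (L : ℕ) :
    Submodule (ZMod p) (CRing F) :=
  (condPoly s x a L).map (cπ F).toLinearMap

lemma condR_le {p : ℕ} (F : MvPolynomial (Fin 3) (ZMod p)) (s : Finset (Fin 3 → ZMod p))
    (x : (Fin 3 → ZMod p) → Fin 3 → (ZMod p)⟦X⟧) (a : (Fin 3 → ZMod p) → ℕ) (L : ℕ) :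
    condR F s x a L ≤ grd F L :=
  Submodule.map_mono (fun _ h => h.1)

lemma finrank_cond {p : ℕ} [Fact p.Prime] (F : MvPolynomial (Fin 3) (ZMod p))
    (s : Finset (Fin 3 → ZMod p)) (x : (Fin 3 → ZMod p) → Fin 3 → (ZMod p)⟦X⟧)
    (hb : ∀ Q ∈ s, IsBranch F Q (x Q))
    (hsep : ∀ Q ∈ s, ∀ Q' ∈ s, Q' ≠ Q → ∃ c : Fin 3 → ZMod p, ∑ i, c i * Q' i = 0 ∧ ∑ i, c i * Q i ≠ 0)
    (hs0 : ∀ Q ∈ s, Q ≠ 0) (L S : ℕ) :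
    ∀ a : (Fin 3 → ZMod p) → ℕ, ∑ Q ∈ s, a Q = S → S ≤ L →
      Module.finrank (ZMod p) (condR F s x a L) + S ≤ Module.finrank (ZMod p) (grd F L) := by
  induction S with
  | zero => intro a _ _; exact Submodule.finrank_mono (condR_le F s x a L)
  | succ S ih =>
    intro a ha hSL
    obtain ⟨Q, hQ, haQ⟩ : ∃ Q ∈ s, a Q ≠ 0 := by
      by_contra! h
      rw [Finset.sum_eq_zero h] at ha
      omega
    let a' := Function.update a Q (a Q - 1)
    have ha'Q : a' Q + 1 = a Q := by simp [a']; omega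
    have ha' : ∑ Q ∈ s, a' Q = S := by
      rw [← Finset.add_sum_erase s _ hQ] at ha ⊢
      rw [Finset.sum_congr rfl (fun R hR => show a' R = a R by
        simp [a', Function.update_of_ne (Finset.ne_of_mem_erase hR)])]
      change a' Q + (s.erase Q).sum a = S
      change a Q + (s.erase Q).sum a = S + 1 at ha
      omega
    have ihh := ih a' ha' (by omega)
    have hle : ∀ R, a' R ≤ a R := by
      intro R
      by_cases h : R = Q
      · subst h; omega
      · simp [a', Function.update_of_ne h]
    have hlt : condR F s x a L < condR F s x a' L := by
      refine lt_of_le_of_ne (Submodule.map_mono ?_) ?_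
      · intro G hG
        exact ⟨hG.1, fun R hR => (pow_dvd_pow _ (hle R)).trans (hG.2 R hR)⟩
      intro heq
      have hc : ∀ R : Fin 3 → ZMod p, ∃ c : Fin 3 → ZMod p, R ∈ s →
          (∑ i, c i * R i = 0 ∧ (R ≠ Q → ∑ i, c i * Q i ≠ 0) ∧
            (R = Q → ∑ i, c i * PowerSeries.coeff 1 (x Q i) ≠ 0)) := by
        intro R
        by_cases hR : R ∈ s
        · by_cases hRQ : R = Q
          · obtain ⟨c, h1, h2⟩ := (hb Q hQ).param
            exact ⟨c, fun _ => ⟨hRQ ▸ h1, fun h => absurd hRQ h, fun _ => h2⟩⟩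
          · obtain ⟨c, h1, h2⟩ := hsep Q hQ R hR hRQ
            exact ⟨c, fun _ => ⟨h1, fun _ => h2, fun h => absurd h hRQ⟩⟩
        · exact ⟨0, fun h => absurd h hR⟩
      choose c hc using hc
      obtain ⟨i0, hi0⟩ : ∃ i, Q i ≠ 0 := by
        by_contra! h
        exact hs0 Q hQ (funext h)
      let G : MvPolynomial (Fin 3) (ZMod p) := (∏ R ∈ s, linF (c R) ^ a' R) * X i0 ^ (L - S)
      have hGh : G.IsHomogeneous L := by
        have h1 : (∏ R ∈ s, linF (c R) ^ a' R).IsHomogeneous (∑ R ∈ s, a' R) :=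
          IsHomogeneous.prod _ _ _ (fun R _ => by simpa using (linF_homog (c R)).pow (a' R))
        have h2 := h1.mul (isHomogeneous_X_pow (R := ZMod p) i0 (L - S))
        rw [ha', Nat.add_sub_cancel' (by omega)] at h2
        exact h2
      have hGmem : G ∈ condPoly s x a' L := by
        refine ⟨hGh, fun R hR => ?_⟩
        have h1 : PowerSeries.X ∣ aeval (x R) (linF (c R)) := by
          rw [PowerSeries.X_dvd_iff, cc_linF]
          simp only [(hb R hR).cc]
          exact (hc R hR).1
        simp only [G, map_mul, map_prod, map_pow]
        refine dvd_mul_of_dvd_left ((pow_dvd_pow_of_dvd h1 _).trans ?_) _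
        exact Finset.dvd_prod_of_mem (fun R' => aeval (x R) (linF (c R')) ^ a' R') hR
      have hGin : cπ F G ∈ condR F s x a L := by
        rw [heq]; exact ⟨G, hGmem, rfl⟩
      obtain ⟨G', hG', hGG'⟩ := hGin
      have hdiv : F ∣ G' - G := by
        rw [← cπ_eq_zero, map_sub, sub_eq_zero]; exact hGG'
      have hval : aeval (x Q) G = aeval (x Q) G' := by
        obtain ⟨q, hq⟩ := hdiv
        have := congrArg (aeval (x Q)) hq
        rw [map_mul, (hb Q hQ).root, zero_mul, map_sub, sub_eq_zero] at this
        exact this.symm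
      have hd1 : PowerSeries.X ^ a Q ∣ aeval (x Q) G := hval ▸ hG'.2 Q hQ
      obtain ⟨w, hw⟩ : PowerSeries.X ∣ aeval (x Q) (linF (c Q)) := by
        rw [PowerSeries.X_dvd_iff, cc_linF]
        simp only [(hb Q hQ).cc]
        exact (hc Q hQ).1
      have hwc : PowerSeries.constantCoeff w ≠ 0 := by
        have h1 := c1_linF (c Q) (x Q)
        rw [hw, ← pow_one (PowerSeries.X : (ZMod p)⟦X⟧), PowerSeries.coeff_X_pow_mul'] at h1
        simp only [le_refl, if_true, Nat.sub_self, PowerSeries.coeff_zero_eq_constantCoeff] at h1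
        rw [h1]; exact (hc Q hQ).2.2 rfl
      have hGval : aeval (x Q) G = PowerSeries.X ^ a' Q * (w ^ a' Q *
          (∏ R ∈ s.erase Q, aeval (x Q) (linF (c R)) ^ a' R) * x Q i0 ^ (L - S)) := by
        simp only [G, map_mul, map_prod, map_pow, aeval_X]
        rw [← Finset.mul_prod_erase s _ hQ, hw]
        ring
      rw [hGval, ← ha'Q, pow_succ, mul_dvd_mul_iff_left (pow_ne_zero _ PowerSeries.X_ne_zero),
        PowerSeries.X_dvd_iff] at hd1
      simp only [map_mul, map_pow, map_prod, mul_eq_zero] at hd1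
      rcases hd1 with (h | h) | h
      · exact pow_ne_zero _ hwc h
      · rw [Finset.prod_eq_zero_iff] at h
        obtain ⟨R, hR, h⟩ := h
        refine pow_ne_zero _ ?_ h
        rw [cc_linF]
        simp only [(hb Q hQ).cc]
        exact (hc R (Finset.mem_of_mem_erase hR)).2.1 (Finset.ne_of_mem_erase hR)
      · rw [(hb Q hQ).cc] at h
        exact pow_ne_zero _ hi0 h
    have hfin : FiniteDimensional (ZMod p) (condR F s x a' L) :=
      Submodule.finiteDimensional_of_le (condR_le F s x a' L)
    have := Submodule.finrank_lt_finrank_of_lt hlt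
    omega

lemma bezout {p : ℕ} [Fact p.Prime] {F : MvPolynomial (Fin 3) (ZMod p)} {d : ℕ} (hd : 2 ≤ d)
    (hF : F.IsHomogeneous d) (hirr : Irreducible F)
    (s : Finset (Fin 3 → ZMod p)) (x : (Fin 3 → ZMod p) → Fin 3 → (ZMod p)⟦X⟧)
    (hb : ∀ Q ∈ s, IsBranch F Q (x Q))
    (hsep : ∀ Q ∈ s, ∀ Q' ∈ s, Q' ≠ Q → ∃ c : Fin 3 → ZMod p, ∑ i, c i * Q' i = 0 ∧ ∑ i, c i * Q i ≠ 0)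
    (hs0 : ∀ Q ∈ s, Q ≠ 0) (a : (Fin 3 → ZMod p) → ℕ)
    (G : Fin 3 → MvPolynomial (Fin 3) (ZMod p)) (e T : ℕ) (hG : ∀ i, (G i).IsHomogeneous e)
    (hcomp : ∀ i j, F ∣ X i ^ T * G j - X j ^ T * G i) (j0 : Fin 3) (hne : ¬ F ∣ G j0)
    (ha : ∀ i, ∀ Q ∈ s, PowerSeries.X ^ a Q ∣ aeval (x Q) (G i)) :
    ∑ Q ∈ s, a Q + T * d ≤ e * d := by
  have hF0 : F ≠ 0 := hirr.ne_zero
  have hprime : Prime F := hirr.prime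
  have hdom : (Ideal.span {F}).IsPrime := (Ideal.span_singleton_prime hF0).2 hprime
  have hXnd : ¬ F ∣ X j0 := by
    intro h
    have h1 := totalDegree_le_of_dvd_of_isDomain h (X_ne_zero j0)
    rw [hF.totalDegree hF0, totalDegree_X] at h1
    omega
  have hXT : cπ F (X j0 ^ T) ≠ 0 := by
    rw [Ne, cπ_eq_zero]; exact fun h => hXnd (hprime.dvd_of_dvd_pow h)
  have hGn : cπ F (G j0) ≠ 0 := by rw [Ne, cπ_eq_zero]; exact hne
  set S := ∑ Q ∈ s, a Q with hS
  set M0 := 2 * T + d + S with hM0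
  have hfin := fun L => Submodule.finiteDimensional_of_le (condR_le F s x a L)
  have hkey : (grd F (M0 + T)).map (LinearMap.mulLeft (ZMod p) (cπ F (G j0))) ≤
      (condR F s x a (M0 + e)).map (LinearMap.mulLeft (ZMod p) (cπ F (X j0 ^ T))) := by
    rintro _ ⟨h, hh, rfl⟩
    obtain ⟨g, hg, rfl⟩ := mem_grd.1 hh
    rw [LinearMap.mulLeft_apply, g.as_sum, map_sum, Finset.mul_sum]
    refine Submodule.sum_mem _ fun m hm => ?_
    have hdeg : m 0 + m 1 + m 2 = M0 + T := by
      have := hg (mem_support_iff.1 hm)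
      rw [Finsupp.weight_apply, Finsupp.sum_fintype _ _ (by simp)] at this
      simpa [Fin.sum_univ_three] using this
    obtain ⟨i, hi⟩ : ∃ i, T ≤ m i := by
      by_contra! h
      have h0 := h 0; have h1 := h 1; have h2 := h 2
      omega
    let m' : Fin 3 →₀ ℕ := m - Finsupp.single i T
    have hmm : m = Finsupp.single i T + m' := by
      rw [add_comm]
      exact (tsub_add_cancel_of_le (Finsupp.single_le_iff.2 hi)).symm
    have hm'd : m'.degree = M0 := by
      have h1 : m.degree = M0 + T := by
        rw [Finsupp.degree_eq_sum, Fin.sum_univ_three]; exact hdeg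
      rw [hmm, map_add, Finsupp.degree_single] at h1
      omega
    have hmon : monomial m (coeff m g) = X i ^ T * monomial m' (coeff m g) := by
      rw [X_pow_eq_monomial, monomial_mul, one_mul, ← hmm]
    refine ⟨cπ F (G i * monomial m' (coeff m g)), ⟨_, ⟨?_, ?_⟩, rfl⟩, ?_⟩
    · rw [add_comm]; exact (hG i).mul (isHomogeneous_monomial _ hm'd)
    · intro Q hQ
      rw [map_mul]; exact dvd_mul_of_dvd_left (ha i Q hQ) _
    · rw [LinearMap.mulLeft_apply, hmon, ← map_mul, ← map_mul, ← sub_eq_zero, ← map_sub, cπ_eq_zero]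
      have := (hcomp j0 i).mul_right (monomial m' (coeff m g))
      convert this using 1
      ring
  have hf1 : FiniteDimensional (ZMod p) ((condR F s x a (M0 + e)).map
      (LinearMap.mulLeft (ZMod p) (cπ F (X j0 ^ T)))) := by
    have := hfin (M0 + e)
    infer_instance
  have hinj : ∀ b : CRing F, b ≠ 0 → Function.Injective (LinearMap.mulLeft (ZMod p) b) :=
    fun b hb u v huv => mul_left_cancel₀ hb huv
  have h1 := Submodule.finrank_mono hkey
  rw [← (Submodule.equivMapOfInjective _ (hinj _ hGn) (grd F (M0 + T))).finrank_eq,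
    ← (Submodule.equivMapOfInjective _ (hinj _ hXT) _).finrank_eq] at h1
  have h2 := finrank_cond F s x hb hsep hs0 (M0 + e) S a rfl (by omega)
  have h3 := finrank_grd hF hF0 (M := M0 + T) (by omega) hd
  have h4 := finrank_grd hF hF0 (M := M0 + e) (by omega) hd
  rw [add_mul] at h3 h4
  omega

end Bez

section Hens
open Polynomial
open scoped Ring

/-- Hensel lemma without the monic hypothesis (Newton iteration as in Mathlib). -/
lemma hensel_nonmonic (R : Type*) [CommRing R] (I : Ideal R) [IsAdicComplete I R] (f : R[X])
    (a₀ : R) (h₁ : f.eval a₀ ∈ I) (h₂ : IsUnit (Ideal.Quotient.mk I (f.derivative.eval a₀))) :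
    ∃ a : R, f.IsRoot a ∧ a - a₀ ∈ I := by
  classical
    let f' := derivative f
    let c : ℕ → R := fun n => Nat.recOn n a₀ fun _ b => b - f.eval b * (f'.eval b)⁻¹ʳ
    have hc : ∀ n, c (n + 1) = c n - f.eval (c n) * (f'.eval (c n))⁻¹ʳ := by
      intro n
      simp only [c]
    have hc_mod : ∀ n, c n ≡ a₀ [SMOD I] := by
      intro n
      induction n with
      | zero => rfl
      | succ n ih => ?_
      rw [hc, sub_eq_add_neg, ← add_zero a₀]
      refine ih.add ?_
      rw [SModEq.zero, Ideal.neg_mem_iff]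
      refine I.mul_mem_right _ ?_
      rw [← SModEq.zero] at h₁ ⊢
      exact (ih.eval f).trans h₁
    have hf'c : ∀ n, IsUnit (f'.eval (c n)) := by
      intro n
      have := isLocalHom_of_le_jacobson_bot I (IsAdicComplete.le_jacobson_bot I)
      apply IsUnit.of_map (Ideal.Quotient.mk I)
      convert! h₂ using 1
      exact SModEq.def.mp ((hc_mod n).eval _)
    have hfcI : ∀ n, f.eval (c n) ∈ I ^ (n + 1) := by
      intro n
      induction n with
      | zero => simpa only [Nat.rec_zero, zero_add, pow_one] using! h₁
      | succ n ih => ?_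
      rw [← taylor_eval_sub (c n), hc, sub_eq_add_neg, sub_eq_add_neg,
        add_neg_cancel_comm]
      rw [eval_eq_sum, sum_over_range' _ _ _ (lt_add_of_pos_right _ zero_lt_two), ←
        Finset.sum_range_add_sum_Ico _ (Nat.le_add_left _ _)]
      swap
      · intro i
        rw [zero_mul]
      refine Ideal.add_mem _ ?_ ?_
      · rw [← one_add_one_eq_two, Finset.sum_range_succ, Finset.range_one, Finset.sum_singleton,
          taylor_coeff_zero, taylor_coeff_one, pow_zero, pow_one, mul_one, mul_neg,
          mul_left_comm, Ring.mul_inverse_cancel _ (hf'c n), mul_one, add_neg_cancel]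
        exact Ideal.zero_mem _
      · refine Submodule.sum_mem _ ?_
        simp only [Finset.mem_Ico]
        rintro i ⟨h2i, _⟩
        have aux : n + 2 ≤ i * (n + 1) := by trans 2 * (n + 1) <;> nlinarith only [h2i]
        refine Ideal.mul_mem_left _ _ (Ideal.pow_le_pow_right aux ?_)
        rw [pow_mul']
        exact Ideal.pow_mem_pow ((Ideal.neg_mem_iff _).2 <| Ideal.mul_mem_right _ _ ih) _
    have aux : ∀ m n, m ≤ n → c m ≡ c n [SMOD (I ^ m • ⊤ : Ideal R)] := by
      intro m n hmn
      rw [← Ideal.one_eq_top, Ideal.smul_eq_mul, mul_one]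
      obtain ⟨k, rfl⟩ := Nat.exists_eq_add_of_le hmn
      clear hmn
      induction k with
      | zero => rw [add_zero]
      | succ k ih => ?_
      rw [← add_assoc, hc, ← add_zero (c m), sub_eq_add_neg]
      refine ih.add ?_
      symm
      rw [SModEq.zero, Ideal.neg_mem_iff]
      refine Ideal.mul_mem_right _ _ (Ideal.pow_le_pow_right ?_ (hfcI _))
      rw [add_assoc]
      exact le_self_add
    obtain ⟨a, ha⟩ := IsPrecomplete.prec' c (aux _ _)
    refine ⟨a, ?_, ?_⟩
    · show f.IsRoot a
      suffices ∀ n, f.eval a ≡ 0 [SMOD (I ^ n • ⊤ : Ideal R)] by exact IsHausdorff.haus' _ this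
      intro n
      specialize ha n
      rw [← Ideal.one_eq_top, Ideal.smul_eq_mul, mul_one] at ha ⊢
      refine (ha.symm.eval f).trans ?_
      rw [SModEq.zero]
      exact Ideal.pow_le_pow_right le_self_add (hfcI _)
    · show a - a₀ ∈ I
      specialize ha (0 + 1)
      rw [hc, pow_one, ← Ideal.one_eq_top, Ideal.smul_eq_mul, mul_one, sub_eq_add_neg] at ha
      rw [← SModEq.sub_mem, ← add_zero a₀]
      refine ha.symm.trans (SModEq.rfl.add ?_)
      rw [SModEq.zero, Ideal.neg_mem_iff]
      exact Ideal.mul_mem_right _ _ h₁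

end Hens

section Branch
open scoped PowerSeries

lemma chain_rule {k B : Type*} [CommRing k] [CommRing B] [Algebra k B] (D : Derivation k B B)
    (x : Fin 3 → B) (F : MvPolynomial (Fin 3) k) :
    D (aeval x F) = ∑ i, aeval x (pderiv i F) * D (x i) := by
  induction F using MvPolynomial.induction_on with
  | C a => simp
  | add f g hf hg => simp [hf, hg, add_mul, Finset.sum_add_distrib]
  | mul_X f j hf =>
    simp only [map_mul, aeval_X, Derivation.leibniz, hf, smul_eq_mul, map_add, pderiv_X, add_mul,
      Finset.sum_add_distrib]
    congr 1
    · rw [Finset.sum_eq_single j]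
      · simp
      · intro b _ hb; simp [hb.symm]
      · simp
    · rw [Finset.mul_sum]; refine Finset.sum_congr rfl fun i _ => ?_; ring

lemma cc_aeval {p : ℕ} (x : Fin 3 → (ZMod p)⟦X⟧) (Q : Fin 3 → ZMod p)
    (h : ∀ i, PowerSeries.constantCoeff (x i) = Q i) (G : MvPolynomial (Fin 3) (ZMod p)) :
    PowerSeries.constantCoeff (aeval x G) = eval Q G := by
  induction G using MvPolynomial.induction_on with
  | C a => simp
  | add f g hf hg => simp [hf, hg]
  | mul_X f j hf => simp [hf, h]

lemma exists_branch {p : ℕ} [Fact p.Prime] {F : MvPolynomial (Fin 3) (ZMod p)} {d : ℕ}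
    (hF : F.IsHomogeneous d) (Q : Fin 3 → ZMod p) (hQ0 : Q ≠ 0) (hQ : eval Q F = 0) (i : Fin 3)
    (hi : eval Q (pderiv i F) ≠ 0) : ∃ x, IsBranch F Q x := by
  have heul : ∑ l, Q l * eval Q (pderiv l F) = 0 := by
    have := congrArg (eval Q) hF.sum_X_mul_pderiv
    simpa [hQ] using this
  obtain ⟨l, hli, hl⟩ : ∃ l, l ≠ i ∧ Q l ≠ 0 := by
    by_contra! h
    rw [Finset.sum_eq_single i (fun b _ hb => by rw [h b hb, zero_mul]) (by simp)] at heul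
    have h0 : Q i = 0 := (mul_eq_zero.1 heul).resolve_right hi
    refine hQ0 (funext fun b => ?_)
    by_cases hb : b = i
    · rw [hb, h0]; rfl
    · exact h b hb
  obtain ⟨j, hji, hjl⟩ : ∃ j : Fin 3, j ≠ i ∧ j ≠ l := by
    clear * -
    revert i l; decide
  let y : Fin 3 → (ZMod p)⟦X⟧ → (ZMod p)⟦X⟧ := fun m s => PowerSeries.C (Q m) +
    (if m = j then PowerSeries.X else 0) + (if m = i then s else 0)
  let Y : Fin 3 → Polynomial (ZMod p)⟦X⟧ := fun m => Polynomial.C (PowerSeries.C (Q m)) +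
    (if m = j then Polynomial.C PowerSeries.X else 0) + (if m = i then Polynomial.X else 0)
  have hYe : ∀ (G : MvPolynomial (Fin 3) (ZMod p)) (s : (ZMod p)⟦X⟧),
      Polynomial.eval s (aeval Y G) = aeval (fun m => y m s) G := by
    intro G s
    have h1 := MvPolynomial.comp_aeval_apply (f := Y)
      ((Polynomial.aeval (R := (ZMod p)⟦X⟧) s).restrictScalars (ZMod p)) G
    rw [AlgHom.restrictScalars_apply, Polynomial.coe_aeval_eq_eval] at h1
    rw [h1]
    congr 2
    funext m
    simp only [Y, y, AlgHom.restrictScalars_apply, Polynomial.coe_aeval_eq_eval, Polynomial.eval_add,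
      Polynomial.eval_C]
    split_ifs <;> simp
  have hYd : Polynomial.derivative (aeval Y F) = aeval Y (pderiv i F) := by
    have h1 := chain_rule ((Polynomial.derivative' (R := (ZMod p)⟦X⟧)).restrictScalars (ZMod p)) Y F
    simp only [Derivation.restrictScalars_apply, Polynomial.derivative'_apply] at h1
    rw [h1, Finset.sum_eq_single i]
    · simp [Y, hji.symm]
    · intro b _ hb
      simp only [Y, hb, if_false, add_zero, Polynomial.derivative_add, Polynomial.derivative_C]
      split_ifs <;> simp
    · simp
  have hy0 : ∀ s, PowerSeries.constantCoeff s = 0 → ∀ m, PowerSeries.constantCoeff (y m s) = Q m := by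
    intro s hs m
    simp only [y, map_add]
    split_ifs <;> simp [hs]
  obtain ⟨s, hs1, hs2⟩ := hensel_nonmonic ((ZMod p)⟦X⟧) (Ideal.span {PowerSeries.X}) (aeval Y F) 0
    (by
      rw [hYe, Ideal.mem_span_singleton, PowerSeries.X_dvd_iff, cc_aeval _ Q (hy0 0 (by simp)), hQ])
    (by
      apply IsUnit.map
      rw [hYd, hYe, PowerSeries.isUnit_iff_constantCoeff, cc_aeval _ Q (hy0 0 (by simp))]
      exact hi.isUnit)
  rw [sub_zero, Ideal.mem_span_singleton, PowerSeries.X_dvd_iff] at hs2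
  refine ⟨fun m => y m s, hy0 s hs2, ?_, ?_⟩
  · rw [← hYe]; exact hs1
  · refine ⟨fun m => if m = j then Q l else if m = l then - Q j else 0, ?_, ?_⟩
    · rw [← Finset.add_sum_erase _ _ (Finset.mem_univ j),
        ← Finset.add_sum_erase _ _ (show l ∈ Finset.univ.erase j by simp [hjl.symm]),
        Finset.sum_eq_zero]
      · simp [hjl.symm]; ring
      · intro m hm; simp at hm; simp [hm]
    · rw [← Finset.add_sum_erase _ _ (Finset.mem_univ j),
        ← Finset.add_sum_erase _ _ (show l ∈ Finset.univ.erase j by simp [hjl.symm]),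
        Finset.sum_eq_zero]
      · simp [hjl.symm, y, hji, hli, hl]
      · intro m hm; simp at hm; simp [hm]

end Branch

section Wron
open scoped PowerSeries

lemma det_homog {p n : ℕ} (M : Matrix (Fin n) (Fin n) (MvPolynomial (Fin 3) (ZMod p))) (e : Fin n → ℕ)
    (h : ∀ r i, (M r i).IsHomogeneous (e r)) : M.det.IsHomogeneous (∑ r, e r) := by
  rw [Matrix.det_apply]
  refine IsHomogeneous.sum _ _ _ fun σ _ => ?_
  have h1 : (∏ i, M (σ i) i).IsHomogeneous (∑ i, e (σ i)) :=
    IsHomogeneous.prod _ _ _ (fun i _ => h _ _)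
  rw [Equiv.sum_comp σ e] at h1
  rcases Int.units_eq_one_or (Equiv.Perm.sign σ) with h2 | h2 <;> rw [h2]
  · simpa using h1
  · simpa using h1.neg

/-- derivation along the curve -/
noncomputable def dF {p : ℕ} (F : MvPolynomial (Fin 3) (ZMod p)) (i : Fin 3) :
    Derivation (ZMod p) (MvPolynomial (Fin 3) (ZMod p)) (MvPolynomial (Fin 3) (ZMod p)) :=
  pderiv (i + 2) F • pderiv (i + 1) - pderiv (i + 1) F • pderiv (i + 2)

lemma dF_apply {p : ℕ} (F G : MvPolynomial (Fin 3) (ZMod p)) (i : Fin 3) :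
    dF F i G = pderiv (i + 2) F * pderiv (i + 1) G - pderiv (i + 1) F * pderiv (i + 2) G := rfl

lemma dF_homog {p d m : ℕ} {F G : MvPolynomial (Fin 3) (ZMod p)} (hF : F.IsHomogeneous d)
    (hG : G.IsHomogeneous m) (hd : 2 ≤ d) (hm : 1 ≤ m) (i : Fin 3) :
    (dF F i G).IsHomogeneous (m + (d - 2)) := by
  have h : m + (d - 2) = (d - 1) + (m - 1) := by omega
  rw [dF_apply, h]
  exact (hF.pderiv.mul hG.pderiv).sub (hF.pderiv.mul hG.pderiv)

lemma dF_iter_homog {p d m : ℕ} {F G : MvPolynomial (Fin 3) (ZMod p)} (hF : F.IsHomogeneous d)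
    (hG : G.IsHomogeneous m) (hd : 2 ≤ d) (hm : 1 ≤ m) (i : Fin 3) (j : ℕ) :
    ((dF F i)^[j] G).IsHomogeneous (m + j * (d - 2)) := by
  induction j with
  | zero => simpa using hG
  | succ j ih =>
    rw [Function.iterate_succ_apply']
    have := dF_homog hF ih hd (by omega) i
    convert this using 1
    ring

/-- the Wronskian-type form -/
noncomputable def wrMat {p n : ℕ} (F : MvPolynomial (Fin 3) (ZMod p)) (i : Fin 3)
    (f : Fin (n + 1) → MvPolynomial (Fin 3) (ZMod p)) :
    Matrix (Fin (n+1)) (Fin (n+1)) (MvPolynomial (Fin 3) (ZMod p)) :=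
  Matrix.of (fun r l => Fin.cases (f l ^ p) (fun j : Fin n => (dF F i)^[(j : ℕ)] (f l)) r)

lemma wrMat_homog {p d m n : ℕ} {F : MvPolynomial (Fin 3) (ZMod p)} (hF : F.IsHomogeneous d)
    (f : Fin (n + 1) → MvPolynomial (Fin 3) (ZMod p)) (hf : ∀ l, (f l).IsHomogeneous m)
    (hd : 2 ≤ d) (hm : 1 ≤ m) (i : Fin 3) :
    (wrMat F i f).det.IsHomogeneous (m * p + (n * m + (∑ j ∈ Finset.range n, j) * (d - 2))) := by
  have h := det_homog (wrMat F i f) (Fin.cons (m * p) (fun j : Fin n => m + j * (d - 2))) (by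
    intro r l
    refine Fin.cases ?_ (fun j => ?_) r
    · exact (hf l).pow p
    · exact dF_iter_homog hF (hf l) hd hm i j)
  convert h using 1
  rw [Fin.sum_univ_succ]
  simp only [Fin.cons_zero, Fin.cons_succ, Finset.sum_add_distrib]
  rw [← Finset.sum_mul, Fin.sum_univ_eq_sum_range (fun i => i)]
  simp

/-- triangular change of basis coefficients -/
noncomputable def lcf {p : ℕ} [Fact p.Prime] (A : (ZMod p)⟦X⟧) (B : ℕ → (ZMod p)⟦X⟧) :
    ℕ → ℕ → (ZMod p)⟦X⟧
  | 0, l => if l = 0 then 1 else 0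
  | j + 1, l => A * (thetaL p (lcf A B j l) + (if l = 0 then 0 else lcf A B j (l - 1))) -
      B j * lcf A B j l

lemma lcf_gt {p : ℕ} [Fact p.Prime] (A : (ZMod p)⟦X⟧) (B : ℕ → (ZMod p)⟦X⟧) (j : ℕ) :
    ∀ l, j < l → lcf A B j l = 0 := by
  induction j with
  | zero => intro l hl; simp [lcf]; omega
  | succ j ih =>
    intro l hl
    rw [lcf, ih l (by omega), ih (l - 1) (by omega)]; simp

lemma lcf_diag {p : ℕ} [Fact p.Prime] (A : (ZMod p)⟦X⟧) (B : ℕ → (ZMod p)⟦X⟧) (j : ℕ) :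
    lcf A B j j = A ^ j := by
  induction j with
  | zero => simp [lcf]
  | succ j ih =>
    rw [lcf, lcf_gt A B j (j+1) (by omega), Nat.add_sub_cancel, ih]; simp [pow_succ']

lemma lcf_spec {p : ℕ} [Fact p.Prime] (A : (ZMod p)⟦X⟧) (B : ℕ → (ZMod p)⟦X⟧) (g : ℕ → (ZMod p)⟦X⟧)
    (hg : ∀ j, g (j + 1) = A * thetaL p (g j) - B j * g j) (n j : ℕ) (hjn : j < n) :
    g j = ∑ l ∈ Finset.range n, lcf A B j l * (thetaL p ^ l) (g 0) := by
  induction j with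
  | zero =>
    rw [Finset.sum_eq_single 0]
    · simp [lcf]
    · intro b _ hb; simp [lcf, hb]
    · intro h; simp at h; omega
  | succ j ih =>
    have ih := ih (by omega)
    have hth : thetaL p (g j) = ∑ l ∈ Finset.range n, thetaL p (lcf A B j l) * (thetaL p ^ l) (g 0) +
        ∑ l ∈ Finset.range n, (if l = 0 then 0 else lcf A B j (l - 1)) * (thetaL p ^ l) (g 0) := by
      conv_lhs => rw [ih]
      rw [map_sum]
      simp only [thetaL_mul]
      rw [Finset.sum_add_distrib, add_comm]
      congr 1
      · exact Finset.sum_congr rfl fun l _ => mul_comm _ _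
      · obtain ⟨n', rfl⟩ : ∃ n', n = n' + 1 := ⟨n - 1, by omega⟩
        rw [Finset.sum_range_succ, Finset.sum_range_succ', lcf_gt A B j n' (by omega)]
        simp [pow_succ']
    rw [hg, hth]
    conv_lhs => rw [ih]
    rw [← Finset.sum_add_distrib, Finset.mul_sum, Finset.mul_sum, ← Finset.sum_sub_distrib]
    refine Finset.sum_congr rfl fun l _ => ?_
    rw [lcf]; ring

lemma wr_det_general {p n : ℕ} [Fact p.Prime] (A : (ZMod p)⟦X⟧) (B : ℕ → (ZMod p)⟦X⟧)
    (g : Fin (n + 1) → ℕ → (ZMod p)⟦X⟧)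
    (hg : ∀ i j, g i (j + 1) = A * thetaL p (g i j) - B j * g i j) :
    (Matrix.of (fun r i => Fin.cases (g i 0 ^ p) (fun j : Fin n => g i j) r) :
      Matrix (Fin (n+1)) (Fin (n+1)) (ZMod p)⟦X⟧).det =
    A ^ (∑ j ∈ Finset.range n, j) * (svMat (fun i => g i 0)).det := by
  let Lm : Matrix (Fin (n+1)) (Fin (n+1)) (ZMod p)⟦X⟧ := Matrix.of (fun r c =>
    Fin.cases (Fin.cases 1 (fun _ => 0) c)
      (fun j : Fin n => Fin.cases 0 (fun l : Fin n => lcf A B j l) c) r)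
  have h1 : (Matrix.of (fun r i => Fin.cases (g i 0 ^ p) (fun j : Fin n => g i j) r) :
      Matrix (Fin (n+1)) (Fin (n+1)) (ZMod p)⟦X⟧) = Lm * svMat (fun i => g i 0) := by
    ext1 r i
    rw [Matrix.mul_apply, Fin.sum_univ_succ]
    refine Fin.cases ?_ (fun j => ?_) r
    · simp [Lm, svMat_zero]
    · simp only [Lm, Matrix.of_apply, Fin.cases_succ, Fin.cases_zero, svMat_succ, zero_mul, zero_add]
      rw [lcf_spec A B (g i) (hg i) n j j.2, ← Fin.sum_univ_eq_sum_range
        (fun l => lcf A B j l * (thetaL p ^ l) (g i 0))]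
  have h2 : Lm.det = A ^ (∑ j ∈ Finset.range n, j) := by
    rw [Matrix.det_of_isLowerTriangular, Fin.prod_univ_succ]
    · simp only [Lm, Matrix.of_apply, Fin.cases_succ, Fin.cases_zero, lcf_diag, one_mul]
      rw [Finset.prod_pow_eq_pow_sum, Fin.sum_univ_eq_sum_range (fun i => i)]
    · intro r c
      refine Fin.cases ?_ (fun r => ?_) r <;> refine Fin.cases ?_ (fun c => ?_) c
      · intro h; exact absurd h (lt_irrefl _)
      · intro _; simp [Lm]
      · intro _; simp [Lm]
      · intro h
        simp only [Lm, Matrix.of_apply, Fin.cases_succ]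
        refine lcf_gt _ _ _ _ ?_
        have : r < c := by simpa using h
        exact this
  rw [h1, Matrix.det_mul, h2]

end Wron

section WronRel
open scoped PowerSeries

lemma cross_aux {R : Type*} [CommRing R] (g x x' : Fin 3 → R)
    (e1 : g 0 * x' 0 + g 1 * x' 1 + g 2 * x' 2 = 0) (e2 : x 0 * g 0 + x 1 * g 1 + x 2 * g 2 = 0)
    (i m : Fin 3) : g i * (x (m+1) * x' (m+2) - x (m+2) * x' (m+1)) =
      g m * (x (i+1) * x' (i+2) - x (i+2) * x' (i+1)) := by
  have h01 : g 0 * (x 2 * x' 0 - x 0 * x' 2) = g 1 * (x 1 * x' 2 - x 2 * x' 1) := by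
    linear_combination x 2 * e1 - x' 2 * e2
  have h12 : g 1 * (x 0 * x' 1 - x 1 * x' 0) = g 2 * (x 2 * x' 0 - x 0 * x' 2) := by
    linear_combination x 0 * e1 - x' 0 * e2
  have h20 : g 2 * (x 1 * x' 2 - x 2 * x' 1) = g 0 * (x 0 * x' 1 - x 1 * x' 0) := by
    linear_combination x 1 * e1 - x' 1 * e2
  match i, m with
  | 0, 0 => rfl
  | 1, 1 => rfl
  | 2, 2 => rfl
  | 0, 1 => exact h01
  | 1, 0 => exact h01.symm
  | 1, 2 => exact h12
  | 2, 1 => exact h12.symm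
  | 2, 0 => exact h20
  | 0, 2 => exact h20.symm

lemma branch_grad {p d : ℕ} [Fact p.Prime] {F : MvPolynomial (Fin 3) (ZMod p)}
    (hF : F.IsHomogeneous d) {Q : Fin 3 → ZMod p} (hQ0 : Q ≠ 0) {x : Fin 3 → (ZMod p)⟦X⟧}
    (hx : IsBranch F Q x) (hsm : ∃ i, eval Q (pderiv i F) ≠ 0) :
    ∃ lam : (ZMod p)⟦X⟧, lam ≠ 0 ∧ ∀ i, aeval x (pderiv i F) =
      lam * (x (i+1) * PowerSeries.derivative (ZMod p) (x (i+2)) -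
        x (i+2) * PowerSeries.derivative (ZMod p) (x (i+1))) := by
  set g : Fin 3 → (ZMod p)⟦X⟧ := fun i => aeval x (pderiv i F) with hg
  set x' : Fin 3 → (ZMod p)⟦X⟧ := fun i => PowerSeries.derivative (ZMod p) (x i) with hx'
  have e1 : ∑ i, g i * x' i = 0 := by
    have := chain_rule (PowerSeries.derivative (ZMod p)) x F
    rw [hx.root, map_zero] at this
    exact this.symm
  have e2 : ∑ i, x i * g i = 0 := by
    have := congrArg (aeval x) hF.sum_X_mul_pderiv
    simpa [hx.root] using this
  rw [Fin.sum_univ_three] at e1 e2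
  let Y : Fin 3 → (ZMod p)⟦X⟧ := fun i => x (i+1) * x' (i+2) - x (i+2) * x' (i+1)
  have hcross : ∀ i m, g i * Y m = g m * Y i := cross_aux g x x' e1 e2
  obtain ⟨m, hm⟩ : ∃ m, PowerSeries.constantCoeff (Y m) ≠ 0 := by
    by_contra! h
    obtain ⟨c, hc1, hc2⟩ := hx.param
    have hd : ∀ i, PowerSeries.coeff 1 (x i) = PowerSeries.constantCoeff (x' i) := by
      intro i
      rw [← PowerSeries.coeff_zero_eq_constantCoeff_apply, hx', PowerSeries.coeff_derivative]
      simp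
    simp only [hd] at hc2
    have h0 := h 0; have h1 := h 1; have h2 := h 2
    simp only [Y, map_sub, map_mul, hx.cc] at h0 h1 h2
    rw [Fin.sum_univ_three] at hc1 hc2
    change Q 1 * _ - Q 2 * _ = 0 at h0
    change Q 2 * _ - Q 0 * _ = 0 at h1
    change Q 0 * _ - Q 1 * _ = 0 at h2
    set v : Fin 3 → ZMod p := fun i => PowerSeries.constantCoeff (x' i) with hv
    change Q 1 * v 2 - Q 2 * v 1 = 0 at h0
    change Q 2 * v 0 - Q 0 * v 2 = 0 at h1
    change Q 0 * v 1 - Q 1 * v 0 = 0 at h2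
    change c 0 * v 0 + c 1 * v 1 + c 2 * v 2 ≠ 0 at hc2
    have a0 : Q 0 * (c 0 * v 0 + c 1 * v 1 + c 2 * v 2) = 0 := by
      linear_combination v 0 * hc1 + c 1 * h2 - c 2 * h1
    have a1 : Q 1 * (c 0 * v 0 + c 1 * v 1 + c 2 * v 2) = 0 := by
      linear_combination v 1 * hc1 + c 2 * h0 - c 0 * h2
    have a2 : Q 2 * (c 0 * v 0 + c 1 * v 1 + c 2 * v 2) = 0 := by
      linear_combination v 2 * hc1 + c 0 * h1 - c 1 * h0
    refine hQ0 (funext fun i => ?_)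
    fin_cases i
    · exact (mul_eq_zero.1 a0).resolve_right hc2
    · exact (mul_eq_zero.1 a1).resolve_right hc2
    · exact (mul_eq_zero.1 a2).resolve_right hc2
  have hu : IsUnit (Y m) := by rw [PowerSeries.isUnit_iff_constantCoeff]; exact hm.isUnit
  obtain ⟨w, hw⟩ := hu.exists_right_inv
  have hgi : ∀ i, g i = (g m * w) * Y i := by
    intro i
    calc g i = (g i * Y m) * w := by rw [mul_assoc, hw, mul_one]
      _ = _ := by rw [hcross]; ring
  refine ⟨g m * w, ?_, hgi⟩
  intro h0
  obtain ⟨i, hi⟩ := hsm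
  apply hi
  rw [← cc_aeval x Q hx.cc]
  have := hgi i
  rw [h0, zero_mul] at this
  rw [show aeval x (pderiv i F) = g i from rfl, this, map_zero]

lemma dF_branch {p m : ℕ} [Fact p.Prime] {F G : MvPolynomial (Fin 3) (ZMod p)}
    {x : Fin 3 → (ZMod p)⟦X⟧} {lam : (ZMod p)⟦X⟧}
    (hl : ∀ i, aeval x (pderiv i F) =
      lam * (x (i+1) * PowerSeries.derivative (ZMod p) (x (i+2)) -
        x (i+2) * PowerSeries.derivative (ZMod p) (x (i+1))))
    (hG : G.IsHomogeneous m) (i : Fin 3) :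
    PowerSeries.X * aeval x (dF F i G) =
      lam * (x i * thetaL p (aeval x G) - (m : (ZMod p)⟦X⟧) * thetaL p (x i) * aeval x G) := by
  have e1 := chain_rule (PowerSeries.derivative (ZMod p)) x G
  have e2 : ∑ i, x i * aeval x (pderiv i G) = (m : (ZMod p)⟦X⟧) * aeval x G := by
    have := congrArg (aeval x) hG.sum_X_mul_pderiv
    simpa using this
  rw [dF_apply, map_sub, map_mul, map_mul, hl, hl, thetaL_apply, thetaL_apply, e1]
  rw [Fin.sum_univ_three] at e2 ⊢
  fin_cases i
  · show PowerSeries.X * (lam * (x 0 * PowerSeries.derivative (ZMod p) (x 1) -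
        x 1 * PowerSeries.derivative (ZMod p) (x 0)) * aeval x (pderiv 1 G) -
      lam * (x 2 * PowerSeries.derivative (ZMod p) (x 0) -
        x 0 * PowerSeries.derivative (ZMod p) (x 2)) * aeval x (pderiv 2 G)) = _
    simp only [Fin.zero_eta]
    linear_combination (-lam * PowerSeries.X * PowerSeries.derivative (ZMod p) (x 0)) * e2
  · show PowerSeries.X * (lam * (x 1 * PowerSeries.derivative (ZMod p) (x 2) -
        x 2 * PowerSeries.derivative (ZMod p) (x 1)) * aeval x (pderiv 2 G) -
      lam * (x 0 * PowerSeries.derivative (ZMod p) (x 1) -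
        x 1 * PowerSeries.derivative (ZMod p) (x 0)) * aeval x (pderiv 0 G)) = _
    simp only [Fin.mk_one]
    linear_combination (-lam * PowerSeries.X * PowerSeries.derivative (ZMod p) (x 1)) * e2
  · show PowerSeries.X * (lam * (x 2 * PowerSeries.derivative (ZMod p) (x 0) -
        x 0 * PowerSeries.derivative (ZMod p) (x 2)) * aeval x (pderiv 0 G) -
      lam * (x 1 * PowerSeries.derivative (ZMod p) (x 2) -
        x 2 * PowerSeries.derivative (ZMod p) (x 1)) * aeval x (pderiv 1 G)) = _
    simp only [Fin.reduceFinMk]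
    linear_combination (-lam * PowerSeries.X * PowerSeries.derivative (ZMod p) (x 2)) * e2

lemma wr_rel {p d m n : ℕ} [Fact p.Prime] {F : MvPolynomial (Fin 3) (ZMod p)}
    (hF : F.IsHomogeneous d) (hd : 2 ≤ d) (hm : 1 ≤ m)
    {x : Fin 3 → (ZMod p)⟦X⟧} {lam : (ZMod p)⟦X⟧}
    (hl : ∀ i, aeval x (pderiv i F) =
      lam * (x (i+1) * PowerSeries.derivative (ZMod p) (x (i+2)) -
        x (i+2) * PowerSeries.derivative (ZMod p) (x (i+1))))
    (f : Fin (n + 1) → MvPolynomial (Fin 3) (ZMod p)) (hf : ∀ l, (f l).IsHomogeneous m) (i : Fin 3) :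
    PowerSeries.X ^ (∑ j ∈ Finset.range n, j) * aeval x (wrMat F i f).det =
      (lam * x i) ^ (∑ j ∈ Finset.range n, j) * (svMat (fun l => aeval x (f l))).det := by
  have h := wr_det_general (lam * x i)
    (fun j => lam * x i * (j : (ZMod p)⟦X⟧) +
      lam * ((m + j * (d - 2) : ℕ) : (ZMod p)⟦X⟧) * thetaL p (x i))
    (fun (l : Fin (n+1)) j => PowerSeries.X ^ j * aeval x ((dF F i)^[j] (f l))) (by
      intro l j
      have h1 := dF_branch hl (dF_iter_homog hF (hf l) hd hm i j) i
      rw [Function.iterate_succ_apply', thetaL_mul, thetaL_X_pow]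
      linear_combination PowerSeries.X ^ j * h1)
  simp only [pow_zero, one_mul, Function.iterate_zero, id_eq] at h
  rw [← h]
  let A : Fin (n+1) → (ZMod p)⟦X⟧ := Fin.cons 1 (fun j : Fin n => PowerSeries.X ^ (j : ℕ))
  have hm2 : (Matrix.of (fun r l => Fin.cases ((aeval x (f l)) ^ p)
      (fun j : Fin n => PowerSeries.X ^ (j : ℕ) * aeval x ((dF F i)^[(j : ℕ)] (f l))) r) :
      Matrix (Fin (n+1)) (Fin (n+1)) (ZMod p)⟦X⟧) =
      Matrix.diagonal A * (aeval x).mapMatrix (wrMat F i f) := by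
    ext1 r l
    rw [Matrix.diagonal_mul]
    refine Fin.cases ?_ (fun j => ?_) r
    · simp [A, wrMat]
    · simp [A, wrMat]
  rw [hm2, Matrix.det_mul, Matrix.det_diagonal, Fin.prod_univ_succ, AlgHom.map_det]
  simp only [A, Fin.cons_zero, Fin.cons_succ, one_mul]
  rw [Finset.prod_pow_eq_pow_sum, Fin.sum_univ_eq_sum_range (fun i => i)]

end WronRel

section SVBound
open scoped PowerSeries

lemma bezout_simple {p : ℕ} [Fact p.Prime] {F : MvPolynomial (Fin 3) (ZMod p)} {d : ℕ} (hd : 2 ≤ d)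
    (hF : F.IsHomogeneous d) (hirr : Irreducible F)
    (s : Finset (Fin 3 → ZMod p)) (x : (Fin 3 → ZMod p) → Fin 3 → (ZMod p)⟦X⟧)
    (hb : ∀ Q ∈ s, IsBranch F Q (x Q))
    (hsep : ∀ Q ∈ s, ∀ Q' ∈ s, Q' ≠ Q → ∃ c : Fin 3 → ZMod p, ∑ i, c i * Q' i = 0 ∧ ∑ i, c i * Q i ≠ 0)
    (hs0 : ∀ Q ∈ s, Q ≠ 0) (a : (Fin 3 → ZMod p) → ℕ)
    (G : MvPolynomial (Fin 3) (ZMod p)) (e : ℕ) (hG : G.IsHomogeneous e) (hne : ¬ F ∣ G)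
    (ha : ∀ Q ∈ s, PowerSeries.X ^ a Q ∣ aeval (x Q) G) :
    ∑ Q ∈ s, a Q ≤ e * d := by
  have := bezout hd hF hirr s x hb hsep hs0 a (fun _ => G) e 0 (fun _ => hG) (by simp) 0 hne
    (fun _ => ha)
  simpa using this

lemma bezout_point {p : ℕ} [Fact p.Prime] {F : MvPolynomial (Fin 3) (ZMod p)} {d : ℕ} (hd : 2 ≤ d)
    (hF : F.IsHomogeneous d) (hirr : Irreducible F) {Q : Fin 3 → ZMod p} (hQ : Q ≠ 0)
    {x : Fin 3 → (ZMod p)⟦X⟧} (hb : IsBranch F Q x)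
    (G : MvPolynomial (Fin 3) (ZMod p)) (e : ℕ) (hG : G.IsHomogeneous e) (hne : ¬ F ∣ G) (a : ℕ)
    (ha : PowerSeries.X ^ a ∣ aeval x G) : a ≤ e * d := by
  have := bezout_simple hd hF hirr {Q} (fun _ => x) (by simpa using hb)
    (by simp) (by simpa using hQ) (fun _ => a) G e hG hne (by simpa using ha)
  simpa using this

lemma branch_inj {p : ℕ} [Fact p.Prime] {F : MvPolynomial (Fin 3) (ZMod p)} {d : ℕ} (hd : 2 ≤ d)
    (hF : F.IsHomogeneous d) (hirr : Irreducible F) {Q : Fin 3 → ZMod p} (hQ : Q ≠ 0)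
    {x : Fin 3 → (ZMod p)⟦X⟧} (hb : IsBranch F Q x)
    (G : MvPolynomial (Fin 3) (ZMod p)) (e : ℕ) (hG : G.IsHomogeneous e) (h0 : aeval x G = 0) :
    F ∣ G := by
  by_contra hne
  have := bezout_point hd hF hirr hQ hb G e hG hne (e * d + 1) (by rw [h0]; exact dvd_zero _)
  omega

lemma exists_forms {p : ℕ} [Fact p.Prime] {F : MvPolynomial (Fin 3) (ZMod p)}
    {x : Fin 3 → (ZMod p)⟦X⟧} (hx : aeval x F = 0) (m r n : ℕ)
    (hdim : n + r ≤ Module.finrank (ZMod p) (grd F m)) :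
    ∃ f : Fin n → MvPolynomial (Fin 3) (ZMod p), (∀ l, (f l).IsHomogeneous m) ∧
      (∀ l, PowerSeries.X ^ r ∣ aeval x (f l)) ∧
      LinearIndependent (ZMod p) (fun l => cπ F (f l)) := by
  let Φ : CRing F →ₐ[ZMod p] (ZMod p)⟦X⟧ := Ideal.Quotient.liftₐ (Ideal.span {F}) (aeval x) (by
    intro a ha
    obtain ⟨q, rfl⟩ := Ideal.mem_span_singleton.1 ha
    rw [map_mul, hx, zero_mul])
  let ρ : grd F m →ₗ[ZMod p] (Fin r → ZMod p) := LinearMap.pi (fun j =>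
    (PowerSeries.coeff (R := ZMod p) (j : ℕ)).comp (Φ.toLinearMap.comp (grd F m).subtype))
  have hrk := LinearMap.finrank_range_add_finrank_ker ρ
  have hle : Module.finrank (ZMod p) (LinearMap.range ρ) ≤ r := by
    have := Submodule.finrank_le (LinearMap.range ρ)
    simpa using this
  obtain ⟨v, hv⟩ := exists_linearIndependent_of_le_finrank
    (show n ≤ Module.finrank (ZMod p) (LinearMap.ker ρ) by omega)
  have hex : ∀ l, ∃ G : MvPolynomial (Fin 3) (ZMod p), G.IsHomogeneous m ∧
      cπ F G = ((v l : grd F m) : CRing F) := fun l => mem_grd.1 (v l : grd F m).2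
  choose f hf1 hf2 using hex
  refine ⟨f, hf1, ?_, ?_⟩
  · intro l
    rw [PowerSeries.X_pow_dvd_iff]
    intro j hj
    have h1 : ρ (v l) = 0 := (v l).2
    have h2 := congrFun h1 ⟨j, hj⟩
    have h3 : ρ (v l) ⟨j, hj⟩ = PowerSeries.coeff j (Φ ((v l : grd F m) : CRing F)) := rfl
    rw [h3, ← hf2] at h2
    exact h2
  · have h1 : LinearIndependent (ZMod p) (fun l => ((v l : grd F m) : CRing F)) := by
      have h2 := hv.map' (LinearMap.ker ρ).subtype (Submodule.ker_subtype _)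
      exact h2.map' (grd F m).subtype (Submodule.ker_subtype _)
    simpa only [hf2] using h1

lemma sv_arith (p g N T r m d : ℤ) (hg : 0 < g)
    (h : 4 * g * N + (p + 4 * g) * r + T * d ≤ (m * p + (4 * g * m + T * (d - 2))) * d)
    (hr : r + 5 * g = m * d) (hdd : d * d - 3 * d = 2 * (g - 1)) (hT : T * 2 = 4 * g * (4 * g - 1))
    (hp : 16 * g ^ 2 ≤ p) : 2 * N ≤ 3 * p + 2 := by
  have h1 : g * (4 * N) ≤ g * (5 * p + 16 * g ^ 2 + 4) := by
    linear_combination h - (p + 4 * g) * hr + T * hdd + (g - 1) * hT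
  have h2 := le_of_mul_le_mul_left h1 hg
  linarith

lemma sv_bound {p : ℕ} [Fact p.Prime] {F : MvPolynomial (Fin 3) (ZMod p)} {d : ℕ} (hd : 3 ≤ d)
    (hF : F.IsHomogeneous d) (hirr : Irreducible F) (hp : 4 * (d - 1) ^ 2 * (d - 2) ^ 2 ≤ p)
    (s : Finset (Fin 3 → ZMod p)) (x : (Fin 3 → ZMod p) → Fin 3 → (ZMod p)⟦X⟧)
    (hb : ∀ Q ∈ s, IsBranch F Q (x Q)) (hsm : ∀ Q ∈ s, ∃ i, eval Q (pderiv i F) ≠ 0)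
    (hsep : ∀ Q ∈ s, ∀ Q' ∈ s, Q' ≠ Q → ∃ c : Fin 3 → ZMod p, ∑ i, c i * Q' i = 0 ∧ ∑ i, c i * Q i ≠ 0)
    (hs0 : ∀ Q ∈ s, Q ≠ 0) (P1 : Fin 3 → ZMod p) (hP1 : P1 ∈ s) : 2 * s.card ≤ 3 * p + 2 := by
  classical
  have hd2 : 2 ≤ d := by omega
  have hF0 := hirr.ne_zero
  obtain ⟨δ, rfl⟩ : ∃ δ, d = δ + 3 := ⟨d - 3, by omega⟩
  rw [show δ + 3 - 1 = δ + 2 by omega, show δ + 3 - 2 = δ + 1 by omega] at hp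
  obtain ⟨g, hg⟩ : ∃ g, (δ + 2) * (δ + 1) = 2 * g := by
    have := (Nat.even_mul_succ_self (δ + 1)).two_dvd
    obtain ⟨g, hg⟩ := this
    exact ⟨g, by rw [← hg]; ring⟩
  have hg0 : 0 < g := by nlinarith
  have hp' : 16 * g ^ 2 ≤ p := by
    have : 4 * (δ + 2) ^ 2 * (δ + 1) ^ 2 = 16 * g ^ 2 := by
      calc 4 * (δ + 2) ^ 2 * (δ + 1) ^ 2 = 4 * ((δ + 2) * (δ + 1)) ^ 2 := by ring
        _ = _ := by rw [hg]; ring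
    omega
  set m := 3 * (δ + 1) with hm
  have hmd : m * (δ + 3) < p := by
    refine lt_of_lt_of_le ?_ hp
    have e : 4 * (δ + 2) ^ 2 * (δ + 1) ^ 2 = m * (δ + 3) + (δ + 1) * (4 * δ ^ 3 + 20 * δ ^ 2 + 29 * δ + 7) := by
      rw [hm]; ring
    rw [e]
    have : 0 < (δ + 1) * (4 * δ ^ 3 + 20 * δ ^ 2 + 29 * δ + 7) := by positivity
    omega
  obtain ⟨r, hr⟩ : ∃ r, m * (δ + 3) = r + 5 * g := by
    have : 5 * g ≤ m * (δ + 3) := by rw [hm]; nlinarith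
    exact ⟨m * (δ + 3) - 5 * g, by omega⟩
  set n := 4 * g with hn
  have hdim : n + 1 + r ≤ Module.finrank (ZMod p) (grd F m) := by
    have := finrank_grd hF hF0 (M := m) (by omega) hd2
    rw [show δ + 3 - 1 = δ + 2 by omega, show δ + 3 - 2 = δ + 1 by omega] at this
    omega
  obtain ⟨f, hf1, hf2, hf3⟩ := exists_forms (hb P1 hP1).root m r (n + 1) hdim
  have hm1 : 1 ≤ m := by omega
  set T := ∑ j ∈ Finset.range n, j with hT
  -- linear combinations
  have hcomb : ∀ Q ∈ s, ∀ c : Fin (n+1) → ZMod p,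
      F ∣ ∑ l, c l • f l → c = 0 := by
    intro Q hQ c hc
    rw [← cπ_eq_zero, map_sum] at hc
    simp only [map_smul] at hc
    exact funext (Fintype.linearIndependent_iff.1 hf3 c hc)
  have hchom : ∀ c : Fin (n+1) → ZMod p, (∑ l, c l • f l).IsHomogeneous m := fun c =>
    IsHomogeneous.sum _ _ _ fun l _ => (homogeneousSubmodule (Fin 3) (ZMod p) m).smul_mem _ (hf1 l)
  have hev : ∀ Q, ∀ c : Fin (n+1) → ZMod p,
      aeval (x Q) (∑ l, c l • f l) = ∑ l, c l • aeval (x Q) (f l) := by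
    intro Q c; rw [map_sum]; simp only [map_smul]
  let rr : (Fin 3 → ZMod p) → ℕ := fun Q => if Q = P1 then r else 0
  have hsv : ∀ Q ∈ s, (svMat (fun l => aeval (x Q) (f l))).det ≠ 0 ∧
      PowerSeries.X ^ ((p + n) * rr Q + ∑ i ∈ Finset.range (n+1), i) ∣
        (svMat (fun l => aeval (x Q) (f l))).det := by
    intro Q hQ
    refine svMat_det_dvd (rr Q) _ ?_ ?_ ?_
    · rw [Fintype.linearIndependent_iff]
      intro c hc
      rw [← hev] at hc
      exact congrFun (hcomb Q hQ c (branch_inj hd2 hF hirr (hs0 Q hQ) (hb Q hQ) _ m (hchom c) hc))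
    · intro h hh h0 hX
      obtain ⟨c, rfl⟩ := (Submodule.mem_span_range_iff_exists_fun _).1 hh
      rw [← hev] at h0 hX
      have := bezout_point hd2 hF hirr (hs0 Q hQ) (hb Q hQ) _ m (hchom c) (fun hF' => by
        have := hcomb Q hQ c hF'
        subst this
        simp at h0) p hX
      omega
    · intro l
      by_cases h : Q = P1
      · subst h; simpa [rr] using hf2 l
      · simp [rr, h]
  have hlam : ∀ Q ∈ s, ∃ lam : (ZMod p)⟦X⟧, lam ≠ 0 ∧ ∀ i,
      PowerSeries.X ^ T * aeval (x Q) (wrMat F i f).det =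
      (lam * x Q i) ^ T * (svMat (fun l => aeval (x Q) (f l))).det := by
    intro Q hQ
    obtain ⟨lam, h1, h2⟩ := branch_grad hF (hs0 Q hQ) (hb Q hQ) (hsm Q hQ)
    exact ⟨lam, h1, fun i => wr_rel hF hd2 hm1 h2 f hf1 i⟩
  have hXT : (PowerSeries.X : (ZMod p)⟦X⟧) ^ T ≠ 0 := pow_ne_zero _ PowerSeries.X_ne_zero
  set e := m * p + (n * m + T * (δ + 3 - 2)) with he
  have hWh : ∀ i, (wrMat F i f).det.IsHomogeneous e := fun i => wrMat_homog hF f hf1 hd2 hm1 i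
  obtain ⟨j0, hj0⟩ : ∃ j0, P1 j0 ≠ 0 := by
    by_contra! h
    exact hs0 P1 hP1 (funext h)
  have hbz := bezout hd2 hF hirr s x hb hsep hs0 (fun Q => (p + n) * rr Q + n)
    (fun i => (wrMat F i f).det) e T hWh
    (by
      intro i j
      obtain ⟨lam, h1, h2⟩ := hlam P1 hP1
      refine branch_inj hd2 hF hirr (hs0 P1 hP1) (hb P1 hP1) _ (T + e) ?_ ?_
      · refine IsHomogeneous.sub ?_ ?_
        · exact (isHomogeneous_X_pow _ _).mul (hWh _)
        · exact (isHomogeneous_X_pow _ _).mul (hWh _)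
      · refine (mul_eq_zero.1 (?_ : PowerSeries.X ^ T * _ = 0)).resolve_left hXT
        simp only [map_sub, map_mul, map_pow, aeval_X]
        have hi := h2 i
        have hj := h2 j
        rw [mul_pow] at hi hj
        linear_combination x P1 i ^ T * hj - x P1 j ^ T * hi)
    j0
    (by
      rintro ⟨q, hq⟩
      obtain ⟨lam, h1, h2⟩ := hlam P1 hP1
      have h3 := h2 j0
      rw [hq, map_mul, (hb P1 hP1).root, zero_mul, mul_zero] at h3
      have hxj : x P1 j0 ≠ 0 := by
        intro h
        apply hj0
        rw [← (hb P1 hP1).cc, h, map_zero]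
      exact mul_ne_zero (pow_ne_zero _ (mul_ne_zero h1 hxj)) (hsv P1 hP1).1 h3.symm)
    (by
      intro i Q hQ
      obtain ⟨lam, h1, h2⟩ := hlam Q hQ
      have h3 := (hsv Q hQ).2
      rw [Finset.sum_range_succ, ← hT, show (p + n) * rr Q + (T + n) = T + ((p + n) * rr Q + n) by ring]
        at h3
      have h4 := dvd_mul_of_dvd_right h3 ((lam * x Q i) ^ T)
      rw [← h2 i, pow_add] at h4
      exact (mul_dvd_mul_iff_left hXT).1 h4)
  have hsum : ∑ Q ∈ s, ((p + n) * rr Q + n) = n * s.card + (p + n) * r := by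
    rw [Finset.sum_add_distrib, ← Finset.mul_sum]
    simp only [rr, Finset.sum_ite_eq', hP1, if_true, Finset.sum_const, smul_eq_mul]
    ring
  rw [hsum] at hbz
  have hT2 : T * 2 = n * (n - 1) := Finset.sum_range_id_mul_two n
  have hres := sv_arith (p : ℤ) g s.card T r m ((δ : ℤ) + 3) (by exact_mod_cast hg0)
    (by
      have : ((n * s.card + (p + n) * r + T * (δ + 3) : ℕ) : ℤ) ≤ ((e * (δ + 3) : ℕ) : ℤ) := by
        exact_mod_cast hbz
      rw [he, hn, show δ + 3 - 2 = δ + 1 by omega] at this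
      push_cast at this
      linarith)
    (by have : ((m * (δ + 3) : ℕ) : ℤ) = ((r + 5 * g : ℕ) : ℤ) := by exact_mod_cast hr
        push_cast at this
        linarith)
    (by have : (((δ + 2) * (δ + 1) : ℕ) : ℤ) = ((2 * g : ℕ) : ℤ) := by exact_mod_cast hg
        push_cast at this
        linarith)
    (by have : ((T * 2 : ℕ) : ℤ) = ((n * (n - 1) : ℕ) : ℤ) := by exact_mod_cast hT2
        rw [hn] at this
        push_cast [show 1 ≤ 4 * g by omega] at this
        linarith)
    (by exact_mod_cast hp')
  exact_mod_cast hres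

end SVBound

section Final
open scoped PowerSeries

lemma not_dvd_of_deg {p : ℕ} [Fact p.Prime] {F G : MvPolynomial (Fin 3) (ZMod p)} {d e : ℕ}
    (hF : F.IsHomogeneous d) (hF0 : F ≠ 0) (hG : G.IsHomogeneous e) (hG0 : G ≠ 0) (h : e < d) :
    ¬ F ∣ G := by
  rintro ⟨q, rfl⟩
  have hq : q ≠ 0 := right_ne_zero_of_mul hG0
  have h1 := hG.totalDegree hG0
  rw [totalDegree_mul_of_isDomain hF0 hq, hF.totalDegree hF0] at h1
  omega

lemma sep_of_not_prop {p : ℕ} [Fact p.Prime] (Q Q' : Fin 3 → ZMod p) (hQ' : Q' ≠ 0)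
    (h : ¬ ∃ c : ZMod p, Q = c • Q') :
    ∃ c : Fin 3 → ZMod p, ∑ i, c i * Q' i = 0 ∧ ∑ i, c i * Q i ≠ 0 := by
  obtain ⟨j, hj⟩ := Function.ne_iff.1 hQ'
  simp only [Pi.zero_apply] at hj
  have : ∃ i, Q i * Q' j - Q j * Q' i ≠ 0 := by
    by_contra! hc
    apply h
    refine ⟨Q j / Q' j, ?_⟩
    ext i
    have := hc i
    simp only [Pi.smul_apply, smul_eq_mul]
    field_simp
    linear_combination this
  obtain ⟨i, hi⟩ := this
  refine ⟨Pi.single i (Q' j) - Pi.single j (Q' i), ?_, ?_⟩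
  · simp only [Pi.sub_apply, sub_mul, Finset.sum_sub_distrib, Pi.single_apply, ite_mul, zero_mul,
      Finset.sum_ite_eq', Finset.mem_univ, if_true]
    ring
  · simp only [Pi.sub_apply, sub_mul, Finset.sum_sub_distrib, Pi.single_apply, ite_mul, zero_mul,
      Finset.sum_ite_eq', Finset.mem_univ, if_true]
    intro h0; apply hi; linear_combination h0

lemma eval_smul_homog {p : ℕ} [Fact p.Prime] {G : MvPolynomial (Fin 3) (ZMod p)} {e : ℕ}
    (hG : G.IsHomogeneous e) (c : ZMod p) (Q : Fin 3 → ZMod p) :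
    eval (c • Q) G = c ^ e * eval Q G := by
  rw [eval_eq, eval_eq, Finset.mul_sum]
  apply Finset.sum_congr rfl
  intro m hm
  have hm' : m.degree = e := by
    have := hG (mem_support_iff.1 hm)
    rw [Finsupp.degree_eq_weight_one]; exact this
  simp only [Pi.smul_apply, smul_eq_mul, mul_pow, Finset.prod_mul_distrib, Finset.prod_pow_eq_pow_sum]
  rw [← hm', Finsupp.degree_apply]
  ring

lemma shift_const {p : ℕ} [Fact p.Prime] {G : MvPolynomial (Fin 3) (ZMod p)} {e : ℕ}
    (hG : G.IsHomogeneous e) (he : e < p) (P : Fin 3 → ZMod p)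
    (h0 : ∑ i, C (P i) * pderiv i G = 0) (Q : Fin 3 → ZMod p) (t : ZMod p) :
    eval (Q + t • P) G = eval Q G := by
  set x : Fin 3 → Polynomial (ZMod p) := fun i => Polynomial.C (Q i) + Polynomial.C (P i) * Polynomial.X
    with hx
  set f : Polynomial (ZMod p) := aeval x G with hf
  have hdeg : f.natDegree ≤ e := by
    rw [hf, aeval_def, eval₂_eq]
    apply Polynomial.natDegree_sum_le_of_forall_le
    intro m hm
    have hm' : m.degree = e := by
      have := hG (mem_support_iff.1 hm)
      rw [Finsupp.degree_eq_weight_one]; exact this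
    refine (Polynomial.natDegree_C_mul_le _ _).trans ?_
    refine (Polynomial.natDegree_prod_le _ _).trans ?_
    rw [← hm', Finsupp.degree_apply]
    apply Finset.sum_le_sum
    intro i _
    refine (Polynomial.natDegree_pow_le).trans ?_
    have : (x i).natDegree ≤ 1 := by
      rw [hx]
      refine (Polynomial.natDegree_add_le _ _).trans (max_le (by simp) ?_)
      exact (Polynomial.natDegree_C_mul_le _ _).trans Polynomial.natDegree_X_le
    nlinarith
  have hder : Polynomial.derivative f = 0 := by
    have := chain_rule (Polynomial.derivative' : Derivation (ZMod p) (Polynomial (ZMod p)) (Polynomial (ZMod p))) x G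
    rw [show Polynomial.derivative f = Polynomial.derivative' (aeval x G) from rfl, this]
    have h1 := congrArg (aeval x) h0
    simp only [map_sum, map_mul, map_zero] at h1
    rw [← h1]
    apply Finset.sum_congr rfl
    intro i _
    rw [mul_comm]
    congr 1
    change Polynomial.derivative (x i) = _
    simp [hx]
  have hc := const_of_dvd_derivative f (by omega) (by rw [hder]; exact dvd_zero _)
  have hev : ∀ t, Polynomial.eval t f = eval (Q + t • P) G := by
    intro t
    rw [hf, ← Polynomial.coe_evalRingHom, aeval_def, hom_eval₂]
    rw [← eval₂_id]
    congr 1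
    · exact RingHom.ext_zmod _ _
    · ext i
      rw [hx]
      simp only [Function.comp_apply, Polynomial.coe_evalRingHom, Polynomial.eval_add,
        Polynomial.eval_mul, Polynomial.eval_C, Polynomial.eval_X, Pi.add_apply, Pi.smul_apply,
        smul_eq_mul]
      ring
  have h2 := hev 0
  rw [zero_smul, add_zero] at h2
  rw [← hev t, ← h2, Polynomial.eq_C_of_natDegree_eq_zero hc]
  simp

lemma pderiv_comm' {p : ℕ} (i j : Fin 3) (G : MvPolynomial (Fin 3) (ZMod p)) :
    pderiv i (pderiv j G) = pderiv j (pderiv i G) := by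
  have h : ⁅pderiv (R := ZMod p) i, pderiv j⁆ = (0 : Derivation (ZMod p) (MvPolynomial (Fin 3) (ZMod p)) _) := by
    apply MvPolynomial.derivation_ext
    intro k
    rw [Derivation.commutator_apply]
    simp only [pderiv_X, Pi.single_apply]
    split_ifs <;> simp
  have := congrArg (fun D : Derivation (ZMod p) (MvPolynomial (Fin 3) (ZMod p)) (MvPolynomial (Fin 3) (ZMod p)) => D G) h
  simp only [Derivation.commutator_apply, Derivation.coe_zero, Pi.zero_apply] at this
  exact sub_eq_zero.1 this

lemma polar_ne_zero {p : ℕ} [Fact p.Prime] {F : MvPolynomial (Fin 3) (ZMod p)} {d : ℕ} (hd : 3 ≤ d)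
    (hF : F.IsHomogeneous d) (hirr : Irreducible F) (hdp : d < p)
    (P : Fin 3 → ZMod p) (hP : P ≠ 0) (Q : Fin 3 → ZMod p) (hQ0 : Q ≠ 0) (hQ : eval Q F = 0)
    (i : Fin 3) (hi : eval Q (pderiv i F) ≠ 0) :
    ∑ i, C (P i) * pderiv i F ≠ 0 := by
  classical
  intro h0
  have hsF := shift_const hF hdp P h0 Q
  have hs1 : ∀ t : ZMod p, eval (Q + t • P) (pderiv i F) = eval Q (pderiv i F) := by
    intro t
    refine shift_const (hF.pderiv (i := i)) (by omega) P ?_ Q t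
    have := congrArg (pderiv i) h0
    rw [map_sum, map_zero] at this
    rw [← this]
    apply Finset.sum_congr rfl
    intro j _
    rw [pderiv_C_mul, pderiv_comm']
  have hnp : ¬ ∃ c : ZMod p, Q = c • P := by
    rintro ⟨c, hc⟩
    have h1 := hs1 (-c)
    rw [← h1] at hi
    apply hi
    rw [hc, neg_smul, add_neg_cancel]
    have h2 := eval_smul_homog (hF.pderiv (i := i)) 0 Q
    rwa [zero_smul, zero_pow (by omega), zero_mul] at h2
  have hnz : ∀ t : ZMod p, Q + t • P ≠ 0 := by
    intro t ht
    exact hnp ⟨-t, by rw [neg_smul]; exact eq_neg_of_add_eq_zero_left ht⟩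
  have hinj : ∀ t t' : ZMod p, (∃ c : ZMod p, Q + t • P = c • (Q + t' • P)) → t = t' := by
    rintro t t' ⟨c, hc⟩
    by_cases h1 : c = 1
    · subst h1
      rw [one_smul, add_right_inj] at hc
      exact smul_left_injective _ hP hc
    · exfalso
      apply hnp
      have h1' : 1 - c ≠ 0 := sub_ne_zero.2 (Ne.symm h1)
      refine ⟨(c * t' - t) / (1 - c), ?_⟩
      ext k
      have := congrFun hc k
      simp only [Pi.add_apply, Pi.smul_apply, smul_eq_mul] at this ⊢
      field_simp
      linear_combination this
  have hinj' : Function.Injective (fun t : ZMod p => Q + t • P) := by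
    intro t t' h
    exact hinj t t' ⟨1, by simpa using h⟩
  have hbr : ∀ R, ∃ x, (∃ t : ZMod p, R = Q + t • P) → IsBranch F R x := by
    intro R
    by_cases h : ∃ t : ZMod p, R = Q + t • P
    · obtain ⟨t, rfl⟩ := h
      obtain ⟨x, hx⟩ := exists_branch hF (Q + t • P) (hnz t) (by rw [hsF, hQ]) i (by rw [hs1]; exact hi)
      exact ⟨x, fun _ => hx⟩
    · exact ⟨0, fun h' => absurd h' h⟩
  choose x hx using hbr
  obtain ⟨j, k, hjk⟩ : ∃ j k, Q j * P k - Q k * P j ≠ 0 := by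
    by_contra! hc
    apply hnp
    obtain ⟨j, hj⟩ := Function.ne_iff.1 hP
    simp only [Pi.zero_apply] at hj
    refine ⟨Q j / P j, ?_⟩
    ext k
    have := hc j k
    simp only [Pi.smul_apply, smul_eq_mul]
    field_simp
    linear_combination -this
  set ℓ : Fin 3 → ZMod p := ![Q 1 * P 2 - Q 2 * P 1, Q 2 * P 0 - Q 0 * P 2, Q 0 * P 1 - Q 1 * P 0] with hℓ
  have hℓ0 : linF ℓ ≠ 0 := by
    intro h
    have hz : ∀ m, ℓ m = 0 := by
      intro m
      have := congrArg (eval (Pi.single m (1 : ZMod p))) h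
      simpa [linF, Pi.single_apply] using this
    have z0 := hz 0
    have z1 := hz 1
    have z2 := hz 2
    simp only [hℓ, Matrix.cons_val_zero, Matrix.cons_val_one, Matrix.cons_val] at z0 z1 z2
    apply hjk
    have key : ∀ j k : Fin 3, Q j * P k - Q k * P j = 0 := by
      intro j k
      match j, k with
      | 0, 0 => ring
      | 1, 1 => ring
      | 2, 2 => ring
      | 0, 1 => linear_combination z2
      | 1, 0 => linear_combination -z2
      | 0, 2 => linear_combination -z1
      | 2, 0 => linear_combination z1
      | 1, 2 => linear_combination z0
      | 2, 1 => linear_combination -z0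
    exact key j k
  have hb := bezout_simple (by omega) hF hirr (Finset.univ.image (fun t : ZMod p => Q + t • P)) x
    (by
      intro R hR
      obtain ⟨t, -, rfl⟩ := Finset.mem_image.1 hR
      exact hx _ ⟨t, rfl⟩)
    (by
      intro R hR R' hR' hne
      obtain ⟨t, -, rfl⟩ := Finset.mem_image.1 hR
      obtain ⟨t', -, rfl⟩ := Finset.mem_image.1 hR'
      refine sep_of_not_prop _ _ (hnz t') ?_
      intro h
      apply hne
      simp only [hinj t t' h])
    (by
      intro R hR
      obtain ⟨t, -, rfl⟩ := Finset.mem_image.1 hR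
      exact hnz t)
    (fun _ => 1) (linF ℓ) 1 (linF_homog ℓ)
    (not_dvd_of_deg hF hirr.ne_zero (linF_homog ℓ) hℓ0 (by omega))
    (by
      intro R hR
      obtain ⟨t, -, rfl⟩ := Finset.mem_image.1 hR
      rw [pow_one, PowerSeries.X_dvd_iff, cc_linF]
      simp only [(hx _ ⟨t, rfl⟩).cc]
      simp [Fin.sum_univ_three, hℓ]
      ring)
  rw [Finset.sum_const, Finset.card_image_of_injective _ hinj', Finset.card_univ, ZMod.card] at hb
  simp at hb
  omega

end Final

theorem low_degree_not_tangent_filling_over_prime_field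
    (p : ℕ) [Fact p.Prime] (d : ℕ) (hd : 3 ≤ d)
    (F : MvPolynomial (Fin 3) (ZMod p)) (hF : F.IsHomogeneous d)
    (hirr : Irreducible F)
    (hp : 4 * (d - 1) ^ 2 * (d - 2) ^ 2 ≤ p) :
    ¬ TangentFilling F := by
  classical
  intro hT
  obtain ⟨δ, hδ⟩ : ∃ δ, d = δ + 3 := ⟨d - 3, by omega⟩
  have hddp : (d - 1) * d < p := by
    subst hδ
    rw [show δ + 3 - 1 = δ + 2 by omega, show δ + 3 - 2 = δ + 1 by omega] at *
    nlinarith [Nat.zero_le δ, Nat.zero_le (δ^2), Nat.zero_le (δ^3), Nat.zero_le (δ^4)]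
  have hdp : d < p := by
    refine lt_of_le_of_lt ?_ hddp
    exact Nat.le_mul_of_pos_left d (by omega)
  have hp2 : p ≠ 2 := by omega
  set s : Finset (Fin 3 → ZMod p) := Finset.univ.filter (fun Q => SmoothPoint F Q ∧
    ∃ h : Q ≠ 0, (Projectivization.mk (ZMod p) Q h).rep = Q) with hs
  have hmem : ∀ Q, Q ∈ s ↔ SmoothPoint F Q ∧
    ∃ h : Q ≠ 0, (Projectivization.mk (ZMod p) Q h).rep = Q := by simp [hs]
  have hcov : ∀ P : Fin 3 → ZMod p, P ≠ 0 → ∃ Q ∈ s, ∑ i, eval Q (pderiv i F) * P i = 0 := by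
    intro P hP
    obtain ⟨Q, ⟨hQ0, hQF, i, hi⟩, ht⟩ := hT P hP
    obtain ⟨a, ha⟩ := Projectivization.exists_smul_eq_mk_rep (ZMod p) Q hQ0
    have ha0 : (a : ZMod p) ≠ 0 := a.ne_zero
    rw [Units.smul_def] at ha
    have hR0 : (a : ZMod p) • Q ≠ 0 := smul_ne_zero ha0 hQ0
    refine ⟨(a : ZMod p) • Q, (hmem _).2 ⟨⟨hR0, ?_, i, ?_⟩, hR0, ?_⟩, ?_⟩
    · rw [eval_smul_homog hF, hQF, mul_zero]
    · rw [eval_smul_homog (hF.pderiv (i := i))]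
      exact mul_ne_zero (pow_ne_zero _ ha0) hi
    · have : Projectivization.mk (ZMod p) ((a : ZMod p) • Q) hR0 = Projectivization.mk (ZMod p) Q hQ0 :=
        (Projectivization.mk_eq_mk_iff' _ _ _ _ _).2 ⟨a, rfl⟩
      rw [this, ← ha]
    · simp only [fun i => eval_smul_homog (hF.pderiv (i := i)) (a : ZMod p) Q, Fin.sum_univ_three]
      unfold OnTangentLine at ht
      linear_combination ((a : ZMod p) ^ (d - 1)) * ht
  have hsm : ∀ Q ∈ s, ∃ i, eval Q (pderiv i F) ≠ 0 := fun Q hQ => ((hmem Q).1 hQ).1.2.2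
  have hs0 : ∀ Q ∈ s, Q ≠ 0 := fun Q hQ => ((hmem Q).1 hQ).1.1
  have hbr : ∀ Q, ∃ x, Q ∈ s → IsBranch F Q x := by
    intro Q
    by_cases h : Q ∈ s
    · obtain ⟨⟨hQ0, hQF, i, hi⟩, -⟩ := (hmem Q).1 h
      obtain ⟨x, hx⟩ := exists_branch hF Q hQ0 hQF i hi
      exact ⟨x, fun _ => hx⟩
    · exact ⟨0, fun h' => absurd h' h⟩
  choose x hx using hbr
  have hsep : ∀ Q ∈ s, ∀ Q' ∈ s, Q' ≠ Q →
      ∃ c : Fin 3 → ZMod p, ∑ i, c i * Q' i = 0 ∧ ∑ i, c i * Q i ≠ 0 := by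
    intro Q hQ Q' hQ' hne
    refine sep_of_not_prop Q Q' (hs0 Q' hQ') ?_
    rintro ⟨c, hc⟩
    obtain ⟨-, h1, h2⟩ := (hmem Q).1 hQ
    obtain ⟨-, h1', h2'⟩ := (hmem Q').1 hQ'
    apply hne
    rw [← h2, ← h2', (Projectivization.mk_eq_mk_iff' (ZMod p) Q Q' h1 h1').2 ⟨c, hc.symm⟩]
  obtain ⟨P1, hP1, -⟩ := hcov (fun _ => 1) (by
    intro h; simpa using congrFun h 0)
  have hup := sv_bound hd hF hirr hp s x (fun Q hQ => hx Q hQ) hsm hsep hs0 P1 hP1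
  have hL : ∀ Q P : Fin 3 → ZMod p,
      (∑ i, eval Q (pderiv i F) • (LinearMap.proj i : (Fin 3 → ZMod p) →ₗ[ZMod p] ZMod p)) P
        = ∑ i, eval Q (pderiv i F) * P i := by
    intro Q P; simp [LinearMap.sum_apply]
  have hlow := blokhuis hp2 (fun Q : Fin 3 → ZMod p =>
      ∑ i, eval Q (pderiv i F) • (LinearMap.proj i : (Fin 3 → ZMod p) →ₗ[ZMod p] ZMod p)) s
    (by
      intro Q hQ h0
      obtain ⟨i, hi⟩ := hsm Q hQ
      apply hi
      have := hL Q (Pi.single i 1)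
      beta_reduce at h0
      rw [h0] at this
      simpa [Pi.single_apply] using this.symm)
    (by
      intro P hP
      obtain ⟨Q, hQ, h⟩ := hcov P hP
      exact ⟨Q, hQ, (hL Q P).trans h⟩)
    (by
      intro P hP
      obtain ⟨i, hi⟩ := hsm P1 hP1
      have hne := polar_ne_zero hd hF hirr hdp P hP P1 (hs0 P1 hP1) ((hmem P1).1 hP1).1.2.1 i hi
      have hGh : (∑ i, C (P i) * pderiv i F).IsHomogeneous (d - 1) := by
        apply IsHomogeneous.sum
        intro i _
        exact (hF.pderiv (i := i)).C_mul _
      have hb := bezout_simple (by omega) hF hirr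
        (s.filter (fun Q => (∑ i, eval Q (pderiv i F) •
          (LinearMap.proj i : (Fin 3 → ZMod p) →ₗ[ZMod p] ZMod p)) P = 0)) x
        (fun Q hQ => hx Q (Finset.mem_filter.1 hQ).1)
        (fun Q hQ Q' hQ' => hsep Q (Finset.mem_filter.1 hQ).1 Q' (Finset.mem_filter.1 hQ').1)
        (fun Q hQ => hs0 Q (Finset.mem_filter.1 hQ).1)
        (fun _ => 1) _ (d - 1) hGh (not_dvd_of_deg hF hirr.ne_zero hGh hne (by omega))
        (by
          intro Q hQ
          obtain ⟨hQs, hQP⟩ := Finset.mem_filter.1 hQ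
          rw [hL] at hQP
          rw [pow_one, PowerSeries.X_dvd_iff, cc_aeval (x Q) Q (hx Q hQs).cc, map_sum, ← hQP]
          apply Finset.sum_congr rfl
          intro i _
          rw [map_mul, eval_C, mul_comm])
      rw [Finset.sum_const, smul_eq_mul, mul_one] at hb
      exact lt_of_le_of_lt hb hddp)
  omega
end

section
/- Let C ⊂ ℙ² be a plane curve of degree d ≥ 2 over a finite field 𝔽_q of characteristic p, defined by a homogeneous polynomial F ∈ 𝔽_q[x,y,z] of degree d that is irreducible over the algebraic closure of 𝔽_q. If p > d, then the set of bitangent lines of C (lines in ℙ² over the algebraic closure that are tangent to C at two or more distinct smooth points) is finite and has cardinality at most (1/2)·d²·(d-1)². -/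
open MvPolynomial

/-- The coefficient vector of the tangent line to the curve `{F = 0}` at the point with
coordinates `Q`, namely the gradient of `F` at `Q`. -/
noncomputable def tangentVec {K : Type*} [CommRing K] (F : MvPolynomial (Fin 3) K) (Q : Fin 3 → K) :
    Fin 3 → K :=
  fun i => eval Q (pderiv i F)

/-- The line of the projective plane whose coefficient vector is (a representative of) `L`
is bitangent to the curve `{F = 0}`: it is the tangent line of `F` at two distinct smooth
points. Lines are regarded as points of the dual projective plane, i.e. elements of the
projectivization of `K³`. -/
def IsBitangent {K : Type*} [Field K] (F : MvPolynomial (Fin 3) K)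
    (L : Projectivization K (Fin 3 → K)) : Prop :=
  ∃ (Q₁ Q₂ : Fin 3 → K) (h₁ : SmoothPoint F Q₁) (h₂ : SmoothPoint F Q₂),
    Projectivization.mk K Q₁ h₁.1 ≠ Projectivization.mk K Q₂ h₂.1 ∧
    ∃ (hv₁ : tangentVec F Q₁ ≠ 0) (hv₂ : tangentVec F Q₂ ≠ 0),
      L = Projectivization.mk K (tangentVec F Q₁) hv₁ ∧
      L = Projectivization.mk K (tangentVec F Q₂) hv₂


namespace BT

open Module

section Dim
variable {k : Type*} [Field k]

instance homFinite (n : ℕ) : Module.Finite k (homogeneousSubmodule (Fin 3) k n) :=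
  Module.Finite.of_fg (homogeneousSubmodule_fg (Fin 3) k n)

lemma two_finrank_hom (n : ℕ) :
    2 * finrank k (homogeneousSubmodule (Fin 3) k n) = (n + 1) * (n + 2) := by
  have h1 : finrank k (homogeneousSubmodule (Fin 3) k n) = (n + 2).choose 2 := by
    rw [homogeneousSubmodule_eq_finsupp_supported]
    rw [(AddMonoidAlgebra.supportedEquivFinsupp (R := k) (S := k)
      {d : Fin 3 →₀ ℕ | d.degree = n}).finrank_eq]
    have hs : {d : Fin 3 →₀ ℕ | d.degree = n} =
        ((Finset.univ : Finset (Fin 3)).finsuppAntidiag n : Set (Fin 3 →₀ ℕ)) := by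
      ext d
      simp [Finset.mem_finsuppAntidiag, Finsupp.degree_eq_sum]
    rw [hs]
    rw [Module.finrank_finsupp_self]
    simp only [Finset.coe_sort_coe, Fintype.card_coe, Finset.card_finsuppAntidiag_nat_eq_choose]
    simp only [Finset.card_univ, Fintype.card_fin]
    rw [show 3 + n - 1 = n + 2 by omega, ← Nat.choose_symm (by omega)]
    congr 1
    omega
  rw [h1, Nat.choose_two_right]
  have := Nat.even_mul_pred_self (n + 2)
  rw [Nat.mul_div_cancel' this.two_dvd, show n + 2 - 1 = n + 1 by omega]
  ring

/-- homogeneous degree `m` multiples of `G`. -/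
noncomputable def mulSub (G : MvPolynomial (Fin 3) k) (m : ℕ) :
    Submodule k (MvPolynomial (Fin 3) k) :=
  (homogeneousSubmodule (Fin 3) k m).map (LinearMap.mulLeft k G)

instance mulSubFinite (G : MvPolynomial (Fin 3) k) (m : ℕ) : Module.Finite k (mulSub G m) := by
  unfold mulSub; infer_instance

lemma mem_mulSub {G f : MvPolynomial (Fin 3) k} {m : ℕ} :
    f ∈ mulSub G m ↔ ∃ a : MvPolynomial (Fin 3) k, a.IsHomogeneous m ∧ G * a = f := by
  simp [mulSub, Submodule.mem_map]

lemma finrank_mulSub {G : MvPolynomial (Fin 3) k} (hG : G ≠ 0) (m : ℕ) :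
    2 * finrank k (mulSub G m) = (m + 1) * (m + 2) := by
  rw [← two_finrank_hom (k := k) m]
  congr 1
  have hinj : Function.Injective (LinearMap.mulLeft k G) := fun a b h => by
    simpa [hG] using h
  exact ((Submodule.equivMapOfInjective _ hinj _).finrank_eq).symm

end Dim

end BT

namespace BT

open Module

section Hom
variable {k : Type*} [Field k]

lemma hcomp_hom_mul {G : MvPolynomial (Fin 3) k} {g : ℕ} (hG : G.IsHomogeneous g)
    (c : MvPolynomial (Fin 3) k) (m : ℕ) :
    homogeneousComponent m (G * c) =
      if g ≤ m then G * homogeneousComponent (m - g) c else 0 := by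
  have h1 : ∀ i, homogeneousComponent m (G * homogeneousComponent i c) =
      if m = g + i then G * homogeneousComponent i c else 0 := fun i =>
    homogeneousComponent_of_mem (hG.mul (homogeneousComponent_isHomogeneous i c))
  conv_lhs => rw [← sum_homogeneousComponent c, Finset.mul_sum, map_sum]
  rw [Finset.sum_congr rfl (fun i _ => h1 i)]
  split_ifs with hgm
  · by_cases hr : m - g ∈ Finset.range (c.totalDegree + 1)
    · rw [Finset.sum_eq_single (m - g)]
      · rw [if_pos (by omega)]
      · intro b _ hb
        rw [if_neg (by omega)]
      · intro h; exact absurd hr h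
    · rw [homogeneousComponent_eq_zero (m - g) c (by simp at hr; omega), mul_zero]
      apply Finset.sum_eq_zero
      intro i hi
      rw [if_neg]
      rintro rfl
      apply hr
      simpa using hi
  · apply Finset.sum_eq_zero
    intro i _
    rw [if_neg (by omega)]

lemma hcomp_top_mul (a b : MvPolynomial (Fin 3) k) :
    homogeneousComponent (a.totalDegree + b.totalDegree) (a * b) =
      homogeneousComponent a.totalDegree a * homogeneousComponent b.totalDegree b := by
  conv_lhs => rw [← sum_homogeneousComponent a, Finset.sum_mul, map_sum]
  rw [sum_homogeneousComponent a]
  rw [Finset.sum_congr rfl (fun i _ =>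
    hcomp_hom_mul (homogeneousComponent_isHomogeneous i a) b _)]
  rw [Finset.sum_eq_single a.totalDegree]
  · simp
  · intro i hi hia
    have : i < a.totalDegree + 1 := by simpa using hi
    rw [if_pos (by omega), homogeneousComponent_eq_zero _ b (by omega), mul_zero]
  · intro h; simp at h

lemma hom_cofactor {G c : MvPolynomial (Fin 3) k} {g m : ℕ} (hG : G.IsHomogeneous g)
    (hm : (G * c).IsHomogeneous m) (hne : G * c ≠ 0) :
    g ≤ m ∧ c.IsHomogeneous (m - g) := by
  have h := hcomp_hom_mul hG c m
  rw [homogeneousComponent_eq_self hm] at h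
  split_ifs at h with hgm
  · refine ⟨hgm, ?_⟩
    have hG0 : G ≠ 0 := left_ne_zero_of_mul hne
    rw [mul_left_cancel₀ hG0 h]
    exact homogeneousComponent_isHomogeneous _ _
  · exact absurd h hne

lemma bezout_dim {G H : MvPolynomial (Fin 3) k} {g h n : ℕ} (hG : G.IsHomogeneous g)
    (hGp : Prime G) (hnd : ¬ G ∣ H) (hn : g + h ≤ n)
    (V : Submodule k (MvPolynomial (Fin 3) k)) (hV : V ≤ homogeneousSubmodule (Fin 3) k n)
    (h1 : mulSub G (n - g) ≤ V) (h2 : mulSub H (n - h) ≤ V) :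
    finrank k (homogeneousSubmodule (Fin 3) k n) ≤ finrank k V + g * h := by
  have hVf : Module.Finite k V := Submodule.finiteDimensional_of_le hV
  have hH0 : H ≠ 0 := fun h0 => hnd (h0 ▸ dvd_zero G)
  have e1 := Submodule.finrank_sup_add_finrank_inf_eq (mulSub G (n - g)) (mulSub H (n - h))
  have e2 : finrank k ↥(mulSub G (n - g) ⊔ mulSub H (n - h)) ≤ finrank k V :=
    Submodule.finrank_mono (sup_le h1 h2)
  have e3 : mulSub G (n - g) ⊓ mulSub H (n - h) ≤ mulSub (G * H) (n - g - h) := by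
    rintro f ⟨hf1, hf2⟩
    obtain ⟨a, ha, haf⟩ := mem_mulSub.1 hf1
    obtain ⟨b, hb, hbf⟩ := mem_mulSub.1 hf2
    by_cases hf0 : f = 0
    · rw [hf0]; exact Submodule.zero_mem _
    have : G ∣ H * b := ⟨a, by rw [hbf, haf]⟩
    obtain ⟨c, rfl⟩ := (hGp.dvd_or_dvd this).resolve_left hnd
    have hc0 : G * c ≠ 0 := by
      intro h0; rw [h0] at hbf; simp at hbf; exact hf0 hbf.symm
    have := (hom_cofactor hG hb hc0).2
    rw [show n - h - g = n - g - h by omega] at this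
    exact mem_mulSub.2 ⟨c, this, by rw [← hbf]; ring⟩
  have e4 := Submodule.finrank_mono e3
  have f1 := finrank_mulSub hGp.ne_zero (n - g)
  have f2 := finrank_mulSub hH0 (n - h)
  have f3 := finrank_mulSub (mul_ne_zero hGp.ne_zero hH0) (n - g - h)
  have f4 := two_finrank_hom (k := k) n
  obtain ⟨r, rfl⟩ := Nat.exists_eq_add_of_le hn
  rw [show g + h + r - g = h + r by omega] at *
  rw [show g + h + r - h = g + r by omega] at *
  rw [show h + r - h = r by omega] at *
  nlinarith

end Hom

end BT

namespace BT

open Module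

section Points
variable {k : Type*} [Field k]

/-- the linear form with coefficient vector `a`. -/
noncomputable def lin (a : Fin 3 → k) : MvPolynomial (Fin 3) k := ∑ i, C (a i) * X i

lemma lin_hom (a : Fin 3 → k) : (lin a).IsHomogeneous 1 :=
  IsHomogeneous.sum _ _ _ fun i _ => isHomogeneous_C_mul_X _ _

lemma eval_lin (a P : Fin 3 → k) : eval P (lin a) = ∑ i, a i * P i := by
  simp [lin]

lemma pderiv_lin (a : Fin 3 → k) (i : Fin 3) : pderiv i (lin a) = C (a i) := by
  fin_cases i <;> simp [lin, Fin.sum_univ_three, pderiv_X, Pi.single_apply]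

/-- directional derivative of `f` at `P` in direction `w`. -/
noncomputable def dd (P w : Fin 3 → k) : MvPolynomial (Fin 3) k →ₗ[k] k where
  toFun f := ∑ i, w i * eval P (pderiv i f)
  map_add' f g := by simp [mul_add, Finset.sum_add_distrib]
  map_smul' c f := by simp [smul_eval, Finset.mul_sum, mul_left_comm]

lemma dd_mul (P w : Fin 3 → k) (f g : MvPolynomial (Fin 3) k) :
    dd P w (f * g) = dd P w f * eval P g + eval P f * dd P w g := by
  simp only [dd, LinearMap.coe_mk, AddHom.coe_mk, pderiv_mul, map_add, map_mul, Fin.sum_univ_three]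
  ring

lemma dd_lin (P w a : Fin 3 → k) : dd P w (lin a) = ∑ i, a i * w i := by
  simp [dd, pderiv_lin, mul_comm]

lemma exists_lin {P w : Fin 3 → k} (h : LinearIndependent k ![P, w]) (α β : k) :
    ∃ a : Fin 3 → k, (∑ i, a i * P i = α) ∧ (∑ i, a i * w i = β) := by
  obtain ⟨q, hq⟩ := LinearMap.exists_leftInverse_of_injective
    (Finsupp.linearCombination k ![P, w]) (by
      rw [LinearMap.ker_eq_bot]; exact h)
  let f : (Fin 3 → k) →ₗ[k] k := (Finsupp.linearCombination k ![α, β]).comp q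
  have hP : f P = α := by
    have := LinearMap.congr_fun hq (Finsupp.single 0 1)
    simp at this
    simp [f, this]
  have hw : f w = β := by
    have := LinearMap.congr_fun hq (Finsupp.single 1 1)
    simp at this
    simp [f, this]
  refine ⟨fun i => f (fun j => if i = j then 1 else 0), ?_, ?_⟩
  · rw [← hP, LinearMap.pi_apply_eq_sum_univ f P]
    simp [mul_comm]
  · rw [← hw, LinearMap.pi_apply_eq_sum_univ f w]
    simp [mul_comm]

lemma exists_dir {P : Fin 3 → k} (hP : P ≠ 0) (c : Fin 3 → k) :
    ∃ w : Fin 3 → k, LinearIndependent k ![P, w] ∧ ∑ i, w i * c i = 0 := by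
  let f : (Fin 3 → k) →ₗ[k] k := ∑ i, (c i) • LinearMap.proj i
  have h1 := LinearMap.finrank_range_add_finrank_ker f
  have h2 : finrank k (LinearMap.range f) ≤ 1 := by
    simpa using Submodule.finrank_le (LinearMap.range f)
  have h3 : finrank k (Submodule.span k {P}) = 1 := finrank_span_singleton hP
  have h4 : ¬ LinearMap.ker f ≤ Submodule.span k {P} := by
    intro h
    have := Submodule.finrank_mono h
    simp at h1
    omega
  obtain ⟨w, hw, hwP⟩ := SetLike.not_le_iff_exists.1 h4
  refine ⟨w, ?_, ?_⟩
  · rw [LinearIndependent.pair_iff' hP]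
    intro a ha
    exact hwP (Submodule.mem_span_singleton.2 ⟨a, ha⟩)
  · simpa [f, mul_comm] using hw

lemma points_bound {G H : MvPolynomial (Fin 3) k} {g h : ℕ} (hG : G.IsHomogeneous g)
    (hH : H.IsHomogeneous h) (hGp : Prime G) (hnd : ¬ G ∣ H)
    {ι : Type*} [Fintype ι] (P : ι → Fin 3 → k) (hP0 : ∀ i, P i ≠ 0)
    (hP : ∀ i j, i ≠ j → LinearIndependent k ![P i, P j])
    (hPG : ∀ i, eval (P i) G = 0) (hPdG : ∀ i j, eval (P i) (pderiv j G) = 0)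
    (hPH : ∀ i, eval (P i) H = 0) : 2 * Fintype.card ι ≤ g * h := by
  classical
  choose w hw hwH using fun i => exists_dir (hP0 i) (fun j => eval (P i) (pderiv j H))
  let Ψ : MvPolynomial (Fin 3) k →ₗ[k] (ι → k × k) :=
    LinearMap.pi fun i => ((aeval (P i)).toLinearMap : MvPolynomial (Fin 3) k →ₗ[k] k).prod
      (dd (P i) (w i))
  have hΨ : ∀ f i, Ψ f i = (eval (P i) f, dd (P i) (w i) f) := by
    intro f i
    simp [Ψ, aeval_eq_eval]
  set s := Fintype.card ι with hs
  set n := 2 * s + g + h + 1 with hn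
  let Φ := Ψ.domRestrict (homogeneousSubmodule (Fin 3) k n)
  have hsingle : ∀ (i : ι) (y : k × k), ∃ f : MvPolynomial (Fin 3) k,
      f.IsHomogeneous n ∧ Ψ f = Pi.single i y := by
    rintro i ⟨α, β⟩
    have hl : ∀ j, ∃ a : Fin 3 → k, i ≠ j →
        (∑ t, a t * P i t = 1) ∧ (∑ t, a t * P j t = 0) := by
      intro j
      by_cases hij : i = j
      · exact ⟨0, fun h => absurd hij h⟩
      · obtain ⟨a, ha⟩ := exists_lin (hP i j hij) 1 0
        exact ⟨a, fun _ => ha⟩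
    choose l hl using hl
    obtain ⟨m, hm, -⟩ := exists_lin (hw i) 1 0
    set r := n - 1 - 2 * (s - 1) with hr
    let Z : MvPolynomial (Fin 3) k := ∏ j ∈ Finset.univ.erase i, (lin (l j)) ^ 2
    let B : MvPolynomial (Fin 3) k := (lin m) ^ r * Z
    have hspos : 0 < s := Fintype.card_pos_iff.2 ⟨i⟩
    have hBh : B.IsHomogeneous (n - 1) := by
      have h1 : Z.IsHomogeneous (∑ j ∈ Finset.univ.erase i, 1 * 2) :=
        IsHomogeneous.prod _ _ _ fun j _ => (lin_hom _).pow 2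
      have h2 := ((lin_hom m).pow r).mul h1
      have : 1 * r + ∑ j ∈ Finset.univ.erase i, 1 * 2 = n - 1 := by
        simp [Finset.card_erase_of_mem, ← hs]
        omega
      rw [this] at h2
      exact h2
    have hBi : eval (P i) B = 1 := by
      simp only [B, Z, map_mul, map_pow, map_prod, eval_lin, hm, one_pow, one_mul]
      apply Finset.prod_eq_one
      intro j hj
      rw [(hl j (Finset.ne_of_mem_erase hj).symm).1, one_pow]
    obtain ⟨a, ha1, ha2⟩ := exists_lin (hw i) α (β - dd (P i) (w i) B * α)
    refine ⟨B * lin a, ?_, ?_⟩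
    · have := hBh.mul (lin_hom a)
      rwa [show n - 1 + 1 = n by omega] at this
    · funext j
      rw [hΨ]
      by_cases hij : i = j
      · subst hij
        rw [Pi.single_eq_same, dd_mul, map_mul, hBi, eval_lin, ha1, dd_lin, ha2]
        ext <;> simp
      · rw [Pi.single_eq_of_ne (Ne.symm hij)]
        have hjm : j ∈ Finset.univ.erase i := by simp [Ne.symm hij]
        have : B * lin a = lin (l j) * (lin (l j) *
            ((lin m) ^ r * (∏ t ∈ (Finset.univ.erase i).erase j, (lin (l t)) ^ 2) * lin a)) := by
          simp only [B, Z]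
          rw [← Finset.mul_prod_erase _ _ hjm]
          ring
        have h0 : eval (P j) (lin (l j)) = 0 := by rw [eval_lin, (hl j hij).2]
        rw [this, dd_mul, map_mul, map_mul, h0]
        simp
  have hsurj : LinearMap.range Φ = ⊤ := by
    rw [eq_top_iff]
    intro y _
    rw [← Finset.univ_sum_single y]
    refine Submodule.sum_mem _ fun i _ => ?_
    obtain ⟨f, hf, hfy⟩ := hsingle i (y i)
    exact ⟨⟨f, hf⟩, hfy⟩
  have hrk := LinearMap.finrank_range_add_finrank_ker Φ
  rw [hsurj, finrank_top] at hrk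
  have hfr : finrank k (ι → k × k) = 2 * s := by
    rw [Module.finrank_pi_fintype]
    simp [hs, mul_comm]
  rw [hfr] at hrk
  have hker : ∀ f, f.IsHomogeneous n → Ψ f = 0 → f ∈
      (LinearMap.ker Φ).map (homogeneousSubmodule (Fin 3) k n).subtype := by
    intro f hf h0
    exact ⟨⟨f, hf⟩, h0, rfl⟩
  have hb := bezout_dim (n := n) hG hGp hnd (h := h) (by omega)
    ((LinearMap.ker Φ).map (homogeneousSubmodule (Fin 3) k n).subtype)
    (Submodule.map_subtype_le _ _) (by
      intro f hf
      obtain ⟨a, ha, rfl⟩ := mem_mulSub.1 hf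
      apply hker
      · have := hG.mul ha
        rwa [show g + (n - g) = n by omega] at this
      · funext i
        rw [hΨ, dd_mul, map_mul, hPG]
        simp [dd, hPdG]) (by
      intro f hf
      obtain ⟨a, ha, rfl⟩ := mem_mulSub.1 hf
      apply hker
      · have := hH.mul ha
        rwa [show h + (n - h) = n by omega] at this
      · funext i
        rw [hΨ, dd_mul, map_mul, hPH]
        have : dd (P i) (w i) H = 0 := hwH i
        simp [this])
  rw [Submodule.finrank_map_subtype_eq] at hb
  omega

end Points

end BT

namespace BT

open Module

section Nondeg
variable {k : Type*} [Field k]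

lemma eval_smul_hom {f : MvPolynomial (Fin 3) k} {n : ℕ} (hf : f.IsHomogeneous n) (c : k)
    (Q : Fin 3 → k) : eval (c • Q) f = c ^ n * eval Q f := by
  rw [eval_eq', eval_eq', Finset.mul_sum]
  refine Finset.sum_congr rfl fun m hm => ?_
  have h1 : ∑ i, m i = n := by
    have := hf (mem_support_iff.1 hm)
    simpa [Finsupp.weight_apply, Finsupp.sum_fintype] using this
  simp only [Pi.smul_apply, smul_eq_mul, mul_pow, Finset.prod_mul_distrib]
  rw [Finset.prod_pow_eq_pow_sum, h1]
  ring

lemma chain {A : Type*} [CommRing A] [Algebra k A] (δ : Derivation k A A)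
    (τ : MvPolynomial (Fin 3) k →ₐ[k] A) (f : MvPolynomial (Fin 3) k) :
    δ (τ f) = ∑ i, τ (pderiv i f) * δ (τ (X i)) := by
  induction f using MvPolynomial.induction_on with
  | C a =>
    have : (C a : MvPolynomial (Fin 3) k) = algebraMap k _ a := rfl
    simp only [pderiv_C, map_zero, zero_mul, Finset.sum_const_zero]
    rw [this, AlgHom.commutes, Derivation.map_algebraMap]
  | add p q hp hq =>
    simp only [map_add, hp, hq, add_mul, Finset.sum_add_distrib]
  | mul_X p j hp =>
    rw [map_mul, Derivation.leibniz, hp]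
    simp only [pderiv_mul, map_add, map_mul, add_mul, Finset.sum_add_distrib, smul_eq_mul]
    rw [add_comm]
    congr 1
    · rw [Finset.mul_sum]
      exact Finset.sum_congr rfl fun i _ => by ring
    · rw [Finset.sum_eq_single j]
      · simp
      · intro b _ hb
        rw [pderiv_X_of_ne (Ne.symm hb)]
        simp
      · simp

/-- apply a derivation to the coefficients. -/
noncomputable def cderiv {S : Type*} [CommRing S] [Algebra k S] (D : Derivation k S S) :
    Derivation k (Polynomial S) (Polynomial S) :=
  Derivation.mk' 
    { toFun := fun p => PolynomialModule.equivPolynomialSelf (D.mapCoeffs p)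
      map_add' := fun p q => by rw [map_add, map_add]
      map_smul' := fun c p => by
        ext n
        change D (Polynomial.coeff (c • p) n) = (c • (PolynomialModule.equivPolynomialSelf (D.mapCoeffs p))).coeff n
        rw [Polynomial.coeff_smul, Polynomial.coeff_smul, Derivation.map_smul]
        rfl }
    (fun p q => by
      simp only [LinearMap.coe_mk, AddHom.coe_mk]
      rw [Derivation.leibniz, map_add, map_smul, map_smul])

lemma coeff_cderiv {S : Type*} [CommRing S] [Algebra k S] (D : Derivation k S S)
    (p : Polynomial S) (n : ℕ) : (cderiv D p).coeff n = D (p.coeff n) := rfl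

lemma cderiv_C {S : Type*} [CommRing S] [Algebra k S] (D : Derivation k S S) (a : S) :
    cderiv D (Polynomial.C a) = Polynomial.C (D a) := by
  ext n
  rw [coeff_cderiv, Polynomial.coeff_C, Polynomial.coeff_C]
  split_ifs <;> simp

lemma cderiv_X {S : Type*} [CommRing S] [Algebra k S] (D : Derivation k S S) :
    cderiv D (Polynomial.X : Polynomial S) = 0 := by
  ext n
  rw [coeff_cderiv, Polynomial.coeff_X]
  split_ifs <;> simp

lemma nullst [IsAlgClosed k] {p q : MvPolynomial (Fin 3) k} (hp : Prime p)
    (h : ∀ Q : Fin 3 → k, eval Q p = 0 → eval Q q = 0) : p ∣ q := by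
  have hP : (Ideal.span {p}).IsPrime := (Ideal.span_singleton_prime hp.ne_zero).2 hp
  rw [← Ideal.mem_span_singleton, ← IsPrime.vanishingIdeal_zeroLocus (K := k) (Ideal.span {p}),
    mem_vanishingIdeal_iff]
  intro Q hQ
  rw [aeval_eq_eval]
  apply h
  have := hQ p (Ideal.mem_span_singleton_self p)
  rwa [aeval_eq_eval] at this

lemma dvd_small {F f : MvPolynomial (Fin 3) k} {d m : ℕ} (hF : F.IsHomogeneous d)
    (hf : f.IsHomogeneous m) (hm : m < d) (h : F ∣ f) : f = 0 := by
  by_contra h0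
  obtain ⟨c, rfl⟩ := h
  have := (hom_cofactor hF hf h0).1
  omega

lemma natCast_ne {p : ℕ} [CharP k p] {j : ℕ} (h0 : 0 < j) (hj : j < p) : (j : k) ≠ 0 := by
  intro h
  rw [CharP.cast_eq_zero_iff k p] at h
  exact absurd (Nat.le_of_dvd h0 h) (by omega)

lemma partials_ne {F : MvPolynomial (Fin 3) k} {d p : ℕ} [CharP k p] (hF : F.IsHomogeneous d)
    (hp : Prime F) (hd : 2 ≤ d) (hdp : d < p) (h0 : pderiv 0 F = 0) (h1 : pderiv 1 F = 0) :
    False := by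
  have he := hF.sum_X_mul_pderiv
  rw [Fin.sum_univ_three, h0, h1] at he
  have hdk : (d : k) ≠ 0 := natCast_ne (p := p) (by omega) hdp
  have hdvd : F ∣ X 2 * pderiv 2 F := ⟨(d : MvPolynomial (Fin 3) k), by
    rw [mul_zero, mul_zero, zero_add, zero_add] at he
    rw [he, nsmul_eq_mul, mul_comm]⟩
  rcases hp.dvd_or_dvd hdvd with h | h
  · exact absurd (dvd_small hF (isHomogeneous_X k 2) (by omega) h) (X_ne_zero 2)
  · have h2 := dvd_small hF hF.pderiv (by omega) h
    rw [h2] at he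
    simp only [mul_zero, add_zero] at he
    have : (d : k) • F = 0 := by rw [Nat.cast_smul_eq_nsmul, ← he]
    exact (smul_ne_zero hdk hp.ne_zero) this

lemma not_dvd_X2_partial {F : MvPolynomial (Fin 3) k} {d : ℕ} (hF : F.IsHomogeneous d)
    (hp : Prime F) (hd : 2 ≤ d) {i : Fin 3} (h : pderiv i F ≠ 0) : ¬ F ∣ X 2 * pderiv i F := by
  intro hdvd
  rcases hp.dvd_or_dvd hdvd with h' | h'
  · exact absurd (dvd_small hF (isHomogeneous_X k 2) (by omega) h') (X_ne_zero 2)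
  · exact h (dvd_small hF hF.pderiv (by omega) h')

/-- the tangential derivation. -/
noncomputable def tder (F : MvPolynomial (Fin 3) k) :
    Derivation k (MvPolynomial (Fin 3) k) (MvPolynomial (Fin 3) k) :=
  pderiv 1 F • pderiv 0 - pderiv 0 F • pderiv 1

lemma tder_apply (F f : MvPolynomial (Fin 3) k) :
    tder F f = pderiv 1 F * pderiv 0 f - pderiv 0 F * pderiv 1 f := by
  simp [tder]

lemma tder_self (F : MvPolynomial (Fin 3) k) : tder F F = 0 := by
  rw [tder_apply]; ring

lemma dvd_tder {F f : MvPolynomial (Fin 3) k} (h : F ∣ f) : F ∣ tder F f := by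
  obtain ⟨c, rfl⟩ := h
  rw [Derivation.leibniz, tder_self]
  simp

/-- tangent vector field -/
noncomputable def tvec (F : MvPolynomial (Fin 3) k) : Fin 3 → MvPolynomial (Fin 3) k :=
  ![pderiv 1 F, - pderiv 0 F, 0]

lemma tder_X (F : MvPolynomial (Fin 3) k) (i : Fin 3) : tder F (X i) = tvec F i := by
  rw [tder_apply]
  fin_cases i <;> simp [tvec, pderiv_X]

/-- Taylor expansion along the tangent vector field. -/
noncomputable def taylor (F : MvPolynomial (Fin 3) k) :
    MvPolynomial (Fin 3) k →ₐ[k] Polynomial (MvPolynomial (Fin 3) k) :=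
  aeval fun i => Polynomial.C (X i) + Polynomial.X * Polynomial.C (tvec F i)

lemma taylor_step {F : MvPolynomial (Fin 3) k} {d p : ℕ} [CharP k p] (hp : Prime F)
    (hdp : d < p) (μ l : MvPolynomial (Fin 3) k) (hμ : ¬ F ∣ μ)
    (h : ∀ i, F ∣ μ * tder F (tvec F i) - l * tvec F i) (j : ℕ) (hj : j ≤ d) :
    F ∣ (taylor F F).coeff j := by
  choose ρ hρ using h
  have key : Polynomial.C μ * cderiv (tder F) (taylor F F) =
      (Polynomial.C μ + Polynomial.C l * Polynomial.X) * Polynomial.derivative (taylor F F) +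
        Polynomial.C F * (Polynomial.X * ∑ i, taylor F (pderiv i F) * Polynomial.C (ρ i)) := by
    have e1 : ∀ i, cderiv (tder F) (taylor F (X i)) =
        Polynomial.C (tvec F i) + Polynomial.X * Polynomial.C (tder F (tvec F i)) := by
      intro i
      simp only [taylor, aeval_X, map_add, Derivation.leibniz, cderiv_C, cderiv_X, tder_X]
      simp
    have e2 : ∀ i, Polynomial.derivative (taylor F (X i)) = Polynomial.C (tvec F i) := by
      intro i
      simp [taylor]
    have e3 : Polynomial.derivative (taylor F F) =
        ∑ i, taylor F (pderiv i F) * Polynomial.C (tvec F i) := by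
      have := chain ((Polynomial.derivative' (R := MvPolynomial (Fin 3) k)).restrictScalars k)
        (taylor F) F
      simp only [Derivation.restrictScalars_apply, Polynomial.derivative'_apply, e2] at this
      exact this
    rw [e3, chain, Finset.mul_sum, Finset.mul_sum, Finset.mul_sum, Finset.mul_sum,
      ← Finset.sum_add_distrib]
    refine Finset.sum_congr rfl fun i _ => ?_
    rw [e1]
    have e4 : Polynomial.C μ * Polynomial.C (tder F (tvec F i)) =
        Polynomial.C l * Polynomial.C (tvec F i) + Polynomial.C F * Polynomial.C (ρ i) := by
      rw [← Polynomial.C_mul, ← Polynomial.C_mul, ← Polynomial.C_mul, ← Polynomial.C_add, ← hρ]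
      congr 1
      ring
    linear_combination (taylor F (pderiv i F)) * Polynomial.X * e4
  induction j with
  | zero =>
    have : (taylor F F).coeff 0 = F := by
      rw [Polynomial.coeff_zero_eq_eval_zero]
      have : ((Polynomial.aeval (0 : MvPolynomial (Fin 3) k)).restrictScalars k).comp (taylor F)
          = AlgHom.id k _ := by
        ext i
        simp [taylor]
      have h2 := AlgHom.congr_fun this F
      simpa [Polynomial.coe_aeval_eq_eval] using h2
    rw [this]
  | succ j ih =>
    have ih := ih (by omega)
    have hc := congrArg (fun q => Polynomial.coeff q j) key
    simp only [Polynomial.coeff_C_mul, Polynomial.coeff_add, add_mul, mul_assoc,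
      coeff_cderiv, Polynomial.coeff_derivative] at hc
    have hX : F ∣ (Polynomial.X * Polynomial.derivative (taylor F F)).coeff j := by
      cases j with
      | zero => simp
      | succ i =>
        rw [Polynomial.coeff_X_mul, Polynomial.coeff_derivative]
        exact Dvd.dvd.mul_right ih _
    have h1 : F ∣ μ * ((taylor F F).coeff (j + 1) * ((j : MvPolynomial (Fin 3) k) + 1)) := by
      have h2 : F ∣ μ * tder F ((taylor F F).coeff j) := Dvd.dvd.mul_left (dvd_tder ih) _
      rw [hc] at h2
      have h3 := dvd_sub h2 (Dvd.intro _ rfl : F ∣ F * (Polynomial.X *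
        ∑ i, taylor F (pderiv i F) * Polynomial.C (ρ i)).coeff j)
      have h4 := dvd_sub h3 (Dvd.dvd.mul_left hX l)
      convert h4 using 1
      ring
    have h2 := (hp.dvd_or_dvd h1).resolve_left hμ
    refine (hp.dvd_or_dvd h2).resolve_right fun h3 => ?_
    have hjk : ((j + 1 : ℕ) : k) ≠ 0 := natCast_ne (p := p) (by omega) (by omega)
    have hu : IsUnit ((j : MvPolynomial (Fin 3) k) + 1) := by
      have : ((j : MvPolynomial (Fin 3) k) + 1) = C ((j + 1 : ℕ) : k) := by simp
      rw [this]
      exact (isUnit_iff_ne_zero.2 hjk).map C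
    exact hp.not_isUnit (isUnit_of_dvd_unit h3 hu)

end Nondeg

end BT

namespace BT

open Module

section Nondeg2
variable {k : Type*} [Field k]

lemma lin_prime {a : Fin 3 → k} (ha : a ≠ 0) : Prime (lin a) := by
  have h0 : lin a ≠ 0 := by
    intro h
    apply ha
    ext i
    have := pderiv_lin a i
    rw [h, map_zero] at this
    simpa using this.symm
  have h1 : (lin a).totalDegree = 1 := (lin_hom a).totalDegree h0
  refine (irreducible_of_totalDegree_eq_one h1 fun x hx => ?_).prime
  obtain ⟨i, hi⟩ := ne_zero_iff.1 h0
  rw [isUnit_iff_ne_zero]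
  rintro rfl
  exact hi (zero_dvd_iff.1 (hx i))

/-- The Hessian type determinant. -/
noncomputable def wron (F : MvPolynomial (Fin 3) k) : MvPolynomial (Fin 3) k :=
  pderiv 1 F * tder F (pderiv 0 F) - pderiv 0 F * tder F (pderiv 1 F)

lemma nondeg [IsAlgClosed k] {F : MvPolynomial (Fin 3) k} {d p : ℕ} [CharP k p]
    (hF : F.IsHomogeneous d) (hp : Prime F) (hd : 2 ≤ d) (hdp : d < p) : ¬ F ∣ wron F := by
  intro hW
  obtain ⟨i, hi2, hi0, hco⟩ : ∃ i : Fin 3, i ≠ 2 ∧ pderiv i F ≠ 0 ∧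
      ∀ j, j ≤ d → F ∣ (taylor F F).coeff j := by
    by_cases h1 : pderiv 1 F = 0
    · have h0 : pderiv 0 F ≠ 0 := fun h0 => partials_ne hF hp hd hdp h0 h1
      refine ⟨0, by decide, h0, taylor_step hp hdp (pderiv 0 F) (tder F (pderiv 0 F))
        (fun h => h0 (dvd_small hF hF.pderiv (by omega) h)) ?_⟩
      rw [← dvd_neg] at hW
      intro i
      fin_cases i
      · convert hW using 1
        simp [tvec, wron]
        ring
      · convert dvd_zero F using 1
        simp [tvec]
        ring
      · simp [tvec]
    · refine ⟨1, by decide, h1, taylor_step hp hdp (pderiv 1 F) (tder F (pderiv 1 F))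
        (fun h => h1 (dvd_small hF hF.pderiv (by omega) h)) ?_⟩
      rw [← dvd_neg] at hW
      intro i
      fin_cases i
      · convert dvd_zero F using 1
        simp [tvec]
        ring
      · convert hW using 1
        simp [tvec, wron]
        ring
      · simp [tvec]
  obtain ⟨Q, hQF, hQ⟩ : ∃ Q : Fin 3 → k, eval Q F = 0 ∧ eval Q (X 2 * pderiv i F) ≠ 0 := by
    by_contra hcon
    push Not at hcon
    exact not_dvd_X2_partial hF hp hd hi0 (nullst hp hcon)
  rw [map_mul, eval_X] at hQ
  have hQ2 : Q 2 ≠ 0 := left_ne_zero_of_mul hQ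
  have hQi : eval Q (pderiv i F) ≠ 0 := right_ne_zero_of_mul hQ
  have hmap : ∀ f : MvPolynomial (Fin 3) k, (taylor F f).map (eval Q) =
      aeval (fun i => Polynomial.C (eval Q (tvec F i)) * Polynomial.X + Polynomial.C (Q i)) f := by
    intro f
    have : (Polynomial.mapRingHom (eval Q)).comp (taylor F : _ →+* _) =
        ((aeval (fun i => Polynomial.C (eval Q (tvec F i)) * Polynomial.X + Polynomial.C (Q i)) :
          MvPolynomial (Fin 3) k →ₐ[k] Polynomial k) :
            MvPolynomial (Fin 3) k →+* Polynomial k) := by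
      apply MvPolynomial.ringHom_ext
      · intro r
        have : (C r : MvPolynomial (Fin 3) k) = algebraMap k _ r := rfl
        simp only [RingHom.comp_apply, RingHom.coe_coe]
        rw [this, AlgHom.commutes, AlgHom.commutes, Polynomial.algebraMap_apply]
        simp [MvPolynomial.algebraMap_eq]
      · intro i
        simp [taylor]
        ring
    exact RingHom.congr_fun this f
  have hpol : (aeval (fun i => Polynomial.C (eval Q (tvec F i)) * Polynomial.X +
      Polynomial.C (Q i)) F : Polynomial k) = 0 := by
    have hdeg := aeval_natDegree_le F hF.totalDegree_le
      (fun i => Polynomial.C (eval Q (tvec F i)) * Polynomial.X + Polynomial.C (Q i))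
      (fun i => Polynomial.natDegree_linear_le)
    ext j
    by_cases hj : j ≤ d
    · rw [← hmap, Polynomial.coeff_map, Polynomial.coeff_zero]
      obtain ⟨c, hc⟩ := hco j hj
      rw [hc, map_mul, hQF, zero_mul]
    · rw [Polynomial.coeff_zero]
      apply Polynomial.coeff_eq_zero_of_natDegree_lt
      omega
  have hline : ∀ t : k, eval (fun i => Q i + t * eval Q (tvec F i)) F = 0 := by
    intro t
    have h1 : ∀ f : MvPolynomial (Fin 3) k,
        (Polynomial.aeval t) (aeval (fun i => Polynomial.C (eval Q (tvec F i)) * Polynomial.X +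
          Polynomial.C (Q i)) f : Polynomial k) =
        eval (fun i => Q i + t * eval Q (tvec F i)) f := by
      intro f
      have h2 : (Polynomial.aeval t).comp (aeval (fun i => Polynomial.C (eval Q (tvec F i)) *
          Polynomial.X + Polynomial.C (Q i)) : MvPolynomial (Fin 3) k →ₐ[k] Polynomial k) =
          aeval (fun i => Q i + t * eval Q (tvec F i)) := by
        apply MvPolynomial.algHom_ext
        intro i
        simp
        ring
      have h3 := AlgHom.congr_fun h2 f
      rw [aeval_eq_eval] at h3
      exact h3
    rw [← h1, hpol, map_zero]
  set a : Fin 3 → k := fun j => eval Q (pderiv j F) with ha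
  have ha0 : a ≠ 0 := fun h => hQi (congrFun h i)
  have hEuler : a 0 * Q 0 + a 1 * Q 1 + a 2 * Q 2 = 0 := by
    have := congrArg (eval Q) hF.sum_X_mul_pderiv
    rw [Fin.sum_univ_three] at this
    simp only [map_add, map_mul, eval_X, map_nsmul, hQF] at this
    simp only [ha]
    linear_combination this
  have t0 : eval Q (tvec F 0) = a 1 := by simp [tvec, ha]
  have t1 : eval Q (tvec F 1) = - a 0 := by simp [tvec, ha]
  have t2 : eval Q (tvec F 2) = 0 := by simp [tvec]
  have hdvd : lin a ∣ X 2 * F := by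
    refine nullst (lin_prime ha0) fun Y hY => ?_
    rw [map_mul, eval_X]
    by_cases hY2 : Y 2 = 0
    · rw [hY2, zero_mul]
    rw [eval_lin, Fin.sum_univ_three] at hY
    set c := Y 2 / Q 2 with hc
    have hc0 : c ≠ 0 := div_ne_zero hY2 hQ2
    have hcY : c * Q 2 = Y 2 := by rw [hc]; field_simp
    have hrel : a 0 * (Y 0 - c * Q 0) + a 1 * (Y 1 - c * Q 1) = 0 := by
      linear_combination hY - c * hEuler - a 2 * (- hcY)
    obtain ⟨s, hs0, hs1⟩ : ∃ s : k, Y 0 - c * Q 0 = s * a 1 ∧ Y 1 - c * Q 1 = - (s * a 0) := by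
      by_cases h1 : a 1 = 0
      · have h0 : a 0 ≠ 0 := by
          fin_cases i
          · exact hQi
          · exact absurd h1 hQi
          · exact absurd rfl hi2
        refine ⟨- (Y 1 - c * Q 1) / a 0, ?_, ?_⟩
        · rw [h1, zero_mul, add_zero] at hrel
          rw [h1, mul_zero]
          exact (mul_eq_zero.1 hrel).resolve_left h0
        · field_simp
      · refine ⟨(Y 0 - c * Q 0) / a 1, by field_simp, ?_⟩
        field_simp
        linear_combination hrel
    have hYe : Y = c • (fun i => Q i + (s / c) * eval Q (tvec F i)) := by
      ext j
      fin_cases j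
      · simp only [Fin.zero_eta, Pi.smul_apply, smul_eq_mul, t0]
        field_simp
        linear_combination hs0
      · simp only [Fin.mk_one, Pi.smul_apply, smul_eq_mul, t1]
        field_simp
        linear_combination hs1
      · simp only [Fin.reduceFinMk, Pi.smul_apply, smul_eq_mul, t2]
        linear_combination -hcY
    rw [hYe, eval_smul_hom hF, hline, mul_zero, mul_zero]
  rcases (lin_prime ha0).dvd_or_dvd hdvd with h | h
  · obtain ⟨c, hc⟩ := h
    have := congrArg (eval Q) hc
    rw [eval_X, map_mul, eval_lin, Fin.sum_univ_three, hEuler, zero_mul] at this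
    exact hQ2 this
  · have hass := ((lin_prime ha0).irreducible).associated_of_dvd hp.irreducible h
    exact (lin_prime ha0).ne_zero (dvd_small hF (lin_hom a) (by omega) hass.symm.dvd)

end Nondeg2

end BT

namespace BT

open Module

section Dual
variable {k : Type*} [Field k]

/-- substitution of the gradient. -/
noncomputable def gradHom (F : MvPolynomial (Fin 3) k) :
    MvPolynomial (Fin 3) k →ₐ[k] MvPolynomial (Fin 3) k :=
  aeval fun i => pderiv i F

lemma gradHom_hom {F G : MvPolynomial (Fin 3) k} {d n : ℕ} (hF : F.IsHomogeneous d)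
    (hG : G.IsHomogeneous n) : (gradHom F G).IsHomogeneous ((d - 1) * n) :=
  hG.aeval _ fun _ => hF.pderiv

/-- degree `n` equations of the dual curve. -/
noncomputable def dualSub (F : MvPolynomial (Fin 3) k) (n : ℕ) :
    Submodule k (MvPolynomial (Fin 3) k) where
  carrier := {G | G.IsHomogeneous n ∧ F ∣ gradHom F G}
  add_mem' := fun ha hb => ⟨ha.1.add hb.1, by rw [map_add]; exact dvd_add ha.2 hb.2⟩
  zero_mem' := ⟨isHomogeneous_zero _ _ _, by simp⟩
  smul_mem' := fun c a ha => ⟨(homogeneousSubmodule (Fin 3) k n).smul_mem c ha.1, by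
    rw [map_smul, MvPolynomial.smul_eq_C_mul]; exact Dvd.dvd.mul_left ha.2 _⟩

lemma mem_dualSub {F G : MvPolynomial (Fin 3) k} {n : ℕ} :
    G ∈ dualSub F n ↔ G.IsHomogeneous n ∧ F ∣ gradHom F G := Iff.rfl

lemma dualSub_le (F : MvPolynomial (Fin 3) k) (n : ℕ) :
    dualSub F n ≤ homogeneousSubmodule (Fin 3) k n := fun _ h => h.1

instance dualSubFinite (F : MvPolynomial (Fin 3) k) (n : ℕ) : Module.Finite k (dualSub F n) :=
  Submodule.finiteDimensional_of_le (dualSub_le F n)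

lemma finrank_comap_aux {N M : Type*} [AddCommGroup N] [Module k N] [AddCommGroup M] [Module k M]
    [Module.Finite k N] [Module.Finite k M] (f : N →ₗ[k] M) (T : Submodule k M) :
    finrank k N + finrank k T ≤ finrank k (T.comap f) + finrank k M := by
  have h1 := LinearMap.finrank_range_add_finrank_ker (T.mkQ.comp f)
  have h2 := Submodule.finrank_quotient_add_finrank T
  have h3 : finrank k (LinearMap.range (T.mkQ.comp f)) ≤ finrank k (M ⧸ T) :=
    Submodule.finrank_le _
  have h4 : LinearMap.ker (T.mkQ.comp f) = T.comap f := by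
    rw [LinearMap.ker_comp, Submodule.ker_mkQ]
  rw [h4] at h1
  omega

lemma dual_dim {F : MvPolynomial (Fin 3) k} {d n : ℕ} (hF : F.IsHomogeneous d) (hF0 : F ≠ 0)
    (hn : d ≤ (d - 1) * n) :
    (n + 1) * (n + 2) + ((d - 1) * n - d + 1) * ((d - 1) * n - d + 2) ≤
      2 * finrank k (dualSub F n) + ((d - 1) * n + 1) * ((d - 1) * n + 2) := by
  set m := (d - 1) * n with hm
  let f : homogeneousSubmodule (Fin 3) k n →ₗ[k] homogeneousSubmodule (Fin 3) k m :=
    (gradHom F).toLinearMap.restrict fun G hG => gradHom_hom hF hG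
  have hT : mulSub F (m - d) ≤ homogeneousSubmodule (Fin 3) k m := by
    intro x hx
    obtain ⟨a, ha, rfl⟩ := mem_mulSub.1 hx
    have := hF.mul ha
    rwa [show d + (m - d) = m by omega] at this
  have h1 := finrank_comap_aux f ((mulSub F (m - d)).comap (Submodule.subtype _))
  have h2 : finrank k ((mulSub F (m - d)).comap
      (Submodule.subtype (homogeneousSubmodule (Fin 3) k m))) = finrank k (mulSub F (m - d)) :=
    (Submodule.comapSubtypeEquivOfLe hT).finrank_eq
  have h3 : finrank k (((mulSub F (m - d)).comap
      (Submodule.subtype (homogeneousSubmodule (Fin 3) k m))).comap f) ≤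
      finrank k (dualSub F n) := by
    rw [← (Submodule.comapSubtypeEquivOfLe (dualSub_le F n)).finrank_eq]
    apply Submodule.finrank_mono
    intro x hx
    obtain ⟨a, ha, hax⟩ := mem_mulSub.1 hx
    exact ⟨x.2, ⟨a, hax.symm⟩⟩
  have h4 := two_finrank_hom (k := k) n
  have h5 := two_finrank_hom (k := k) m
  have h6 := finrank_mulSub hF0 (m - d)
  omega

lemma exists_dual {F : MvPolynomial (Fin 3) k} {d : ℕ} (hF : F.IsHomogeneous d) (hF0 : F ≠ 0)
    (hd : 2 ≤ d) : ∃ n, ∃ G ∈ dualSub F n, G ≠ 0 := by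
  refine ⟨2 * d * d, ?_⟩
  have hn : d ≤ (d - 1) * (2 * d * d) := by
    obtain ⟨e, rfl⟩ := Nat.exists_eq_add_of_le hd
    rw [show 2 + e - 1 = 1 + e by omega, show (1 + e) * (2 * (2 + e) * (2 + e)) =
      (2 + e) * ((1 + e) * (2 * (2 + e))) by ring]
    exact Nat.le_mul_of_pos_right _ (by positivity)
  have h := dual_dim hF hF0 hn
  by_contra hcon
  push Not at hcon
  have hbot : dualSub F (2 * d * d) = ⊥ := (Submodule.eq_bot_iff _).2 hcon
  rw [hbot, finrank_bot] at h
  obtain ⟨r, hr⟩ := Nat.exists_eq_add_of_le hn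
  have hmle : (d - 1) * (2 * d * d) + 2 * d * d = d * (2 * d * d) := by
    obtain ⟨e, rfl⟩ := Nat.exists_eq_add_of_le hd
    rw [show 2 + e - 1 = 1 + e by omega]
    ring
  rw [hr] at h hmle
  rw [Nat.add_sub_cancel_left] at h
  nlinarith

lemma exists_dual_prime {F : MvPolynomial (Fin 3) k} {d : ℕ} (hF : F.IsHomogeneous d)
    (hp : Prime F) (hd : 2 ≤ d) : ∃ g, ∃ G ∈ dualSub F g, Prime G := by
  classical
  have hex := exists_dual hF hp.ne_zero hd
  obtain ⟨G, hG, hG0⟩ := Nat.find_spec hex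
  have hmin : ∀ m, ∀ H ∈ dualSub F m, H ≠ 0 → Nat.find hex ≤ m :=
    fun m H hH hH0 => Nat.find_min' hex ⟨H, hH, hH0⟩
  set g := Nat.find hex
  refine ⟨g, G, hG, ?_⟩
  have hunit : ∀ c : MvPolynomial (Fin 3) k, c ≠ 0 → c.totalDegree = 0 → IsUnit c := by
    intro c hc0 hc
    have h1 := totalDegree_eq_zero_iff_eq_C.1 hc
    rw [h1]
    refine (isUnit_iff_ne_zero.2 ?_).map C
    intro h2
    rw [h2, map_zero] at h1
    exact hc0 h1
  have htop0 : ∀ c : MvPolynomial (Fin 3) k, c ≠ 0 → homogeneousComponent c.totalDegree c ≠ 0 := by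
    intro c hc h0
    obtain ⟨m, hm, hmd⟩ := Finset.exists_mem_eq_sup c.support (support_nonempty.2 hc)
      (fun m => m.sum fun _ e => e)
    have h1 := congrArg (coeff m) h0
    rw [coeff_homogeneousComponent, if_pos, coeff_zero] at h1
    · exact (mem_support_iff.1 hm) h1
    · exact hmd.symm
  refine Irreducible.prime ⟨fun hu => ?_, fun a b hab => ?_⟩
  · exact hp.not_isUnit (isUnit_of_dvd_unit hG.2 (hu.map (gradHom F)))
  · have ha0 : a ≠ 0 := fun h => hG0 (by rw [hab, h, zero_mul])
    have hb0 : b ≠ 0 := fun h => hG0 (by rw [hab, h, mul_zero])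
    have hdeg : a.totalDegree + b.totalDegree = g := by
      rw [← totalDegree_mul_of_isDomain ha0 hb0, ← hab, hG.1.totalDegree hG0]
    have htop := hcomp_top_mul a b
    rw [hdeg, ← hab, homogeneousComponent_eq_self hG.1] at htop
    have hdvd := hG.2
    rw [htop, map_mul] at hdvd
    rcases hp.dvd_or_dvd hdvd with h | h
    · right
      have := hmin _ _ (mem_dualSub.2 ⟨homogeneousComponent_isHomogeneous _ _, h⟩) (htop0 a ha0)
      exact hunit b hb0 (by omega)
    · left
      have := hmin _ _ (mem_dualSub.2 ⟨homogeneousComponent_isHomogeneous _ _, h⟩) (htop0 b hb0)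
      exact hunit a ha0 (by omega)

lemma binary [IsAlgClosed k] {F : MvPolynomial (Fin 3) k} {d : ℕ}
    (hF : F.IsHomogeneous d) (hp : Prime F) (hd : 2 ≤ d) (hW : ¬ F ∣ wron F) (m : ℕ) :
    ∀ q : Polynomial k, q ≠ 0 → q.natDegree ≤ m →
      ¬ F ∣ aeval ![pderiv 0 F, pderiv 1 F] (q.homogenize m) := by
  induction m with
  | zero =>
    intro q hq hm h
    obtain ⟨c, rfl⟩ := Polynomial.natDegree_eq_zero.1 (Nat.le_zero.1 hm)
    have hc : c ≠ 0 := fun h => hq (by rw [h, map_zero])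
    rw [Polynomial.homogenize_C, pow_zero, mul_one] at h
    have hu : IsUnit (C c : MvPolynomial (Fin 2) k) := (isUnit_iff_ne_zero.2 hc).map C
    exact hp.not_isUnit (isUnit_of_dvd_unit h (hu.map _))
  | succ m ih =>
    intro q hq hm h
    by_cases hqm : q.natDegree ≤ m
    · have e := Polynomial.homogenize_mul q 1 hqm (show (1 : Polynomial k).natDegree ≤ 1 by simp)
      rw [mul_one] at e
      rw [e, map_mul] at h
      rcases hp.dvd_or_dvd h with h | h
      · exact ih q hq hqm h
      · simp only [Polynomial.homogenize_one, pow_one, aeval_X, Matrix.cons_val_one,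
          Matrix.cons_val_zero] at h
        have h1 := dvd_small hF hF.pderiv (by omega) h
        apply hW
        simp [wron, h1]
    · obtain ⟨r, hr⟩ := IsAlgClosed.exists_root q (by
        rw [Polynomial.degree_eq_natDegree hq]
        have : q.natDegree ≠ 0 := by omega
        exact_mod_cast this)
      obtain ⟨q', rfl⟩ := Polynomial.dvd_iff_isRoot.2 hr
      have hq' : q' ≠ 0 := right_ne_zero_of_mul hq
      have hdq : q'.natDegree ≤ m := by
        rw [Polynomial.natDegree_mul (left_ne_zero_of_mul hq) hq',
          Polynomial.natDegree_X_sub_C] at hm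
        omega
      have e := Polynomial.homogenize_mul (Polynomial.X - Polynomial.C r) q'
        (Polynomial.natDegree_X_sub_C_le r) hdq
      rw [add_comm 1 m] at e
      rw [e, map_mul] at h
      rcases hp.dvd_or_dvd h with h | h
      · simp only [Polynomial.homogenize_sub, Polynomial.homogenize_X one_ne_zero,
          Polynomial.homogenize_C, map_sub, map_mul, aeval_X, Matrix.cons_val_one,
          Matrix.cons_val_zero, pow_one, Nat.sub_self, pow_zero, mul_one, aeval_C] at h
        have h1 : pderiv 0 F - C r * pderiv 1 F = 0 := by
          refine dvd_small hF (m := d - 1) ?_ (by omega) h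
          refine hF.pderiv.sub ?_
          have := (isHomogeneous_C (Fin 3) r).mul (hF.pderiv (i := 1))
          rwa [zero_add] at this
        apply hW
        rw [sub_eq_zero] at h1
        have : wron F = 0 := by
          rw [wron, h1, ← MvPolynomial.smul_eq_C_mul, Derivation.map_smul,
            MvPolynomial.smul_eq_C_mul, MvPolynomial.smul_eq_C_mul]
          ring
        rw [this]
        exact dvd_zero _
      · exact ih q' hq' hdq h

lemma binary_dim [IsAlgClosed k] {F : MvPolynomial (Fin 3) k} {d : ℕ}
    (hF : F.IsHomogeneous d) (hp : Prime F) (hd : 2 ≤ d) (hW : ¬ F ∣ wron F) (m : ℕ) :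
    m + 1 + finrank k (dualSub F m) ≤ finrank k (homogeneousSubmodule (Fin 3) k m) := by
  let φ : MvPolynomial (Fin 2) k →ₐ[k] MvPolynomial (Fin 3) k := aeval ![X 0, X 1]
  have hφ : ∀ q, gradHom F (φ q) = aeval ![pderiv 0 F, pderiv 1 F] q := by
    intro q
    have : (gradHom F).comp φ = aeval ![pderiv 0 F, pderiv 1 F] := by
      apply MvPolynomial.algHom_ext
      intro i
      fin_cases i <;> simp [φ, gradHom]
    exact AlgHom.congr_fun this q
  let ψ : Polynomial k →ₗ[k] MvPolynomial (Fin 3) k :=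
    φ.toLinearMap.comp (Polynomial.homogenizeLM m)
  have hψ : ∀ q ∈ Polynomial.degreeLT k (m + 1), ψ q ∈ homogeneousSubmodule (Fin 3) k m := by
    intro q _
    have := (Polynomial.isHomogeneous_homogenize (n := m) q).aeval (S := k)
      (![X 0, X 1] : Fin 2 → MvPolynomial (Fin 3) k) (n := 1)
      (fun i => by fin_cases i <;> exact isHomogeneous_X _ _)
    rw [one_mul] at this
    exact this
  let f := ψ.restrict hψ
  let D := (dualSub F m).comap (Submodule.subtype (homogeneousSubmodule (Fin 3) k m))
  have hD : finrank k D = finrank k (dualSub F m) :=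
    (Submodule.comapSubtypeEquivOfLe (dualSub_le F m)).finrank_eq
  have : Module.Finite k (Polynomial.degreeLT k (m + 1)) :=
    Module.Finite.equiv (Polynomial.degreeLTEquiv k (m + 1)).symm
  have h1 := finrank_comap_aux f D
  have h2 : D.comap f = ⊥ := by
    rw [Submodule.eq_bot_iff]
    intro q hq
    by_contra hq0
    have hq1 : (q : Polynomial k) ≠ 0 := fun h => hq0 (Subtype.ext h)
    refine binary hF hp hd hW m q hq1 ?_ ?_
    · have := Polynomial.mem_degreeLT.1 q.2
      have := (Polynomial.natDegree_lt_iff_degree_lt hq1).2 this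
      omega
    · rw [← hφ]
      exact hq.2
  have h3 : finrank k (Polynomial.degreeLT k (m + 1)) = m + 1 := by
    rw [(Polynomial.degreeLTEquiv k (m + 1)).finrank_eq]
    simp
  rw [h2, finrank_bot, h3, hD] at h1
  omega

lemma dual_principal [IsAlgClosed k] {F G : MvPolynomial (Fin 3) k} {d g : ℕ}
    (hF : F.IsHomogeneous d) (hp : Prime F) (hd : 2 ≤ d) (hW : ¬ F ∣ wron F)
    (hG : G ∈ dualSub F g) (hGp : Prime G) {n : ℕ} {H : MvPolynomial (Fin 3) k}
    (hH : H ∈ dualSub F n) : G ∣ H := by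
  by_contra hnd
  have key : ∀ (e : ℕ) (A : MvPolynomial (Fin 3) k), A ∈ dualSub F e → ∀ m, e ≤ m →
      mulSub A (m - e) ≤ dualSub F m := by
    intro e A hA m hem x hx
    obtain ⟨a, ha, rfl⟩ := mem_mulSub.1 hx
    refine ⟨?_, ?_⟩
    · have := hA.1.mul ha
      rwa [show e + (m - e) = m by omega] at this
    · rw [map_mul]
      exact Dvd.dvd.mul_right hA.2 _
  have h1 := bezout_dim (n := g + n + g * n) hG.1 hGp hnd (by omega) (dualSub F _) (dualSub_le F _)
    (key g G hG _ (by omega)) (key n H hH _ (by omega))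
  have h2 := binary_dim hF hp hd hW (g + n + g * n)
  omega

lemma dual_degree [IsAlgClosed k] {F G : MvPolynomial (Fin 3) k} {d g : ℕ}
    (hF : F.IsHomogeneous d) (hp : Prime F) (hd : 2 ≤ d) (hW : ¬ F ∣ wron F)
    (hG : G ∈ dualSub F g) (hGp : Prime G) : g ≤ d * (d - 1) := by
  by_contra hlt
  push Not at hlt
  obtain ⟨e, rfl⟩ := Nat.exists_eq_add_of_le hd
  have hd1 : 2 + e - 1 = e + 1 := by omega
  rw [hd1] at hlt
  have hbound : ∀ n, g + (2 + e) ≤ n → 2 * finrank k (dualSub F n) ≤ (n - g + 1) * (n - g + 2) := by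
    intro n hn
    rw [← finrank_mulSub hGp.ne_zero (n - g)]
    have : dualSub F n ≤ mulSub G (n - g) := by
      intro H hH
      obtain ⟨c, rfl⟩ := dual_principal hF hp hd hW hG hGp hH
      by_cases h0 : G * c = 0
      · rw [h0]; exact zero_mem _
      · exact mem_mulSub.2 ⟨c, (hom_cofactor hG.1 hH.1 h0).2, rfl⟩
    have := Submodule.finrank_mono this
    omega
  obtain ⟨N, hN⟩ : ∃ N, N = g + (2 + e) + g * g := ⟨_, rfl⟩
  have h1 := hbound N (by omega)
  have hle : 2 + e ≤ (2 + e - 1) * N := by rw [hd1]; nlinarith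
  have h2 := dual_dim (n := N) hF hp.ne_zero hle
  rw [hd1] at h2 hle
  obtain ⟨r, hr⟩ := Nat.exists_eq_add_of_le hle
  rw [show N - g = 2 + e + g * g by omega] at h1
  rw [hr, Nat.add_sub_cancel_left] at h2
  have h3 : (N + 1) * (N + 2) + (r + 1) * (r + 2) ≤
      (2 + e + g * g + 1) * (2 + e + g * g + 2) + (2 + e + r + 1) * (2 + e + r + 2) := by omega
  have h4 : ((2 + e) * (e + 1) + 1) * N ≤ g * N := Nat.mul_le_mul_right N hlt
  subst hN
  zify at h3 h4 hr
  have hr' : (r : ℤ) = (e + 1) * (g + (2 + e) + g * g) - (2 + e) := by linarith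
  rw [hr'] at h3
  nlinarith [sq_nonneg (g : ℤ), sq_nonneg (e : ℤ)]

end Dual

end BT

namespace BT

open Module

section Bidual
variable {k : Type*} [Field k]

lemma bidual {F G : MvPolynomial (Fin 3) k} {d g : ℕ} (hF : F.IsHomogeneous d) (hp : Prime F)
    (hW : ¬ F ∣ wron F) (hG : G ∈ dualSub F g) (i j : Fin 3) :
    F ∣ gradHom F (pderiv i G) * X j - gradHom F (pderiv j G) * X i := by
  obtain ⟨v, hv⟩ : ∃ v, v = fun i => gradHom F (pderiv i G) := ⟨_, rfl⟩
  obtain ⟨a, ha⟩ : ∃ a, a = fun i => pderiv i F := ⟨_, rfl⟩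
  obtain ⟨b, hb⟩ : ∃ b, b = fun i => tder F (pderiv i F) := ⟨_, rfl⟩
  have hgX : ∀ i, gradHom F (X i) = a i := fun i => by simp [gradHom, ha]
  have e1 : F ∣ a 0 * v 0 + a 1 * v 1 + a 2 * v 2 := by
    have := congrArg (gradHom F) hG.1.sum_X_mul_pderiv
    rw [Fin.sum_univ_three] at this
    simp only [map_add, map_mul, hgX, map_nsmul] at this
    rw [hv]
    simp only
    rw [this, nsmul_eq_mul]
    exact Dvd.dvd.mul_left hG.2 _
  have e2 : F ∣ b 0 * v 0 + b 1 * v 1 + b 2 * v 2 := by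
    have := chain (tder F) (gradHom F) G
    rw [Fin.sum_univ_three] at this
    simp only [hgX] at this
    convert dvd_tder hG.2 using 1
    rw [this, hv, hb, ha]
    ring
  have e3' : X 0 * a 0 + X 1 * a 1 + X 2 * a 2 = d • F := by
    rw [← hF.sum_X_mul_pderiv, Fin.sum_univ_three, ha]
  have e3 : F ∣ a 0 * X 0 + a 1 * X 1 + a 2 * X 2 := by
    refine ⟨(d : MvPolynomial (Fin 3) k), ?_⟩
    rw [mul_comm F, ← nsmul_eq_mul, ← e3']
    ring
  have e4 : F ∣ b 0 * X 0 + b 1 * X 1 + b 2 * X 2 := by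
    have := congrArg (tder F) e3'
    simp only [map_add, Derivation.leibniz, tder_X, map_nsmul, tder_self, smul_zero,
      smul_eq_mul] at this
    have t0 : tvec F 0 = a 1 := by simp [tvec, ha]
    have t1 : tvec F 1 = - a 0 := by simp [tvec, ha]
    have t2 : tvec F 2 = 0 := by simp [tvec]
    have hb' : ∀ i, tder F (a i) = b i := fun i => by rw [ha, hb]
    rw [t0, t1, t2, hb', hb', hb'] at this
    convert dvd_zero F using 1
    linear_combination this
  have hWab : wron F = a 1 * b 0 - a 0 * b 1 := by rw [wron, ha, hb]
  rw [hWab] at hW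
  obtain ⟨s1, e1⟩ := e1
  obtain ⟨s2, e2⟩ := e2
  obtain ⟨s3, e3⟩ := e3
  obtain ⟨s4, e4⟩ := e4
  have f02 : F ∣ v 0 * X 2 - v 2 * X 0 := by
    refine (hp.dvd_or_dvd (a := a 1 * b 0 - a 0 * b 1) ?_).resolve_left hW
    refine ⟨X 2 * (a 1 * s2 - b 1 * s1) - v 2 * (a 1 * s4 - b 1 * s3), ?_⟩
    linear_combination X 2 * (a 1 * e2 - b 1 * e1) - v 2 * (a 1 * e4 - b 1 * e3)
  have f12 : F ∣ v 1 * X 2 - v 2 * X 1 := by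
    refine (hp.dvd_or_dvd (a := a 1 * b 0 - a 0 * b 1) ?_).resolve_left hW
    refine ⟨X 2 * (b 0 * s1 - a 0 * s2) - v 2 * (b 0 * s3 - a 0 * s4), ?_⟩
    linear_combination X 2 * (b 0 * e1 - a 0 * e2) - v 2 * (b 0 * e3 - a 0 * e4)
  have f01 : F ∣ v 0 * X 1 - v 1 * X 0 := by
    -- uses `X 1 (b × a)`-type combinations
    refine (hp.dvd_or_dvd (a := a 1 * b 0 - a 0 * b 1) ?_).resolve_left hW
    have k0 : (a 1 * b 0 - a 0 * b 1) * v 0 =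
        F * (a 1 * s2 - b 1 * s1) - (a 1 * b 2 - a 2 * b 1) * v 2 := by
      linear_combination (a 1 * e2 - b 1 * e1)
    have k1 : (a 1 * b 0 - a 0 * b 1) * v 1 =
        F * (b 0 * s1 - a 0 * s2) - (b 0 * a 2 - a 0 * b 2) * v 2 := by
      linear_combination (b 0 * e1 - a 0 * e2)
    refine (hp.dvd_or_dvd (a := a 1 * b 0 - a 0 * b 1) ?_).resolve_left hW
    have l0 : (a 1 * b 0 - a 0 * b 1) * X 0 =
        F * (a 1 * s4 - b 1 * s3) - (a 1 * b 2 - a 2 * b 1) * X 2 := by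
      linear_combination (a 1 * e4 - b 1 * e3)
    have l1 : (a 1 * b 0 - a 0 * b 1) * X 1 =
        F * (b 0 * s3 - a 0 * s4) - (b 0 * a 2 - a 0 * b 2) * X 2 := by
      linear_combination (b 0 * e3 - a 0 * e4)
    have : (a 1 * b 0 - a 0 * b 1) * ((a 1 * b 0 - a 0 * b 1) * (v 0 * X 1 - v 1 * X 0)) =
      ((a 1 * b 0 - a 0 * b 1) * v 0) * ((a 1 * b 0 - a 0 * b 1) * X 1) -
      ((a 1 * b 0 - a 0 * b 1) * v 1) * ((a 1 * b 0 - a 0 * b 1) * X 0) := by ring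
    rw [this, k0, k1, l0, l1, ← Ideal.mem_span_singleton, ← Ideal.Quotient.eq_zero_iff_mem]
    have hF0 : Ideal.Quotient.mk (Ideal.span {F}) F = 0 :=
      Ideal.Quotient.eq_zero_iff_mem.2 (Ideal.mem_span_singleton_self F)
    simp only [map_sub, map_mul, hF0]
    ring
  have hneg : ∀ i j, F ∣ v i * X j - v j * X i → F ∣ v j * X i - v i * X j := by
    intro i j h
    rw [← dvd_neg]
    convert h using 1
    ring
  have hdiag : ∀ i, F ∣ v i * X i - v i * X i := fun i => by rw [sub_self]; exact dvd_zero _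
  suffices h : F ∣ v i * X j - v j * X i by simpa [hv] using h
  fin_cases i <;> fin_cases j
  · exact hdiag 0
  · exact f01
  · exact f02
  · exact hneg _ _ f01
  · exact hdiag 1
  · exact f12
  · exact hneg _ _ f02
  · exact hneg _ _ f12
  · exact hdiag 2

lemma eval_gradHom (F G : MvPolynomial (Fin 3) k) (Q : Fin 3 → k) :
    eval Q (gradHom F G) = eval (tangentVec F Q) G := by
  have : (aeval Q : MvPolynomial (Fin 3) k →ₐ[k] k).comp (gradHom F) =
      aeval (tangentVec F Q) := by
    apply MvPolynomial.algHom_ext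
    intro i
    simp [gradHom, tangentVec, aeval_eq_eval]
  have h := AlgHom.congr_fun this G
  simpa [aeval_eq_eval] using h

lemma exists_partial [IsAlgClosed k] {p : ℕ} [CharP k p] [Fact p.Prime]
    {G : MvPolynomial (Fin 3) k} (hG : Prime G) : ∃ i, pderiv i G ≠ 0 := by
  by_contra hcon
  push Not at hcon
  have hp : p.Prime := Fact.out
  have hdiv : ∀ m ∈ G.support, ∀ i, p ∣ m i := by
    intro m hm i
    rcases Nat.eq_zero_or_pos (m i) with h0 | h0
    · rw [h0]; exact dvd_zero _
    have hle : Finsupp.single i 1 ≤ m := by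
      rw [Finsupp.single_le_iff]; exact h0
    have h1 := coeff_pderiv (i := i) G (m - Finsupp.single i 1)
    rw [hcon i, coeff_zero, tsub_add_cancel_of_le hle] at h1
    have h2 : ((m i : ℕ) : k) = 0 := by
      have h3 := (mul_eq_zero.1 h1.symm).resolve_left (mem_support_iff.1 hm)
      rw [← h3]
      have : m i = (m - Finsupp.single i 1 : Fin 3 →₀ ℕ) i + 1 := by simp; omega
      exact_mod_cast congrArg (Nat.cast : ℕ → k) this
    exact (CharP.cast_eq_zero_iff k p _).1 h2
  choose r hr using fun c : k => IsAlgClosed.exists_pow_nat_eq c hp.pos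
  have hGe : G = (∑ m ∈ G.support, monomial (m.mapRange (· / p) (Nat.zero_div p))
      (r (coeff m G))) ^ p := by
    rw [sum_pow_char]
    conv_lhs => rw [G.as_sum]
    refine Finset.sum_congr rfl fun m hm => ?_
    rw [monomial_pow, hr]
    have hme : m = p • m.mapRange (· / p) (Nat.zero_div p) := by
      ext i
      simp [Nat.mul_div_cancel' (hdiv m hm i)]
    rw [← hme]
  have := hG.irreducible
  rw [hGe] at this
  exact (not_irreducible_pow hp.ne_one) this

lemma bitangent_sing [IsAlgClosed k] {F G : MvPolynomial (Fin 3) k} {d g : ℕ}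
    (hF : F.IsHomogeneous d) (hp : Prime F)
    (hW : ¬ F ∣ wron F) (hG : G ∈ dualSub F g) {L : Projectivization k (Fin 3 → k)}
    (hL : IsBitangent F L) : eval L.rep G = 0 ∧ ∀ i, eval L.rep (pderiv i G) = 0 := by
  obtain ⟨Q₁, Q₂, h₁, h₂, hne, hv₁, hv₂, hL1, hL2⟩ := hL
  have hgr : ∀ i, (pderiv i G).IsHomogeneous (g - 1) := fun i => hG.1.pderiv
  have hrep : ∀ (Q : Fin 3 → k) (hQ : SmoothPoint F Q) (hv : tangentVec F Q ≠ 0),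
      L = Projectivization.mk k (tangentVec F Q) hv → ∃ c : k, c ≠ 0 ∧ L.rep = c • tangentVec F Q := by
    intro Q hQ hv h
    obtain ⟨c, hc⟩ := Projectivization.exists_smul_eq_mk_rep k (tangentVec F Q) hv
    refine ⟨c, c.ne_zero, ?_⟩
    rw [h, ← hc]
    rfl
  have hpar : ∀ (Q : Fin 3 → k) (hQ : SmoothPoint F Q) (hv : tangentVec F Q ≠ 0),
      L = Projectivization.mk k (tangentVec F Q) hv → ∀ i j,
        eval L.rep (pderiv i G) * Q j = eval L.rep (pderiv j G) * Q i := by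
    intro Q hQ hv h i j
    obtain ⟨c, hc0, hc⟩ := hrep Q hQ hv h
    obtain ⟨s, hs⟩ := bidual hF hp hW hG i j
    have h1 := congrArg (eval Q) hs
    rw [map_sub, map_mul, map_mul, map_mul, hQ.2.1, zero_mul, eval_gradHom, eval_gradHom, eval_X,
      eval_X] at h1
    rw [hc, eval_smul_hom (hgr i), eval_smul_hom (hgr j)]
    linear_combination c ^ (g - 1) * h1
  refine ⟨?_, fun i => ?_⟩
  · obtain ⟨c, hc0, hc⟩ := hrep Q₁ h₁ hv₁ hL1
    obtain ⟨s, hs⟩ := hG.2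
    have h1 := congrArg (eval Q₁) hs
    rw [eval_gradHom, map_mul, h₁.2.1, zero_mul] at h1
    rw [hc, eval_smul_hom hG.1, h1, mul_zero]
  · by_contra hi
    apply hne
    have hp1 := hpar Q₁ h₁ hv₁ hL1 i
    have hp2 := hpar Q₂ h₂ hv₂ hL2 i
    set w := fun j => eval L.rep (pderiv j G) with hw
    have hnz : ∀ Q : Fin 3 → k, Q ≠ 0 → (∀ j, w i * Q j = w j * Q i) → Q i ≠ 0 := by
      intro Q hQ h h0
      apply hQ
      ext j
      have := h j
      rw [h0, mul_zero] at this
      exact (mul_eq_zero.1 this).resolve_left hi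
    have hQ1 := hnz Q₁ h₁.1 hp1
    have hQ2 := hnz Q₂ h₂.1 hp2
    rw [Projectivization.mk_eq_mk_iff']
    refine ⟨Q₁ i / Q₂ i, ?_⟩
    ext j
    have h1 := hp1 j
    have h2 := hp2 j
    rw [Pi.smul_apply, smul_eq_mul]
    have hwi : w i ≠ 0 := hi
    field_simp
    apply mul_left_cancel₀ hwi
    linear_combination Q₁ i * h2 - Q₂ i * h1

lemma bitangent_count [IsAlgClosed k] {F : MvPolynomial (Fin 3) k} {d p : ℕ} [CharP k p]
    [Fact p.Prime] (hF : F.IsHomogeneous d) (hp : Prime F) (hd : 2 ≤ d) (hdp : d < p)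
    (T : Finset (Projectivization k (Fin 3 → k))) (hT : ∀ L ∈ T, IsBitangent F L) :
    2 * T.card ≤ d ^ 2 * (d - 1) ^ 2 := by
  have hW := nondeg hF hp hd hdp
  obtain ⟨g, G, hG, hGp⟩ := exists_dual_prime hF hp hd
  have hg := dual_degree hF hp hd hW hG hGp
  obtain ⟨i, hi⟩ := exists_partial (p := p) hGp
  have hg0 : 0 < g := by
    rcases Nat.eq_zero_or_pos g with h | h
    · exfalso
      subst h
      have := totalDegree_eq_zero_iff_eq_C.1 (hG.1.totalDegree hGp.ne_zero)
      rw [this, pderiv_C] at hi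
      exact hi rfl
    · exact h
  have hnd : ¬ G ∣ pderiv i G := fun h => hi (dvd_small hG.1 hG.1.pderiv (by omega) h)
  have key := points_bound hG.1 (hG.1.pderiv (i := i)) hGp hnd (fun L : T => L.1.rep)
    (fun L => L.1.rep_nonzero) ?_ (fun L => (bitangent_sing hF hp hW hG (hT L.1 L.2)).1)
    (fun L j => (bitangent_sing hF hp hW hG (hT L.1 L.2)).2 j)
    (fun L => (bitangent_sing hF hp hW hG (hT L.1 L.2)).2 i)
  · rw [Fintype.card_coe] at key
    calc 2 * T.card ≤ g * (g - 1) := key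
      _ ≤ (d * (d - 1)) * (d * (d - 1)) := Nat.mul_le_mul hg (by omega)
      _ = d ^ 2 * (d - 1) ^ 2 := by ring
  · intro L M hLM
    rw [LinearIndependent.pair_iff' L.1.rep_nonzero]
    intro c hc
    apply hLM
    apply Subtype.ext
    rw [← Projectivization.mk_rep L.1, ← Projectivization.mk_rep M.1]
    symm
    rw [Projectivization.mk_eq_mk_iff']
    exact ⟨c, hc⟩

end Bidual

end BT

theorem bitangents_finite_and_bounded
    (K : Type*) [Field K] [Fintype K] (d : ℕ) (hd : 2 ≤ d)
    (F : MvPolynomial (Fin 3) K) (hF : F.IsHomogeneous d)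
    (hirr : Irreducible (MvPolynomial.map (algebraMap K (AlgebraicClosure K)) F))
    (hpd : d < ringChar K) :
    {L : Projectivization (AlgebraicClosure K) (Fin 3 → AlgebraicClosure K) |
        IsBitangent (MvPolynomial.map (algebraMap K (AlgebraicClosure K)) F) L}.Finite ∧
    2 * {L : Projectivization (AlgebraicClosure K) (Fin 3 → AlgebraicClosure K) |
        IsBitangent (MvPolynomial.map (algebraMap K (AlgebraicClosure K)) F) L}.ncard
      ≤ d ^ 2 * (d - 1) ^ 2 := by
  have hc : CharP (AlgebraicClosure K) (ringChar K) :=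
    charP_of_injective_algebraMap (algebraMap K (AlgebraicClosure K)).injective (ringChar K)
  have hprime : Fact (ringChar K).Prime := ⟨CharP.char_is_prime K (ringChar K)⟩
  have hcount := BT.bitangent_count (hF.map (algebraMap K (AlgebraicClosure K))) hirr.prime hd hpd
  have hfin : {L : Projectivization (AlgebraicClosure K) (Fin 3 → AlgebraicClosure K) |
      IsBitangent (MvPolynomial.map (algebraMap K (AlgebraicClosure K)) F) L}.Finite := by
    by_contra hinf
    obtain ⟨T, hT, hTc⟩ := Set.Infinite.exists_subset_card_eq hinf (d ^ 2 * (d - 1) ^ 2 + 1)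
    have := hcount T fun L hL => hT hL
    omega
  refine ⟨hfin, ?_⟩
  rw [Set.ncard_eq_toFinset_card _ hfin]
  exact hcount _ fun L hL => by simpa using hL
end
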